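/- arXiv:2410.19186 — 2 statements merged into one kernel-verified Lean document; each statement's English description precedes it below -/
import Mathlib

section
/- The integral from 0 to e^{−2π/√10} of E(q)^8 E(q^{10})^3 / E(q^2)^7 dq equals 1 − 2·√((10 − 4√5)/5). -/
open Real

/-- Euler's product `E(q) = ∏_{j=1}^∞ (1 - q^j)`. -/
noncomputable def eulerE (q : ℝ) : ℝ := ∏' j : ℕ, (1 - q ^ (j + 1))

/-!
Let `R` be the Rogers–Ramanujan continued fraction, `k = R(q) R(q²)²`, and let
`u = η(2τ) η(5τ)⁵ / (η(τ) η(10τ)⁵)`, a Hauptmodul for `Γ₀(10)`.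

Splitting a double theta series over the Gaussian integers into residue classes modulo `2 + i`,
permuted by multiplication by `i`, shows that `u - 4` and `u + 1` are again eta quotients; splitting
modulo `1 + i` gives `1/k - k = u`. The splitting modulo `2 + i` of a series weighted by a harmonic
polynomial evaluates a Wronskian of theta functions, which is the logarithmic derivative of `R`; so
`k` has logarithmic derivative `E(q) E(q²)² E(q⁵)³ / E(q¹⁰)²` with respect to `log q`. Hence the
integrand is the derivative of `1 - (1 + k²) / (1 + k - k²)`, and the integral up to `q` is
`1 - √(u² + 4) / (u + 1)`.

At `τ = i/√10`, the fixed point of the Fricke involution, the transformation law of `η` turns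
`(u - 4)(u + 1) η(5τ)² η(10τ)² = u η(τ)² η(2τ)²` into `(u - 4)(u + 1) = 5u`, so `u = 4 + 2√5`.
-/

open Filter Topology

/-- The infinite `q`-Pochhammer symbol `(a; q)_∞ = ∏_{j ≥ 0} (1 - a q^j)`, meant for `|q| < 1`. -/
noncomputable def qPoch (a q : ℝ) : ℝ := ∏' j : ℕ, (1 - a * q ^ j)

lemma eulerE_eq_qPoch (q : ℝ) : eulerE q = qPoch q q := by
  simp only [eulerE, qPoch, pow_succ']

section qPoch

variable {a q : ℝ}

lemma abs_pow_lt_one (hq : |q| < 1) {n : ℕ} (hn : n ≠ 0) : |q ^ n| < 1 := by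
  rw [abs_pow]; exact pow_lt_one₀ (abs_nonneg q) hq hn

lemma multipliable_qPoch (a : ℝ) (hq : |q| < 1) : Multipliable fun j : ℕ ↦ 1 - a * q ^ j := by
  simpa only [sub_eq_add_neg] using multipliable_one_add_of_summable
    ((summable_geometric_of_abs_lt_one hq).mul_left a).neg.norm

lemma tendsto_prod_range_qPoch (a : ℝ) (hq : |q| < 1) :
    Tendsto (fun n ↦ ∏ j ∈ Finset.range n, (1 - a * q ^ j)) atTop (𝓝 (qPoch a q)) :=
  (multipliable_qPoch a hq).hasProd.tendsto_prod_nat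

lemma qPoch_eq_one_sub_mul (a : ℝ) (hq : |q| < 1) : qPoch a q = (1 - a) * qPoch (a * q) q := by
  refine tendsto_nhds_unique ((tendsto_add_atTop_iff_nat 1).2 (tendsto_prod_range_qPoch a hq)) ?_
  simpa only [Finset.prod_range_succ', pow_zero, mul_one, mul_comm _ (1 - a), pow_succ', mul_assoc]
    using (tendsto_prod_range_qPoch (a * q) hq).const_mul (1 - a)

lemma qPoch_eq_prod_range (a : ℝ) (hq : |q| < 1) {n : ℕ} (hn : n ≠ 0) :
    qPoch a q = ∏ i ∈ Finset.range n, qPoch (a * q ^ i) (q ^ n) := by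
  refine tendsto_nhds_unique ((tendsto_prod_range_qPoch a hq).comp
    (tendsto_id.const_mul_atTop' (Nat.pos_of_ne_zero hn))) ?_
  refine (tendsto_finsetProd (Finset.range n) fun i _ ↦
    tendsto_prod_range_qPoch (a * q ^ i) (abs_pow_lt_one hq hn)).congr fun N ↦ ?_
  induction N with
  | zero => simp
  | succ N ih =>
    simp only [Function.comp, id] at ih ⊢
    rw [mul_add_one, Finset.prod_range_add, ← ih, ← Finset.prod_mul_distrib]
    refine Finset.prod_congr rfl fun i _ ↦ ?_
    rw [Finset.prod_range_succ, pow_add, pow_mul]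
    ring

lemma qPoch_mul_qPoch_neg (a : ℝ) (hq : |q| < 1) :
    qPoch a q * qPoch (-a) q = qPoch (a ^ 2) (q ^ 2) := by
  rw [qPoch, qPoch, ← (multipliable_qPoch a hq).tprod_mul (multipliable_qPoch (-a) hq), qPoch]
  congr! 2 with j
  ring

lemma qPoch_pos (ha : a < 1) (hq₀ : 0 ≤ q) (hq₁ : q < 1) : 0 < qPoch a q := by
  have hfactor (j : ℕ) : 0 < 1 - a * q ^ j := by
    have hle : q ^ j ≤ 1 := pow_le_one₀ hq₀ hq₁.le
    have hpos : 0 ≤ q ^ j := pow_nonneg hq₀ j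
    rcases hpos.eq_or_lt with h | h
    · simp [← h]
    · nlinarith
  have hq : |q| < 1 := by rwa [abs_of_nonneg hq₀]
  refine lt_of_le_of_ne (ge_of_tendsto' (tendsto_prod_range_qPoch a hq)
    fun n ↦ Finset.prod_nonneg fun j _ ↦ (hfactor j).le) (Ne.symm ?_)
  simpa only [qPoch, sub_eq_add_neg] using tprod_one_add_ne_zero_of_summable
    (f := fun j : ℕ ↦ -(a * q ^ j)) (fun j ↦ by simpa [sub_eq_add_neg] using (hfactor j).ne')
    ((summable_geometric_of_abs_lt_one hq).mul_left a).neg.norm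

lemma tendsto_qPoch {ι : Type*} {l : Filter ι} {f g : ι → ℝ} (hq : |q| < 1)
    (hf : Tendsto f l (𝓝 a)) (hg : Tendsto g l (𝓝 q)) :
    Tendsto (fun x ↦ qPoch (f x) (g x)) l (𝓝 (qPoch a q)) := by
  obtain ⟨r, hqr, hr⟩ := exists_between hq
  have hr₀ : 0 ≤ r := (abs_nonneg q).trans hqr.le
  have hbound : Summable fun j : ℕ ↦ (|a| + 1) * r ^ j :=
    (summable_geometric_of_lt_one hr₀ hr).mul_left _
  simp only [qPoch, sub_eq_add_neg]
  refine tendsto_tprod_one_add_of_dominated_convergence hbound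
    (fun j ↦ (hf.mul (hg.pow j)).neg) ?_
  filter_upwards [hf.abs.eventually_le_const (lt_add_one |a|), hg.abs.eventually_le_const hqr]
    with x hfx hgx j
  rw [norm_neg, norm_mul, norm_pow, Real.norm_eq_abs, Real.norm_eq_abs]
  gcongr

lemma eulerE_pos (hq₀ : 0 ≤ q) (hq₁ : q < 1) : 0 < eulerE q :=
  eulerE_eq_qPoch q ▸ qPoch_pos hq₁ hq₀ hq₁

end qPoch

/-! ### The Jacobi triple product -/

/-- The finite product `(p; p)_n = ∏_{j=1}^n (1 - p^j)`. -/
noncomputable def eulerPartial (p : ℝ) (n : ℕ) : ℝ := ∏ j ∈ Finset.range n, (1 - p ^ (j + 1))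

/-- The reciprocal `1 / (p; p)_n`, extended by zero to negative `n`. With this convention
Gaussian binomial coefficients vanish outside their range, so that finite sums become sums
over `ℤ`. -/
noncomputable def eulerPartialInv (p : ℝ) (n : ℤ) : ℝ :=
  if n < 0 then 0 else (eulerPartial p n.toNat)⁻¹

/-- The central Gaussian binomial coefficient `(p; p)_{2N} / ((p; p)_{N-k} (p; p)_{N+k})`. -/
noncomputable def gaussCentral (p : ℝ) (N : ℕ) (k : ℤ) : ℝ :=
  eulerPartial p (2 * N) * eulerPartialInv p (N - k) * eulerPartialInv p (N + k)

section FiniteEuler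

variable {p : ℝ}

lemma eulerPartial_succ (p : ℝ) (n : ℕ) :
    eulerPartial p (n + 1) = eulerPartial p n * (1 - p ^ (n + 1)) :=
  Finset.prod_range_succ _ n

lemma eulerPartial_pos (hp₀ : 0 ≤ p) (hp₁ : p < 1) (n : ℕ) : 0 < eulerPartial p n :=
  Finset.prod_pos fun j _ ↦ sub_pos.2 (pow_lt_one₀ hp₀ hp₁ j.succ_ne_zero)

lemma antitone_eulerPartial (hp₀ : 0 ≤ p) (hp₁ : p < 1) : Antitone (eulerPartial p) :=
  antitone_nat_of_succ_le fun n ↦ by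
    rw [eulerPartial_succ]
    exact mul_le_of_le_one_right (eulerPartial_pos hp₀ hp₁ n).le
      (sub_le_self 1 (pow_nonneg hp₀ (n + 1)))

lemma tendsto_eulerPartial (hp₀ : 0 ≤ p) (hp₁ : p < 1) :
    Tendsto (eulerPartial p) atTop (𝓝 (eulerE p)) := by
  rw [eulerE_eq_qPoch]
  refine (tendsto_prod_range_qPoch p (by rwa [abs_of_nonneg hp₀])).congr fun n ↦ ?_
  simp only [eulerPartial, pow_succ']

lemma eulerPartialInv_nonneg (hp₀ : 0 ≤ p) (hp₁ : p < 1) (n : ℤ) : 0 ≤ eulerPartialInv p n := by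
  unfold eulerPartialInv
  split_ifs
  exacts [le_rfl, (inv_pos.2 (eulerPartial_pos hp₀ hp₁ _)).le]

lemma eulerPartialInv_le (hp₀ : 0 ≤ p) (hp₁ : p < 1) (n : ℤ) :
    eulerPartialInv p n ≤ (eulerE p)⁻¹ := by
  unfold eulerPartialInv
  split_ifs
  · exact (inv_pos.2 (eulerE_pos hp₀ hp₁)).le
  · exact inv_anti₀ (eulerE_pos hp₀ hp₁)
      ((antitone_eulerPartial hp₀ hp₁).le_of_tendsto (tendsto_eulerPartial hp₀ hp₁) _)

lemma eulerPartialInv_sub_one (hp₀ : 0 ≤ p) (hp₁ : p < 1) (n : ℤ) :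
    eulerPartialInv p (n - 1) = (1 - p ^ n) * eulerPartialInv p n := by
  rcases lt_or_ge n 0 with hneg | hnonneg
  · simp [eulerPartialInv, hneg, show n < 1 by omega]
  lift n to ℕ using hnonneg
  rcases n with _ | m
  · simp [eulerPartialInv]
  · have hfactor : 1 - p ^ (m + 1) ≠ 0 := (sub_pos.2 (pow_lt_one₀ hp₀ hp₁ m.succ_ne_zero)).ne'
    have hpos := (eulerPartial_pos hp₀ hp₁ m).ne'
    simp only [eulerPartialInv, Nat.cast_add_one, add_sub_cancel_right, Int.toNat_natCast,
      if_neg (Int.natCast_nonneg m).not_gt, if_neg (by omega : ¬ (m : ℤ) + 1 < 0),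
      Int.toNat_natCast_add_one, eulerPartial_succ, mul_inv]
    rw [show p ^ ((m : ℤ) + 1) = p ^ (m + 1) from mod_cast zpow_natCast p (m + 1)]
    field_simp

lemma tendsto_eulerPartialInv (hp₀ : 0 ≤ p) (hp₁ : p < 1) (c : ℤ) :
    Tendsto (fun N : ℕ ↦ eulerPartialInv p (N + c)) atTop (𝓝 (eulerE p)⁻¹) := by
  have hindex : Tendsto (fun N : ℕ ↦ ((N : ℤ) + c).toNat) atTop atTop :=
    tendsto_atTop.2 fun b ↦ by
      filter_upwards [eventually_ge_atTop (b + c.natAbs)] with N hN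
      omega
  refine (((tendsto_eulerPartial hp₀ hp₁).comp hindex).inv₀ (eulerE_pos hp₀ hp₁).ne').congr' ?_
  filter_upwards [eventually_ge_atTop c.natAbs] with N hN
  rw [eulerPartialInv, if_neg (by omega), Function.comp_apply]

end FiniteEuler

section GaussCentral

variable {p : ℝ}

lemma gaussCentral_zero (p : ℝ) (k : ℤ) : gaussCentral p 0 k = if k = 0 then 1 else 0 := by
  rcases lt_trichotomy k 0 with h | rfl | h
  · simp [gaussCentral, eulerPartialInv, h, h.ne]
  · simp [gaussCentral, eulerPartialInv, eulerPartial]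
  · simp [gaussCentral, eulerPartialInv, h, h.ne']

lemma gaussCentral_succ (hp₀ : 0 < p) (hp₁ : p < 1) (N : ℕ) (k : ℤ) :
    gaussCentral p (N + 1) k = (1 + p ^ (2 * N + 1)) * gaussCentral p N k
      + p ^ (N + 1 - k : ℤ) * gaussCentral p N (k - 1)
      + p ^ (N + 1 + k : ℤ) * gaussCentral p N (k + 1) := by
  have hleft := eulerPartialInv_sub_one hp₀.le hp₁ (N + 1 - k)
  have hleft' := eulerPartialInv_sub_one hp₀.le hp₁ (N - k)
  have hright := eulerPartialInv_sub_one hp₀.le hp₁ (N + 1 + k)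
  have hright' := eulerPartialInv_sub_one hp₀.le hp₁ (N + k)
  rw [show (N + 1 - k - 1 : ℤ) = N - k by ring] at hleft
  rw [show (N + 1 + k - 1 : ℤ) = N + k by ring] at hright
  have hzpow (e : ℤ) : p ^ (N + e) = p ^ N * p ^ e := by rw [zpow_add₀ hp₀.ne', zpow_natCast]
  simp only [gaussCentral, mul_add_one, eulerPartial_succ, Nat.cast_add_one,
    show (N - (k - 1) : ℤ) = N + 1 - k by ring, show (N - (k + 1) : ℤ) = N - k - 1 by ring,
    show (N + (k - 1) : ℤ) = N + k - 1 by ring, show (N + (k + 1) : ℤ) = N + 1 + k by ring,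
    hleft', hright', hleft, hright]
  rw [show (N + 1 - k : ℤ) = N + (1 - k) by ring, show (N - k : ℤ) = N + -k by ring,
    show (N + 1 + k : ℤ) = N + (1 + k) by ring]
  simp only [hzpow, zpow_sub₀ hp₀.ne', zpow_add₀ hp₀.ne', zpow_neg, zpow_one]
  have hk : p ^ k ≠ 0 := zpow_ne_zero _ hp₀.ne'
  field_simp
  ring

lemma gaussCentral_nonneg (hp₀ : 0 ≤ p) (hp₁ : p < 1) (N : ℕ) (k : ℤ) : 0 ≤ gaussCentral p N k :=
  mul_nonneg (mul_nonneg (eulerPartial_pos hp₀ hp₁ _).le (eulerPartialInv_nonneg hp₀ hp₁ _))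
    (eulerPartialInv_nonneg hp₀ hp₁ _)

lemma gaussCentral_le (hp₀ : 0 ≤ p) (hp₁ : p < 1) (N : ℕ) (k : ℤ) :
    gaussCentral p N k ≤ (eulerE p)⁻¹ ^ 2 := by
  have hone : eulerPartial p (2 * N) ≤ 1 := by
    simpa [eulerPartial] using antitone_eulerPartial hp₀ hp₁ (zero_le (a := 2 * N))
  have hE := (inv_pos.2 (eulerE_pos hp₀ hp₁)).le
  calc gaussCentral p N k ≤ 1 * (eulerE p)⁻¹ * (eulerE p)⁻¹ := by
        unfold gaussCentral
        gcongr
        exacts [eulerPartialInv_nonneg hp₀ hp₁ _, eulerPartialInv_nonneg hp₀ hp₁ _,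
          eulerPartialInv_le hp₀ hp₁ _, eulerPartialInv_le hp₀ hp₁ _]
    _ = (eulerE p)⁻¹ ^ 2 := by ring

lemma tendsto_gaussCentral (hp₀ : 0 ≤ p) (hp₁ : p < 1) (k : ℤ) :
    Tendsto (fun N ↦ gaussCentral p N k) atTop (𝓝 (eulerE p)⁻¹) := by
  have hprod := (((tendsto_eulerPartial hp₀ hp₁).comp (tendsto_id.const_mul_atTop' two_pos)).mul
    (tendsto_eulerPartialInv hp₀ hp₁ (-k))).mul (tendsto_eulerPartialInv hp₀ hp₁ k)
  rwa [mul_inv_cancel₀ (eulerE_pos hp₀ hp₁).ne', one_mul] at hprod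

end GaussCentral

lemma exp_zpow_eq_exp_mul (y : ℝ) (n : ℤ) : exp y ^ n = exp (n * y) := by
  rw [← Real.rpow_intCast, ← Real.exp_mul, mul_comm]

lemma summable_pow_mul_exp_neg_quadratic {x : ℝ} (hx : 0 < x) (y : ℝ) (k : ℕ) :
    Summable fun n : ℤ ↦ |(n : ℝ)| ^ k * exp (-(x * n ^ 2 - y * |(n : ℝ)|)) := by
  refine (summable_pow_mul_jacobiTheta₂_term_bound (y / (2 * π)) (T := x / π)
    (by positivity) k).congr fun n ↦ ?_
  push_cast
  congr 2
  field_simp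

section TripleProduct

variable {s z : ℝ}

lemma hasSum_gaussCentral (hs₀ : 0 < s) (hs₁ : s < 1) (hz : z ≠ 0) (N : ℕ) :
    HasSum (fun k : ℤ ↦ z ^ k * s ^ (k ^ 2) * gaussCentral (s ^ 2) N k)
      (∏ j ∈ Finset.range N, (1 + z * s ^ (2 * j + 1)) * (1 + z⁻¹ * s ^ (2 * j + 1))) := by
  induction N with
  | zero =>
    convert! hasSum_ite_eq (0 : ℤ) (1 : ℝ) using 2 with k
    rw [gaussCentral_zero]
    split_ifs with hk <;> simp [hk]
  | succ N ih =>
    have hprev := (Equiv.addRight (-1 : ℤ)).hasSum_iff.2 ih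
    have hnext := (Equiv.addRight (1 : ℤ)).hasSum_iff.2 ih
    convert! ((ih.mul_left (1 + (s ^ 2) ^ (2 * N + 1))).add
      (hprev.mul_left (z * s ^ (2 * N + 1)))).add (hnext.mul_left (z⁻¹ * s ^ (2 * N + 1))) using 1
    · ext k
      have hsk : s ^ k ≠ 0 := zpow_ne_zero _ hs₀.ne'
      have hsq (e : ℤ) : (s ^ 2) ^ e = (s ^ e) ^ 2 := by
        rw [← zpow_natCast, zpow_comm, zpow_natCast]
      simp only [Function.comp_apply, Equiv.coe_addRight, ← sub_eq_add_neg]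
      rw [gaussCentral_succ (by positivity) (pow_lt_one₀ hs₀.le hs₁ two_ne_zero), hsq, hsq,
        show (k - 1) ^ 2 = k ^ 2 - k - k + 1 by ring, show (k + 1) ^ 2 = k ^ 2 + k + k + 1 by ring]
      simp only [zpow_add₀ hs₀.ne', zpow_sub₀ hs₀.ne', zpow_sub₀ hz, zpow_add₀ hz, zpow_one,
        zpow_natCast]
      field_simp
      ring
    · rw [Finset.prod_range_succ]
      field_simp
      ring

lemma summable_abs_zpow_mul_zpow_sq (hs₀ : 0 < s) (hs₁ : s < 1) (hz : z ≠ 0) :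
    Summable fun n : ℤ ↦ |z ^ n * s ^ (n ^ 2)| := by
  refine .of_nonneg_of_le (fun n ↦ abs_nonneg _) (fun n ↦ ?_)
    (summable_pow_mul_exp_neg_quadratic (neg_pos.2 (Real.log_neg hs₀ hs₁)) |Real.log (|z|)| 0)
  have habs : |z ^ n * s ^ (n ^ 2)| = exp (n * Real.log (|z|) + n ^ 2 * Real.log s) := by
    rw [abs_mul, abs_zpow, abs_of_pos (zpow_pos hs₀ _), exp_add,
      ← Real.exp_log (abs_pos.2 hz), ← Real.exp_log hs₀, exp_zpow_eq_exp_mul, exp_zpow_eq_exp_mul]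
    simp only [Real.log_exp, Int.cast_pow]
  rw [habs, pow_zero, one_mul, exp_le_exp]
  linarith [le_abs_self (n * Real.log (|z|)), abs_mul (n : ℝ) (Real.log (|z|))]

theorem jacobi_triple_product (hs₀ : 0 < s) (hs₁ : s < 1) (hz : z ≠ 0) :
    ∑' n : ℤ, z ^ n * s ^ (n ^ 2)
      = qPoch (-(z * s)) (s ^ 2) * qPoch (-(z⁻¹ * s)) (s ^ 2) * eulerE (s ^ 2) := by
  have hp₀ : 0 ≤ s ^ 2 := by positivity
  have hp₁ : s ^ 2 < 1 := pow_lt_one₀ hs₀.le hs₁ two_ne_zero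
  have hp : |s ^ 2| < 1 := by rwa [abs_of_nonneg hp₀]
  have hseries : Tendsto (fun N ↦ ∑' k : ℤ, z ^ k * s ^ (k ^ 2) * gaussCentral (s ^ 2) N k) atTop
      (𝓝 (∑' k : ℤ, z ^ k * s ^ (k ^ 2) * (eulerE (s ^ 2))⁻¹)) := by
    refine tendsto_tsum_of_dominated_convergence
      ((summable_abs_zpow_mul_zpow_sq hs₀ hs₁ hz).mul_right ((eulerE (s ^ 2))⁻¹ ^ 2))
      (fun k ↦ (tendsto_gaussCentral hp₀ hp₁ k).const_mul _) (.of_forall fun N k ↦ ?_)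
    rw [norm_mul, Real.norm_of_nonneg (gaussCentral_nonneg hp₀ hp₁ N k)]
    exact mul_le_mul_of_nonneg_left (gaussCentral_le hp₀ hp₁ N k) (abs_nonneg _)
  have hprod : Tendsto (fun N ↦ ∑' k : ℤ, z ^ k * s ^ (k ^ 2) * gaussCentral (s ^ 2) N k) atTop
      (𝓝 (qPoch (-(z * s)) (s ^ 2) * qPoch (-(z⁻¹ * s)) (s ^ 2))) := by
    refine ((tendsto_prod_range_qPoch _ hp).mul (tendsto_prod_range_qPoch _ hp)).congr fun N ↦ ?_
    rw [(hasSum_gaussCentral hs₀ hs₁ hz N).tsum_eq, ← Finset.prod_mul_distrib]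
    refine Finset.prod_congr rfl fun j _ ↦ ?_
    ring
  rw [← tendsto_nhds_unique hseries hprod, tsum_mul_right,
    inv_mul_cancel_right₀ (eulerE_pos hp₀ hp₁).ne']

end TripleProduct

/-! ### Theta series -/

/-- The general term of `theta`. -/
noncomputable def thetaTerm (k : ℕ) (ε β x : ℝ) (n : ℤ) : ℝ :=
  ε ^ n * (n + β) ^ k * exp (-(x * (n + β) ^ 2))

/-- The theta series `∑ ε^n (n + β)^k exp (-x (n + β)²)` over `n ∈ ℤ`, with sign `ε = ±1`,
characteristic `β` and moment `k`. Completing the square in the exponent is what keeps the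
theta identities below free of fractional powers of `q`. -/
noncomputable def theta (k : ℕ) (ε β x : ℝ) : ℝ := ∑' n : ℤ, thetaTerm k ε β x n

section ThetaAnalysis

variable {ε β x : ℝ}

lemma abs_thetaTerm_le {B x₀ : ℝ} (hε : |ε| = 1) (hβ : |β| ≤ B) (hx₀ : 0 ≤ x₀) (hx : x₀ ≤ x)
    (k : ℕ) (n : ℤ) :
    |thetaTerm k ε β x n|
      ≤ (|(n : ℝ)| + B) ^ k * exp (-(x₀ * n ^ 2 - 2 * x₀ * B * |(n : ℝ)|)) := by
  have hB : 0 ≤ B := (abs_nonneg β).trans hβ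
  have hshift : n ^ 2 - 2 * B * |(n : ℝ)| ≤ (n + β) ^ 2 := by
    have hcross : |(n : ℝ) * β| ≤ |(n : ℝ)| * B := by rw [abs_mul]; gcongr
    nlinarith [neg_abs_le ((n : ℝ) * β), sq_nonneg β]
  rw [thetaTerm, abs_mul, abs_mul, abs_zpow, hε, one_zpow, one_mul, abs_pow, abs_exp]
  gcongr
  · exact (abs_add_le _ _).trans (by gcongr)
  · nlinarith [mul_le_mul_of_nonneg_left hshift hx₀,
      mul_le_mul_of_nonneg_right hx (sq_nonneg (n + β))]

lemma summable_thetaTerm_bound {x₀ : ℝ} (hx₀ : 0 < x₀) (B : ℝ) (k : ℕ) :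
    Summable fun n : ℤ ↦
      (|(n : ℝ)| + B) ^ k * exp (-(x₀ * n ^ 2 - 2 * x₀ * B * |(n : ℝ)|)) := by
  simp only [add_pow, Finset.sum_mul]
  refine summable_sum fun i _ ↦ ?_
  refine ((summable_pow_mul_exp_neg_quadratic hx₀ (2 * x₀ * B) i).mul_left
    (B ^ (k - i) * k.choose i)).congr fun n ↦ by ring

lemma summable_abs_thetaTerm (hε : |ε| = 1) (hx : 0 < x) (k : ℕ) (β : ℝ) :
    Summable fun n ↦ |thetaTerm k ε β x n| :=
  .of_nonneg_of_le (fun _ ↦ abs_nonneg _) (abs_thetaTerm_le hε le_rfl hx.le le_rfl k)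
    (summable_thetaTerm_bound hx _ k)

lemma summable_thetaTerm (hε : |ε| = 1) (hx : 0 < x) (k : ℕ) (β : ℝ) :
    Summable (thetaTerm k ε β x) :=
  (summable_abs_thetaTerm hε hx k β).of_abs

lemma hasDerivAt_theta (hε : |ε| = 1) (hx : 0 < x) (k : ℕ) (β : ℝ) :
    HasDerivAt (theta k ε β) (-theta (k + 2) ε β x) x := by
  rw [theta, ← tsum_neg]
  refine hasDerivAt_tsum_of_isPreconnected (g := fun n y ↦ thetaTerm k ε β y n)
    (g' := fun n y ↦ -thetaTerm (k + 2) ε β y n)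
    (summable_thetaTerm_bound (half_pos hx) |β| (k + 2)) isOpen_Ioi isPreconnected_Ioi
    (fun n y _ ↦ ?_) (fun n y hy ↦ ?_) (half_lt_self hx) (summable_thetaTerm hε hx k β)
    (half_lt_self hx)
  · have hexp : HasDerivAt (fun y ↦ exp (-(y * (n + β) ^ 2)))
        (exp (-(y * (n + β) ^ 2)) * -(1 * (n + β) ^ 2)) y :=
      (((hasDerivAt_id y).mul_const _).neg).exp
    refine (hexp.const_mul (ε ^ n * (n + β) ^ k)).congr_deriv ?_
    simp only [thetaTerm]
    ring
  · rw [norm_neg, norm_eq_abs]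
    exact abs_thetaTerm_le hε le_rfl (half_pos hx).le (le_of_lt hy) _ _

lemma hasDerivAt_theta_characteristic (hε : |ε| = 1) (hx : 0 < x) (β : ℝ) :
    HasDerivAt (fun b ↦ theta 0 ε b x) (-(2 * x) * theta 1 ε β x) β := by
  rw [theta, ← tsum_mul_left]
  refine hasDerivAt_tsum_of_isPreconnected (g := fun n b ↦ thetaTerm 0 ε b x n)
    (g' := fun n b ↦ -(2 * x) * thetaTerm 1 ε b x n)
    ((summable_thetaTerm_bound hx (|β| + 1) 1).mul_left (2 * x))
    (t := Metric.ball β 1) Metric.isOpen_ball (convex_ball β 1).isPreconnected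
    (fun n b _ ↦ ?_) (fun n b hb ↦ ?_) (Metric.mem_ball_self one_pos)
    (summable_thetaTerm hε hx 0 β) (Metric.mem_ball_self one_pos)
  · have hexp : HasDerivAt (fun b ↦ exp (-(x * (n + b) ^ 2)))
        (exp (-(x * (n + b) ^ 2)) * -(x * (2 * (n + b) ^ 1 * 1))) b :=
      (((((hasDerivAt_id b).const_add (n : ℝ)).pow 2).const_mul x).neg).exp
    simp only [thetaTerm, pow_zero, mul_one, pow_one] at hexp ⊢
    refine (hexp.const_mul (ε ^ n)).congr_deriv ?_
    ring
  · have hb' : |b| ≤ |β| + 1 := by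
      have := abs_sub_abs_le_abs_sub b β
      rw [Metric.mem_ball, Real.dist_eq] at hb
      linarith
    rw [norm_mul, norm_neg, norm_of_nonneg (by positivity), norm_eq_abs]
    gcongr
    exact abs_thetaTerm_le hε hb' hx.le le_rfl 1 n

lemma inv_eq_self_of_abs_eq_one (hε : |ε| = 1) : ε⁻¹ = ε := by
  rcases eq_or_eq_neg_of_abs_eq hε with rfl | rfl <;> norm_num

lemma theta_neg (hε : |ε| = 1) (k : ℕ) (β x : ℝ) : theta k ε (-β) x = (-1) ^ k * theta k ε β x := by
  rw [theta, theta, ← (Equiv.neg ℤ).tsum_eq, ← tsum_mul_left]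
  congr! 2 with n
  simp only [thetaTerm, Equiv.neg_apply, zpow_neg, ← inv_zpow, inv_eq_self_of_abs_eq_one hε,
    Int.cast_neg, ← neg_add, neg_sq]
  rw [neg_pow ((n : ℝ) + β) k]
  ring

lemma theta_add_one (hε : |ε| = 1) (k : ℕ) (β x : ℝ) : theta k ε (β + 1) x = ε * theta k ε β x := by
  have hε₀ : ε ≠ 0 := by rintro rfl; simp at hε
  rw [theta, theta, ← (Equiv.addRight (1 : ℤ)).tsum_eq (thetaTerm k ε β x), ← tsum_mul_left]
  congr! 2 with n
  have hsq : ε * ε = 1 := by nth_rw 1 [← inv_eq_self_of_abs_eq_one hε]; exact inv_mul_cancel₀ hε₀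
  simp only [thetaTerm, Equiv.coe_addRight, zpow_add₀ hε₀, zpow_one, Int.cast_add, Int.cast_one]
  rw [add_right_comm (n : ℝ) 1 β, ← add_assoc (n : ℝ) β 1]
  linear_combination -(ε ^ n * (n + β + 1) ^ k * exp (-(x * (n + β + 1) ^ 2))) * hsq

end ThetaAnalysis

section ThetaProduct

variable {ε x : ℝ}

lemma theta_eq_mul_qPoch (hε : |ε| = 1) (hx : 0 < x) (β : ℝ) :
    theta 0 ε β x = exp (-(x * β ^ 2)) * (qPoch (-(ε * exp (-(x * (1 + 2 * β))))) (exp (-(2 * x)))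
      * qPoch (-(ε * exp (-(x * (1 - 2 * β))))) (exp (-(2 * x))) * eulerE (exp (-(2 * x)))) := by
  have hε₀ : ε ≠ 0 := by rintro rfl; simp at hε
  have hsq : exp (-x) ^ 2 = exp (-(2 * x)) := by rw [← exp_nat_mul]; push_cast; ring_nf
  have htriple := jacobi_triple_product (s := exp (-x)) (z := ε * exp (-(2 * x * β))) (exp_pos _)
    (exp_lt_one_iff.2 (by linarith)) (mul_ne_zero hε₀ (exp_ne_zero _))
  have hplus : ε * exp (-(2 * x * β)) * exp (-x) = ε * exp (-(x * (1 + 2 * β))) := by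
    rw [mul_assoc, ← exp_add]; ring_nf
  have hminus : (ε * exp (-(2 * x * β)))⁻¹ * exp (-x) = ε * exp (-(x * (1 - 2 * β))) := by
    rw [mul_inv, inv_eq_self_of_abs_eq_one hε, ← exp_neg, mul_assoc, ← exp_add]; ring_nf
  rw [hplus, hminus, hsq] at htriple
  rw [← htriple, theta, ← tsum_mul_left]
  congr! 2 with n
  rw [thetaTerm, pow_zero, mul_one, mul_zpow, exp_zpow_eq_exp_mul, exp_zpow_eq_exp_mul, mul_assoc,
    ← exp_add, mul_left_comm, ← exp_add]
  push_cast
  ring_nf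

lemma theta_eq_mul_qPoch_pow {t β : ℝ} (hε : |ε| = 1) (hx : 0 < x) {a b m : ℕ}
    (hm : a + b = m) (hmx : m * t = 2 * x) (hβ : 2 * m * β = a - b) :
    theta 0 ε β x = exp (-(x * β ^ 2)) * (qPoch (-(ε * exp (-t) ^ a)) (exp (-t) ^ m)
      * qPoch (-(ε * exp (-t) ^ b)) (exp (-t) ^ m) * eulerE (exp (-t) ^ m)) := by
  have hm' : (a + b : ℝ) = m := mod_cast hm
  have hbase : exp (-t) ^ m = exp (-(2 * x)) := by rw [← exp_nat_mul, mul_neg, hmx]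
  have hpow (c : ℕ) (y : ℝ) (hy : c * t = y) : exp (-t) ^ c = exp (-y) := by
    rw [← exp_nat_mul, mul_neg, hy]
  rw [theta_eq_mul_qPoch hε hx, hbase, hpow a (x * (1 + 2 * β)), hpow b (x * (1 - 2 * β))]
  · linear_combination t / 2 * hm' + t / 2 * hβ + (1 - 2 * β) / 2 * hmx
  · linear_combination t / 2 * hm' - t / 2 * hβ + (1 + 2 * β) / 2 * hmx

lemma hasDerivAt_mul_of_eq_zero {f g : ℝ → ℝ} {f' a : ℝ} (hf : HasDerivAt f f' a) (hfa : f a = 0)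
    (hg : ContinuousAt g a) : HasDerivAt (fun y ↦ f y * g y) (f' * g a) a := by
  rw [hasDerivAt_iff_tendsto_slope] at hf ⊢
  refine (hf.mul (hg.tendsto.mono_left nhdsWithin_le_nhds)).congr fun y ↦ ?_
  simp only [slope_def_field, hfa, zero_mul, sub_zero]
  ring

-- The product formula at `β = 1/2` has exactly one vanishing factor, so its `β`-derivative there
-- is the product of the remaining ones.
theorem theta_one_neg_one_half (hx : 0 < x) :
    theta 1 (-1) (1 / 2) x = exp (-(x / 4)) * eulerE (exp (-(2 * x))) ^ 3 := by
  have hε : |(-1 : ℝ)| = 1 := by norm_num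
  set p := exp (-(2 * x)) with hp
  have hp₁ : |p| < 1 := by rw [abs_exp]; exact exp_lt_one_iff.2 (by linarith)
  set cofactor : ℝ → ℝ := fun β ↦ exp (-(x * β ^ 2)) * (qPoch (exp (-(x * (1 + 2 * β)))) p
    * qPoch (exp (-(x * (1 - 2 * β))) * p) p * eulerE p)
  have hfactor (β : ℝ) : theta 0 (-1) β x = (1 - exp (-(x * (1 - 2 * β)))) * cofactor β := by
    simp only [cofactor, theta_eq_mul_qPoch hε hx, neg_one_mul, neg_neg, ← hp]
    rw [qPoch_eq_one_sub_mul (exp (-(x * (1 - 2 * β)))) hp₁]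
    ring
  have hcont : ContinuousAt cofactor (1 / 2) := by
    have hleft := tendsto_qPoch (l := 𝓝 (1 / 2)) (f := fun β ↦ exp (-(x * (1 + 2 * β))))
      hp₁ (Continuous.tendsto (by fun_prop) _) tendsto_const_nhds
    have hright := tendsto_qPoch (l := 𝓝 (1 / 2)) (f := fun β ↦ exp (-(x * (1 - 2 * β))) * p)
      hp₁ (Continuous.tendsto (by fun_prop) _) tendsto_const_nhds
    exact ((Continuous.tendsto (by fun_prop) _).mul ((hleft.mul hright).mul_const _))
  have hvanish : HasDerivAt (fun β ↦ 1 - exp (-(x * (1 - 2 * β)))) (-(2 * x)) (1 / 2) := by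
    refine (((((hasDerivAt_id (1 / 2 : ℝ)).const_mul 2).const_sub 1).const_mul x).neg.exp.const_sub
      1).congr_deriv ?_
    norm_num
    ring
  have hderiv := hasDerivAt_mul_of_eq_zero hvanish (by norm_num) hcont
  have hvalue : cofactor (1 / 2) = exp (-(x / 4)) * eulerE p ^ 3 := by
    norm_num [cofactor, eulerE_eq_qPoch, hp]
    ring_nf
  have huniq := (hasDerivAt_theta_characteristic hε hx (1 / 2)).unique
    (hderiv.congr_of_eventuallyEq (.of_forall hfactor))
  rw [hvalue] at huniq
  exact mul_left_cancel₀ (by linarith : -(2 * x) ≠ 0) huniq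

end ThetaProduct

/-! ### Dissection over the Gaussian integers -/

/-- Gaussian integers sorted by residue class modulo `2 + i`: the pair `(j, w)` stands for
`j + (2 + i) w`. -/
def residueEquiv : Fin 5 × (ℤ × ℤ) ≃ ℤ × ℤ where
  toFun p := ((p.1 : ℕ) + 2 * p.2.1 - p.2.2, p.2.1 + 2 * p.2.2)
  invFun z := (⟨((z.1 - 2 * z.2) % 5).toNat, by omega⟩,
    ((2 * (z.1 - (z.1 - 2 * z.2) % 5) + z.2) / 5, (2 * z.2 - (z.1 - (z.1 - 2 * z.2) % 5)) / 5))
  left_inv := by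
    rintro ⟨⟨j, hj⟩, a, b⟩
    simp only [Prod.mk.injEq, Fin.mk.injEq]
    omega
  right_inv := by
    rintro ⟨m, n⟩
    simp only [Prod.mk.injEq]
    omega

/-- Pairs of integers sorted by the parity of their sum: `w` stands for `(w₁ + w₂, w₁ - w₂)` on the
left summand and for `(w₁ + w₂ + 1, w₁ - w₂)` on the right one. -/
def parityEquiv : (ℤ × ℤ) ⊕ (ℤ × ℤ) ≃ ℤ × ℤ where
  toFun := Sum.elim (fun w ↦ (w.1 + w.2, w.1 - w.2)) fun w ↦ (w.1 + w.2 + 1, w.1 - w.2)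
  invFun z := if (z.1 + z.2) % 2 = 0 then .inl ((z.1 + z.2) / 2, (z.1 - z.2) / 2)
    else .inr ((z.1 + z.2 - 1) / 2, (z.1 - z.2 - 1) / 2)
  left_inv := by
    rintro (⟨a, b⟩ | ⟨a, b⟩)
    · dsimp only [Sum.elim_inl]
      rw [if_pos (by omega)]
      simp only [Sum.inl.injEq, Prod.mk.injEq]
      omega
    · dsimp only [Sum.elim_inr]
      rw [if_neg (by omega)]
      simp only [Sum.inr.injEq, Prod.mk.injEq]
      omega
  right_inv := by
    rintro ⟨m, n⟩
    dsimp only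
    split_ifs <;> simp only [Sum.elim_inl, Sum.elim_inr, Prod.mk.injEq] <;> omega

/-- The sum of `F` over the residue class of `r + s i` modulo `2 + i` in the Gaussian integers. -/
noncomputable def classSum (F : ℤ × ℤ → ℝ) (r s : ℤ) : ℝ :=
  ∑' w : ℤ × ℤ, F (r + 2 * w.1 - w.2, s + w.1 + 2 * w.2)

section Dissection

variable {F : ℤ × ℤ → ℝ}

lemma tsum_eq_sum_classSum (hF : Summable F) :
    ∑' z, F z = classSum F 0 0 + classSum F 1 0 + classSum F 2 0 + classSum F 3 0
      + classSum F 4 0 := by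
  have hsum : Summable fun p ↦ F (residueEquiv p) := residueEquiv.summable_iff.2 hF
  rw [← residueEquiv.tsum_eq F, hsum.tsum_prod, tsum_fintype, Fin.sum_univ_five]
  simp [classSum, residueEquiv]

lemma tsum_eq_tsum_even_add_tsum_odd (hF : Summable F) :
    ∑' z, F z = ∑' w : ℤ × ℤ, F (w.1 + w.2, w.1 - w.2)
      + ∑' w : ℤ × ℤ, F (w.1 + w.2 + 1, w.1 - w.2) := by
  have hsum : Summable (F ∘ parityEquiv) := parityEquiv.summable_iff.2 hF
  rw [← parityEquiv.tsum_eq F]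
  exact Summable.tsum_sum (f := F ∘ parityEquiv) (hsum.comp_injective Sum.inl_injective)
    (hsum.comp_injective Sum.inr_injective)

lemma classSum_eq_of_modEq (F : ℤ × ℤ → ℝ) {r s r' s' : ℤ} (i j : ℤ) (hr : r' = r + 2 * i - j)
    (hs : s' = s + i + 2 * j) : classSum F r' s' = classSum F r s := by
  rw [classSum, classSum, ← (Equiv.addRight (i, j)).tsum_eq
    fun w ↦ F (r + 2 * w.1 - w.2, s + w.1 + 2 * w.2)]
  congr! 3 with w
  simp only [Equiv.coe_addRight, Prod.fst_add, Prod.snd_add, Prod.mk.injEq, hr, hs]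
  constructor <;> ring

lemma classSum_rotate {e : ℤ} (hF : ∀ m n, F (-n - e, m) = F (m, n)) (r s : ℤ) :
    classSum F (-s - e) r = classSum F r s := by
  let quarterTurn : ℤ × ℤ ≃ ℤ × ℤ :=
    ⟨fun w ↦ (-w.2, w.1), fun w ↦ (w.2, -w.1), fun w ↦ by simp, fun w ↦ by simp⟩
  rw [classSum, classSum, ← quarterTurn.tsum_eq]
  congr! 2 with w
  rw [← hF (r + 2 * w.1 - w.2)]
  congr 2 <;> simp only [quarterTurn, Equiv.coe_fn_mk] <;> ring

lemma tsum_eq_classSum_of_rotate_zero (hF : Summable F) (hrot : ∀ m n, F (-n, m) = F (m, n)) :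
    ∑' z, F z = classSum F 0 0 + 4 * classSum F 1 0 := by
  have hturn := classSum_rotate (e := 0) (by simpa using hrot)
  have hI : classSum F 0 1 = classSum F 1 0 := hturn 1 0
  have hnegOne : classSum F (-1) 0 = classSum F 0 1 := hturn 0 1
  have hnegI : classSum F 0 (-1) = classSum F (-1) 0 := hturn (-1) 0
  rw [tsum_eq_sum_classSum hF, classSum_eq_of_modEq F (r := 0) (s := -1) (r' := 2) (s' := 0) 1 0,
    classSum_eq_of_modEq F (r := 0) (s := 1) (r' := 3) (s' := 0) 1 (-1),
    classSum_eq_of_modEq F (r := -1) (s := 0) (r' := 4) (s' := 0) 2 (-1)]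
  · linarith
  all_goals norm_num

lemma tsum_eq_classSum_of_rotate_one (hF : Summable F) (hrot : ∀ m n, F (-n - 1, m) = F (m, n)) :
    ∑' z, F z = classSum F 0 1 + 4 * classSum F (-1) (-1) := by
  have hturn := classSum_rotate hrot
  have hnegI : classSum F 0 (-1) = classSum F (-1) (-1) := by
    simpa using hturn (-1) (-1)
  have hzero : classSum F 0 0 = classSum F 0 (-1) := by simpa using hturn 0 (-1)
  have hnegOne : classSum F (-1) 0 = classSum F 0 0 := hturn 0 0
  rw [tsum_eq_sum_classSum hF, classSum_eq_of_modEq F (r := -1) (s := -1) (r' := 1) (s' := 0) 1 0,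
    classSum_eq_of_modEq F (r := 0) (s := -1) (r' := 2) (s' := 0) 1 0,
    classSum_eq_of_modEq F (r := 0) (s := 1) (r' := 3) (s' := 0) 1 (-1),
    classSum_eq_of_modEq F (r := -1) (s := 0) (r' := 4) (s' := 0) 2 (-1)]
  · linarith
  all_goals norm_num

end Dissection

section ThetaIdentities

variable {ε x : ℝ}

lemma thetaTerm_eq_pow_mul (k : ℕ) (ε β x : ℝ) (n : ℤ) :
    thetaTerm k ε β x n = (n + β) ^ k * thetaTerm 0 ε β x n := by
  simp only [thetaTerm]
  ring

lemma theta_mul_theta (hε : |ε| = 1) (hx : 0 < x) (k l : ℕ) (a b : ℝ) :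
    theta k ε a x * theta l ε b x
      = ∑' z : ℤ × ℤ, thetaTerm k ε a x z.1 * thetaTerm l ε b x z.2 :=
  tsum_mul_tsum_of_summable_norm (summable_abs_thetaTerm hε hx k a)
    (summable_abs_thetaTerm hε hx l b)

lemma summable_thetaTerm_mul_thetaTerm (hε : |ε| = 1) (hx : 0 < x) (k l : ℕ) (a b : ℝ) :
    Summable fun z : ℤ × ℤ ↦ thetaTerm k ε a x z.1 * thetaTerm l ε b x z.2 :=
  summable_mul_of_summable_norm (summable_abs_thetaTerm hε hx k a)
    (summable_abs_thetaTerm hε hx l b)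

lemma zpow_add_two_mul_of_abs_eq_one (hε : |ε| = 1) (m k : ℤ) : ε ^ (m + 2 * k) = ε ^ m := by
  rcases eq_or_eq_neg_of_abs_eq hε with rfl | rfl
  · simp
  · rw [zpow_add₀ (by norm_num), zpow_mul]
    norm_num

lemma thetaTerm_zero_mul_thetaTerm_zero (ε a b x : ℝ) (hε : ε ≠ 0) (m n : ℤ) :
    thetaTerm 0 ε a x m * thetaTerm 0 ε b x n
      = ε ^ (m + n) * exp (-(x * ((m + a) ^ 2 + (n + b) ^ 2))) := by
  simp only [thetaTerm, pow_zero, mul_one]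
  rw [zpow_add₀ hε, mul_add, neg_add, exp_add]
  ring

-- Multiplication by `2 + i` scales the Gaussian norm by `5`.
lemma thetaTerm_mul_thetaTerm_class (hε : |ε| = 1) (a b x : ℝ) (r s : ℤ) (w : ℤ × ℤ) :
    thetaTerm 0 ε a x (r + 2 * w.1 - w.2) * thetaTerm 0 ε b x (s + w.1 + 2 * w.2)
      = ε ^ (r + s) * (thetaTerm 0 ε ((2 * (r + a) + (s + b)) / 5) (5 * x) w.1
        * thetaTerm 0 ε ((2 * (s + b) - (r + a)) / 5) (5 * x) w.2) := by
  have hε₀ : ε ≠ 0 := by rintro rfl; simp at hε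
  rw [thetaTerm_zero_mul_thetaTerm_zero _ _ _ _ hε₀, thetaTerm_zero_mul_thetaTerm_zero _ _ _ _ hε₀,
    ← mul_assoc, ← zpow_add₀ hε₀, ← zpow_add_two_mul_of_abs_eq_one hε (r + s + (w.1 + w.2)) w.1]
  push_cast
  ring_nf

lemma classSum_thetaTerm (hε : |ε| = 1) (hx : 0 < x) {a b c d : ℝ} (r s : ℤ)
    (hc : c = (2 * (r + a) + (s + b)) / 5) (hd : d = (2 * (s + b) - (r + a)) / 5) :
    classSum (fun z ↦ thetaTerm 0 ε a x z.1 * thetaTerm 0 ε b x z.2) r s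
      = ε ^ (r + s) * (theta 0 ε c (5 * x) * theta 0 ε d (5 * x)) := by
  rw [hc, hd, theta_mul_theta hε (by positivity), ← tsum_mul_left]
  exact tsum_congr (thetaTerm_mul_thetaTerm_class hε a b x r s)

theorem theta_zero_sq (hx : 0 < x) :
    theta 0 (-1) 0 x ^ 2 = theta 0 (-1) 0 (5 * x) ^ 2
      - 4 * (theta 0 (-1) (2 / 5) (5 * x) * theta 0 (-1) (1 / 5) (5 * x)) := by
  have hε : |(-1 : ℝ)| = 1 := by norm_num
  have hrot (m n : ℤ) : thetaTerm 0 (-1) 0 x (-n) * thetaTerm 0 (-1) 0 x m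
      = thetaTerm 0 (-1) 0 x m * thetaTerm 0 (-1) 0 x n := by
    simp only [thetaTerm, zpow_neg, ← inv_zpow]
    norm_num
    ring
  rw [sq, theta_mul_theta hε hx, tsum_eq_classSum_of_rotate_zero
    (summable_thetaTerm_mul_thetaTerm hε hx 0 0 0 0) hrot,
    classSum_thetaTerm hε hx 0 0 (c := 0) (d := 0) (by norm_num) (by norm_num),
    classSum_thetaTerm hε hx 1 0 (c := 2 / 5) (d := -(1 / 5)) (by norm_num) (by norm_num),
    theta_neg hε]
  norm_num
  ring

theorem theta_half_sq (hx : 0 < x) :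
    theta 0 1 (1 / 2) x ^ 2 = theta 0 1 (1 / 2) (5 * x) ^ 2
      + 4 * (theta 0 1 (3 / 10) (5 * x) * theta 0 1 (1 / 10) (5 * x)) := by
  have hε : |(1 : ℝ)| = 1 := abs_one
  have hrot (m n : ℤ) : thetaTerm 0 1 (1 / 2) x (-n - 1) * thetaTerm 0 1 (1 / 2) x m
      = thetaTerm 0 1 (1 / 2) x m * thetaTerm 0 1 (1 / 2) x n := by
    simp only [thetaTerm, one_zpow]
    push_cast
    ring_nf
  rw [sq, theta_mul_theta hε hx, tsum_eq_classSum_of_rotate_one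
    (summable_thetaTerm_mul_thetaTerm hε hx 0 0 _ _) hrot,
    classSum_thetaTerm hε hx 0 1 (c := 1 / 2) (d := 1 / 2) (by norm_num) (by norm_num),
    classSum_thetaTerm hε hx (-1) (-1) (c := -(3 / 10)) (d := -(1 / 10)) (by norm_num)
      (by norm_num), theta_neg hε, theta_neg hε]
  norm_num
  ring

/-- The summand at `z = (m + 1/2) + (n + 1/2) i` of the theta series with alternating signs and
weight `Re ((3 - 4i) z²)`. The weight is chosen because it pulls back to `25 Re w²` under
`z = (2 + i) w`. -/
noncomputable def harmonicTerm (x : ℝ) (z : ℤ × ℤ) : ℝ :=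
  (3 * ((z.1 + 1 / 2) ^ 2 - (z.2 + 1 / 2) ^ 2) + 8 * ((z.1 + 1 / 2) * (z.2 + 1 / 2)))
    * (thetaTerm 0 (-1) (1 / 2) x z.1 * thetaTerm 0 (-1) (1 / 2) x z.2)

lemma hasSum_harmonicTerm (hx : 0 < x) :
    HasSum (harmonicTerm x) (8 * theta 1 (-1) (1 / 2) x ^ 2) := by
  have hsum (k l : ℕ) : HasSum
      (fun z : ℤ × ℤ ↦ thetaTerm k (-1) (1 / 2) x z.1 * thetaTerm l (-1) (1 / 2) x z.2)
      (theta k (-1) (1 / 2) x * theta l (-1) (1 / 2) x) := by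
    have hε : |(-1 : ℝ)| = 1 := by norm_num
    rw [theta_mul_theta hε hx]
    exact (summable_thetaTerm_mul_thetaTerm hε hx k l _ _).hasSum
  convert! (((hsum 2 0).sub (hsum 0 2)).mul_left 3).add ((hsum 1 1).mul_left 8) using 1
  · ext z
    simp only [harmonicTerm, thetaTerm_eq_pow_mul 1, thetaTerm_eq_pow_mul 2]
    ring
  · ring

lemma harmonicTerm_rotate (x : ℝ) (m n : ℤ) :
    harmonicTerm x (-n - 1, m) = harmonicTerm x (m, n) := by
  have hsign : (-1 : ℝ) ^ (-n - 1) = -(-1) ^ n := by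
    rw [zpow_sub₀ (by norm_num), zpow_neg, ← inv_zpow, inv_neg_one, zpow_one, div_neg, div_one]
  simp only [harmonicTerm, thetaTerm, hsign]
  push_cast
  ring_nf

lemma classSum_harmonicTerm (hx : 0 < x) (r s : ℤ) {a b : ℝ}
    (ha : a = (2 * (r + 1 / 2) + (s + 1 / 2)) / 5) (hb : b = (2 * (s + 1 / 2) - (r + 1 / 2)) / 5) :
    classSum (harmonicTerm x) r s = 25 * (-1) ^ (r + s) *
      (theta 2 (-1) a (5 * x) * theta 0 (-1) b (5 * x)
        - theta 0 (-1) a (5 * x) * theta 2 (-1) b (5 * x)) := by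
  have hε : |(-1 : ℝ)| = 1 := by norm_num
  have h5x : 0 < 5 * x := by positivity
  have hsum (k l : ℕ) := summable_thetaTerm_mul_thetaTerm hε h5x k l a b
  rw [theta_mul_theta hε h5x, theta_mul_theta hε h5x, ← (hsum 2 0).tsum_sub (hsum 0 2),
    ← tsum_mul_left]
  refine tsum_congr fun w ↦ ?_
  simp only [harmonicTerm, thetaTerm_mul_thetaTerm_class hε, ← ha, ← hb, thetaTerm_eq_pow_mul 2]
  push_cast
  rw [ha, hb]
  ring

theorem two_mul_theta_one_half_sq (hx : 0 < x) :
    2 * theta 1 (-1) (1 / 2) x ^ 2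
      = 25 * (theta 2 (-1) (3 / 10) (5 * x) * theta 0 (-1) (1 / 10) (5 * x)
        - theta 0 (-1) (3 / 10) (5 * x) * theta 2 (-1) (1 / 10) (5 * x)) := by
  have hε : |(-1 : ℝ)| = 1 := by norm_num
  have hdissect := tsum_eq_classSum_of_rotate_one (hasSum_harmonicTerm hx).summable
    (harmonicTerm_rotate x)
  rw [(hasSum_harmonicTerm hx).tsum_eq,
    classSum_harmonicTerm hx 0 1 (a := 1 / 2) (b := 1 / 2) (by norm_num) (by norm_num),
    classSum_harmonicTerm hx (-1) (-1) (a := -(3 / 10)) (b := -(1 / 10)) (by norm_num)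
      (by norm_num)] at hdissect
  norm_num [theta_neg hε] at hdissect
  linarith

theorem theta_mul_theta_eq_parity (hε : |ε| = 1) (hx : 0 < x) (a b : ℝ) :
    theta 0 ε a x * theta 0 ε b x
      = theta 0 1 ((a + b) / 2) (2 * x) * theta 0 1 ((a - b) / 2) (2 * x)
        + ε * (theta 0 1 ((a + b + 1) / 2) (2 * x) * theta 0 1 ((a - b + 1) / 2) (2 * x)) := by
  have hε₀ : ε ≠ 0 := by rintro rfl; simp at hε
  have hone : |(1 : ℝ)| = 1 := abs_one
  have h2x : 0 < 2 * x := by positivity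
  rw [theta_mul_theta hε hx,
    tsum_eq_tsum_even_add_tsum_odd (summable_thetaTerm_mul_thetaTerm hε hx 0 0 a b),
    theta_mul_theta hone h2x, theta_mul_theta hone h2x, ← tsum_mul_left]
  congr 1 <;> refine tsum_congr fun w ↦ ?_
  · have hsign := zpow_add_two_mul_of_abs_eq_one hε 0 w.1
    rw [thetaTerm_zero_mul_thetaTerm_zero _ _ _ _ hε₀,
      thetaTerm_zero_mul_thetaTerm_zero _ _ _ _ one_ne_zero, one_zpow,
      show w.1 + w.2 + (w.1 - w.2) = 0 + 2 * w.1 by ring, hsign, zpow_zero]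
    push_cast
    ring_nf
  · have hsign := zpow_add_two_mul_of_abs_eq_one hε 1 w.1
    rw [thetaTerm_zero_mul_thetaTerm_zero _ _ _ _ hε₀,
      thetaTerm_zero_mul_thetaTerm_zero _ _ _ _ one_ne_zero, one_zpow,
      show w.1 + w.2 + 1 + (w.1 - w.2) = 1 + 2 * w.1 by ring, hsign, zpow_one]
    push_cast
    ring_nf

end ThetaIdentities

/-! ### Theta products of level ten -/

section LevelTen

lemma theta_one_sub (β x : ℝ) : theta 0 1 (1 - β) x = theta 0 1 β x := by
  rw [sub_eq_neg_add, theta_add_one abs_one, theta_neg abs_one, one_mul, pow_zero, one_mul]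

theorem theta_tenths_identity {x : ℝ} (hx : 0 < x) :
    theta 0 (-1) (1 / 10) x ^ 2 * theta 0 (-1) (2 / 10) x ^ 2
        - theta 0 (-1) (3 / 10) x ^ 2 * theta 0 (-1) (4 / 10) x ^ 2
      = theta 0 (-1) 0 x ^ 2 * (theta 0 (-1) (1 / 10) x * theta 0 (-1) (3 / 10) x) := by
  have hparity := theta_mul_theta_eq_parity (ε := -1) (by norm_num) hx
  have h₀ := hparity 0 0
  have h₁ := hparity (1 / 10) (1 / 10)
  have h₂ := hparity (2 / 10) (2 / 10)
  have h₃ := hparity (3 / 10) (3 / 10)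
  have h₄ := hparity (4 / 10) (4 / 10)
  have h₃₁ := hparity (3 / 10) (1 / 10)
  have hreflect (c : ℝ) := theta_one_sub (c / 10) (2 * x)
  have r₁ := hreflect 1
  have r₂ := hreflect 2
  have r₃ := hreflect 3
  have r₄ := hreflect 4
  norm_num only at h₀ h₁ h₂ h₃ h₄ h₃₁ r₁ r₂ r₃ r₄ ⊢
  rw [r₁] at h₄
  rw [r₂] at h₃
  rw [r₃] at h₂ h₃₁
  rw [r₄] at h₁ h₃₁
  rw [sq, sq, sq, sq, sq, h₀, h₁, h₂, h₃, h₄, mul_comm (theta 0 (-1) (1 / 10) x), h₃₁]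
  ring

/-- The theta product `J_{a,m} = (q^a; q^m)_∞ (q^{m-a}; q^m)_∞ (q^m; q^m)_∞`, for `a ≤ m`. -/
noncomputable def thetaProd (a m : ℕ) (q : ℝ) : ℝ :=
  qPoch (q ^ a) (q ^ m) * qPoch (q ^ (m - a)) (q ^ m) * eulerE (q ^ m)

lemma theta_eq_exp_mul_thetaProd {x t β : ℝ} (hx : 0 < x) {a m : ℕ} (ham : a ≤ m)
    (hmx : m * t = 2 * x) (hβ : 2 * m * β = m - 2 * a) :
    theta 0 (-1) β x = exp (-(x * β ^ 2)) * thetaProd a m (exp (-t)) := by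
  rw [theta_eq_mul_qPoch_pow (by norm_num) hx (Nat.sub_add_cancel ham) hmx
    (by rw [hβ, Nat.cast_sub ham]; ring), thetaProd]
  simp only [neg_one_mul, neg_neg]
  ring

lemma exists_exp_neg_eq {q : ℝ} (hq₀ : 0 < q) (hq₁ : q < 1) : ∃ t, 0 < t ∧ exp (-t) = q :=
  ⟨-log q, neg_pos.2 (log_neg hq₀ hq₁), by rw [neg_neg, exp_log hq₀]⟩

variable {q : ℝ}

lemma eulerE_pow_eq_prod_range (hq : |q| < 1) {d n : ℕ} (hd : d ≠ 0) (hn : n ≠ 0) :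
    eulerE (q ^ d) = ∏ i ∈ Finset.range n, qPoch (q ^ (d * (i + 1))) (q ^ (d * n)) := by
  rw [eulerE_eq_qPoch, qPoch_eq_prod_range _ (abs_pow_lt_one hq hd) hn]
  simp only [← pow_mul, ← pow_add, mul_add_one, add_comm]

lemma eulerE_pow_pos (hq₀ : 0 ≤ q) (hq₁ : q < 1) {n : ℕ} (hn : n ≠ 0) : 0 < eulerE (q ^ n) :=
  eulerE_pos (by positivity) (pow_lt_one₀ hq₀ hq₁ hn)

lemma thetaProd_pos (hq₀ : 0 ≤ q) (hq₁ : q < 1) {a m : ℕ} (ha : 0 < a) (ham : a < m) :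
    0 < thetaProd a m q := by
  have hpow {n : ℕ} (hn : 0 < n) : q ^ n < 1 := pow_lt_one₀ hq₀ hq₁ hn.ne'
  have hm := hpow (ha.trans ham)
  exact mul_pos (mul_pos (qPoch_pos (hpow ha) (by positivity) hm)
    (qPoch_pos (hpow (Nat.sub_pos_of_lt ham)) (by positivity) hm)) (eulerE_pos (by positivity) hm)

lemma thetaProd_two_mul (hq : |q| < 1) {a : ℕ} (ha : a ≠ 0) :
    thetaProd a (2 * a) q * eulerE (q ^ (2 * a)) = eulerE (q ^ a) ^ 2 := by
  rw [eulerE_pow_eq_prod_range hq ha two_ne_zero, thetaProd, eulerE_eq_qPoch (q ^ (2 * a))]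
  simp only [Finset.prod_range_succ, Finset.prod_range_zero, mul_comm a 2, two_mul,
    Nat.add_sub_cancel]
  ring_nf

lemma thetaProd_five (hq : |q| < 1) :
    thetaProd 1 5 q * thetaProd 2 5 q = eulerE q * eulerE (q ^ 5) := by
  have h₁ := eulerE_pow_eq_prod_range hq one_ne_zero (n := 5) (by norm_num)
  norm_num [Finset.prod_range_succ] at h₁
  norm_num [thetaProd, h₁, eulerE_eq_qPoch (q ^ 5)]
  ring

lemma thetaProd_one_ten_mul_thetaProd_three_ten (hq : |q| < 1) :
    thetaProd 1 10 q * thetaProd 3 10 q * (eulerE (q ^ 2) * eulerE (q ^ 5))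
      = eulerE q * eulerE (q ^ 10) ^ 3 := by
  have h₁ := eulerE_pow_eq_prod_range hq one_ne_zero (n := 10) (by norm_num)
  have h₂ := eulerE_pow_eq_prod_range hq two_ne_zero (n := 5) (by norm_num)
  have h₅ := eulerE_pow_eq_prod_range hq (d := 5) (by norm_num) two_ne_zero
  norm_num [Finset.prod_range_succ] at h₁ h₂ h₅
  norm_num [thetaProd, h₁, h₂, h₅, eulerE_eq_qPoch (q ^ 10)]
  ring

theorem thetaProd_ten_identity (hq₀ : 0 < q) (hq₁ : q < 1) :
    thetaProd 3 10 q ^ 2 * thetaProd 4 10 q ^ 2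
        - q ^ 2 * (thetaProd 1 10 q ^ 2 * thetaProd 2 10 q ^ 2)
      = thetaProd 5 10 q ^ 2 * (thetaProd 2 10 q * thetaProd 4 10 q) := by
  obtain ⟨t, ht, rfl⟩ := exists_exp_neg_eq hq₀ hq₁
  have hx : 0 < 5 * t := by positivity
  set c := exp (-(t / 20)) with hc
  have hpow (j : ℕ) : exp (-(5 * t * (j / 10) ^ 2)) = c ^ j ^ 2 := by
    rw [hc, ← exp_nat_mul]; push_cast; ring_nf
  have hq : exp (-t) = c ^ 20 := by rw [hc, ← exp_nat_mul]; push_cast; ring_nf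
  have htheta (j : ℕ) (hj : j ≤ 5) :
      theta 0 (-1) (j / 10) (5 * t) = c ^ j ^ 2 * thetaProd (5 - j) 10 (exp (-t)) := by
    rw [theta_eq_exp_mul_thetaProd hx (a := 5 - j) (m := 10) (t := t) (by omega) (by norm_num; ring)
      (by rw [Nat.cast_sub hj]; push_cast; ring), hpow]
  have h₀ := htheta 0 (by norm_num)
  have h₁ := htheta 1 (by norm_num)
  have h₂ := htheta 2 (by norm_num)
  have h₃ := htheta 3 (by norm_num)
  have h₄ := htheta 4 (by norm_num)
  have hid := theta_tenths_identity hx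
  norm_num only at h₀ h₁ h₂ h₃ h₄ hid
  rw [h₀, h₁, h₂, h₃, h₄] at hid
  rw [hq] at hid ⊢
  refine mul_left_cancel₀ (pow_ne_zero 10 (exp_ne_zero (-(t / 20)))) ?_
  linear_combination hid

theorem thetaProd_one_two_sq (hq₀ : 0 < q) (hq₁ : q < 1) :
    thetaProd 1 2 q ^ 2
      = thetaProd 5 10 q ^ 2 - 4 * q * (thetaProd 1 10 q * thetaProd 3 10 q) := by
  obtain ⟨t, ht, rfl⟩ := exists_exp_neg_eq hq₀ hq₁
  have hx : 0 < 5 * t := by positivity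
  have hexp : exp (-t) = exp (-(5 * t * (2 / 5) ^ 2)) * exp (-(5 * t * (1 / 5) ^ 2)) := by
    rw [← exp_add]; ring_nf
  have hsq := theta_zero_sq ht
  rw [theta_eq_exp_mul_thetaProd ht (a := 1) (m := 2) (t := t) (by norm_num) (by norm_num)
      (by norm_num),
    theta_eq_exp_mul_thetaProd hx (a := 5) (m := 10) (t := t) (by norm_num) (by norm_num; ring)
      (by norm_num),
    theta_eq_exp_mul_thetaProd hx (a := 1) (m := 10) (t := t) (by norm_num) (by norm_num; ring)
      (by norm_num),
    theta_eq_exp_mul_thetaProd hx (a := 3) (m := 10) (t := t) (by norm_num) (by norm_num; ring)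
      (by norm_num)] at hsq
  norm_num only [zero_pow, mul_zero, neg_zero, exp_zero, one_mul] at hsq hexp ⊢
  linear_combination hsq + 4 * thetaProd 1 10 (exp (-t)) * thetaProd 3 10 (exp (-t)) * hexp

lemma theta_one_half_mul_eulerE {x : ℝ} (hx : 0 < x) :
    theta 0 1 (1 / 2) x * eulerE (exp (-(2 * x)))
      = 2 * exp (-(x / 4)) * eulerE (exp (-(2 * x)) ^ 2) ^ 2 := by
  have hp : |exp (-(2 * x))| < 1 := by rw [abs_exp]; exact exp_lt_one_iff.2 (by linarith)
  have hdouble := qPoch_mul_qPoch_neg (exp (-(2 * x))) hp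
  have hneg := qPoch_eq_one_sub_mul (-1) hp
  rw [neg_one_mul] at hneg
  rw [theta_eq_mul_qPoch_pow abs_one hx (a := 1) (b := 0) (m := 1) (t := 2 * x) (by norm_num)
    (by norm_num) (by norm_num)]
  simp only [pow_one, pow_zero, one_mul, mul_one]
  rw [hneg, eulerE_eq_qPoch (exp _ ^ 2), ← hdouble, ← eulerE_eq_qPoch]
  ring_nf

lemma theta_one_tenths_mul_eulerE {t : ℝ} (ht : 0 < t) (hq : q = exp (-t)) :
    theta 0 1 (3 / 10) (5 * t / 2) * theta 0 1 (1 / 10) (5 * t / 2) * (eulerE q * eulerE (q ^ 10))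
      = exp (-(t / 4)) * (eulerE (q ^ 2) * eulerE (q ^ 5) ^ 3) := by
  have hx : 0 < 5 * t / 2 := by positivity
  have hq₁ : |q| < 1 := by rw [hq, abs_exp]; exact exp_lt_one_iff.2 (by linarith)
  have hdouble (i : ℕ) := qPoch_mul_qPoch_neg (q ^ i) (abs_pow_lt_one hq₁ (n := 5) (by norm_num))
  have hexp : exp (-(t / 4))
      = exp (-(5 * t / 2 * (3 / 10) ^ 2)) * exp (-(5 * t / 2 * (1 / 10) ^ 2)) := by
    rw [← exp_add]; ring_nf
  have h₁ := eulerE_pow_eq_prod_range hq₁ one_ne_zero (n := 5) (by norm_num)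
  have h₂ := eulerE_pow_eq_prod_range hq₁ two_ne_zero (n := 5) (by norm_num)
  norm_num only [Finset.prod_range_succ, Finset.prod_range_zero, pow_one, one_mul] at h₁ h₂
  simp only [← pow_mul] at hdouble
  have hd₁ := hdouble 1
  have hd₂ := hdouble 2
  have hd₃ := hdouble 3
  have hd₄ := hdouble 4
  norm_num only [pow_one] at hd₁ hd₂ hd₃ hd₄
  rw [theta_eq_mul_qPoch_pow abs_one hx (a := 4) (b := 1) (m := 5) (t := t) (by norm_num)
      (by norm_num; ring) (by norm_num),
    theta_eq_mul_qPoch_pow abs_one hx (a := 3) (b := 2) (m := 5) (t := t) (by norm_num)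
      (by norm_num; ring) (by norm_num), ← hq, hexp, h₁, h₂, ← hd₁, ← hd₂, ← hd₃, ← hd₄,
      eulerE_eq_qPoch (q ^ 5), eulerE_eq_qPoch (q ^ 10)]
  simp only [pow_one, one_mul]
  ring

theorem eulerE_two_pow_four (hq₀ : 0 < q) (hq₁ : q < 1) :
    eulerE (q ^ 2) ^ 4 / eulerE q ^ 2 = q * (eulerE (q ^ 10) ^ 4 / eulerE (q ^ 5) ^ 2)
      + eulerE (q ^ 2) * eulerE (q ^ 5) ^ 3 / (eulerE q * eulerE (q ^ 10)) := by
  obtain ⟨t, ht, hqt⟩ := exists_exp_neg_eq hq₀ hq₁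
  have hE₁ := eulerE_pos hq₀.le hq₁
  have hE₅ := eulerE_pow_pos hq₀.le hq₁ (n := 5) (by norm_num)
  have hE₁₀ := eulerE_pow_pos hq₀.le hq₁ (n := 10) (by norm_num)
  have hone := theta_one_half_mul_eulerE (half_pos ht)
  have hfive := theta_one_half_mul_eulerE (x := 5 * t / 2) (by positivity)
  have hprod := theta_one_tenths_mul_eulerE ht hqt.symm
  have hsq := theta_half_sq (half_pos ht)
  rw [show exp (-(2 * (t / 2))) = q by rw [← hqt]; ring_nf, ← eq_div_iff hE₁.ne'] at hone
  rw [show exp (-(2 * (5 * t / 2))) = q ^ 5 by rw [← hqt, ← exp_nat_mul]; push_cast; ring_nf,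
    ← pow_mul, ← eq_div_iff hE₅.ne'] at hfive
  rw [← eq_div_iff (mul_pos hE₁ hE₁₀).ne'] at hprod
  rw [← mul_div_assoc, hone, hfive, hprod] at hsq
  have hexp₁ : exp (-(t / 2 / 4)) ^ 2 = exp (-(t / 4)) := by
    rw [← exp_nat_mul]; push_cast; ring_nf
  have hexp₅ : exp (-(5 * t / 2 / 4)) ^ 2 = exp (-(t / 4)) * q := by
    rw [← hqt, ← exp_nat_mul, ← exp_add]; push_cast; ring_nf
  simp only [div_pow, mul_pow, hexp₁, hexp₅] at hsq
  refine mul_left_cancel₀ (mul_pos four_pos (exp_pos (-(t / 4)))).ne' ?_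
  linear_combination hsq

/-- The eta quotient `u = η(2τ) η(5τ)^5 / (η(τ) η(10τ)^5)`, a Hauptmodul for `Γ₀(10)`, written in
`q = exp (2πiτ)`. -/
noncomputable def etaQuotient (q : ℝ) : ℝ :=
  eulerE (q ^ 2) * eulerE (q ^ 5) ^ 5 / (q * eulerE q * eulerE (q ^ 10) ^ 5)

lemma etaQuotient_pos (hq₀ : 0 < q) (hq₁ : q < 1) : 0 < etaQuotient q := by
  have hE₁ := eulerE_pos hq₀.le hq₁
  have hE {n : ℕ} (hn : n ≠ 0) := eulerE_pow_pos hq₀.le hq₁ hn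
  exact div_pos (mul_pos (hE (by norm_num)) (pow_pos (hE (by norm_num)) 5))
    (mul_pos (mul_pos hq₀ hE₁) (pow_pos (hE (by norm_num)) 5))

theorem etaQuotient_sub_four (hq₀ : 0 < q) (hq₁ : q < 1) :
    etaQuotient q - 4
      = eulerE q ^ 3 * eulerE (q ^ 5) / (q * eulerE (q ^ 2) * eulerE (q ^ 10) ^ 3) := by
  have hq : |q| < 1 := by rwa [abs_of_pos hq₀]
  have hE₁ := eulerE_pos hq₀.le hq₁
  have hE₂ := eulerE_pow_pos hq₀.le hq₁ two_ne_zero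
  have hE₅ := eulerE_pow_pos hq₀.le hq₁ (n := 5) (by norm_num)
  have hE₁₀ := eulerE_pow_pos hq₀.le hq₁ (n := 10) (by norm_num)
  have hJ₁₂ := thetaProd_two_mul hq one_ne_zero
  have hJ₅ := thetaProd_two_mul hq (a := 5) (by norm_num)
  have hJ₁₃ := thetaProd_one_ten_mul_thetaProd_three_ten hq
  norm_num only [pow_one] at hJ₁₂ hJ₅
  rw [← eq_div_iff (by positivity)] at hJ₁₂ hJ₅ hJ₁₃
  have hsq := thetaProd_one_two_sq hq₀ hq₁
  rw [hJ₁₂, hJ₅, hJ₁₃] at hsq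
  rw [etaQuotient]
  field_simp at hsq ⊢
  linear_combination -hsq

theorem etaQuotient_add_one (hq₀ : 0 < q) (hq₁ : q < 1) :
    etaQuotient q + 1
      = eulerE (q ^ 2) ^ 4 * eulerE (q ^ 5) ^ 2 / (q * eulerE q ^ 2 * eulerE (q ^ 10) ^ 4) := by
  have hE₁ := eulerE_pos hq₀.le hq₁
  have hE₅ := eulerE_pow_pos hq₀.le hq₁ (n := 5) (by norm_num)
  have hE₁₀ := eulerE_pow_pos hq₀.le hq₁ (n := 10) (by norm_num)
  have hfour := eulerE_two_pow_four hq₀ hq₁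
  rw [etaQuotient]
  field_simp at hfour ⊢
  linear_combination -hfour

end LevelTen

/-! ### The Rogers–Ramanujan continued fraction -/

section RogersRamanujan

/-- The quotient of theta series whose value at `t` is the Rogers–Ramanujan continued fraction
`R(q) = q^{1/5} J_{1,5} / J_{2,5}` at `q = exp (-t)`. -/
noncomputable def thetaRatio (t : ℝ) : ℝ :=
  theta 0 (-1) (3 / 10) (5 * t / 2) / theta 0 (-1) (1 / 10) (5 * t / 2)

variable {t q : ℝ}

lemma theta_three_tenths (ht : 0 < t) :
    theta 0 (-1) (3 / 10) (5 * t / 2) = exp (-(9 * t / 40)) * thetaProd 1 5 (exp (-t)) := by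
  rw [theta_eq_exp_mul_thetaProd (a := 1) (m := 5) (t := t) (by positivity) (by norm_num)
    (by norm_num; ring) (by norm_num)]
  ring_nf

lemma theta_one_tenth (ht : 0 < t) :
    theta 0 (-1) (1 / 10) (5 * t / 2) = exp (-(t / 40)) * thetaProd 2 5 (exp (-t)) := by
  rw [theta_eq_exp_mul_thetaProd (a := 2) (m := 5) (t := t) (by positivity) (by norm_num)
    (by norm_num; ring) (by norm_num)]
  ring_nf

lemma thetaRatio_eq (ht : 0 < t) : thetaRatio t
    = exp (-(t / 5)) * (thetaProd 1 5 (exp (-t)) / thetaProd 2 5 (exp (-t))) := by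
  have hexp : exp (-(9 * t / 40)) = exp (-(t / 5)) * exp (-(t / 40)) := by
    rw [← exp_add]; ring_nf
  rw [thetaRatio, theta_three_tenths ht, theta_one_tenth ht, hexp]
  field_simp

lemma theta_three_tenths_mul_theta_one_tenth (ht : 0 < t) :
    theta 0 (-1) (3 / 10) (5 * t / 2) * theta 0 (-1) (1 / 10) (5 * t / 2)
      = exp (-(t / 4)) * (eulerE (exp (-t)) * eulerE (exp (-t) ^ 5)) := by
  have hq : |exp (-t)| < 1 := by rw [abs_exp]; exact exp_lt_one_iff.2 (by linarith)
  have hexp : exp (-(t / 4)) = exp (-(9 * t / 40)) * exp (-(t / 40)) := by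
    rw [← exp_add]; ring_nf
  rw [theta_three_tenths ht, theta_one_tenth ht, hexp, ← thetaProd_five hq]
  ring

lemma theta_tenths_wronskian (ht : 0 < t) :
    25 * (theta 2 (-1) (3 / 10) (5 * t / 2) * theta 0 (-1) (1 / 10) (5 * t / 2)
        - theta 0 (-1) (3 / 10) (5 * t / 2) * theta 2 (-1) (1 / 10) (5 * t / 2))
      = 2 * exp (-(t / 4)) * eulerE (exp (-t)) ^ 6 := by
  have hexp : exp (-(t / 2 / 4)) ^ 2 = exp (-(t / 4)) := by
    rw [← exp_nat_mul]; push_cast; ring_nf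
  rw [mul_div_assoc, ← two_mul_theta_one_half_sq (half_pos ht),
    theta_one_neg_one_half (half_pos ht), mul_div_cancel₀ t two_ne_zero, mul_pow, hexp]
  ring

theorem hasDerivAt_thetaRatio (ht : 0 < t) :
    HasDerivAt thetaRatio
      (-(thetaRatio t * (eulerE (exp (-t)) ^ 5 / (5 * eulerE (exp (-t) ^ 5))))) t := by
  have hq₁ : exp (-t) < 1 := exp_lt_one_iff.2 (by linarith)
  have hE₅ := eulerE_pow_pos (exp_pos _).le hq₁ (n := 5) (by norm_num)
  have hscale : HasDerivAt (fun s : ℝ ↦ 5 * s / 2) (5 / 2) t := by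
    simpa using ((hasDerivAt_id t).const_mul 5).div_const 2
  have htheta (β : ℝ) : HasDerivAt (fun s ↦ theta 0 (-1) β (5 * s / 2))
      (-theta 2 (-1) β (5 * t / 2) * (5 / 2)) t :=
    (hasDerivAt_theta (by norm_num) (by positivity) 0 β).comp t hscale
  have hden : theta 0 (-1) (1 / 10) (5 * t / 2) ≠ 0 := by
    rw [theta_one_tenth ht]
    exact mul_ne_zero (exp_ne_zero _)
      (thetaProd_pos (exp_pos _).le hq₁ (by norm_num) (by norm_num)).ne'
  refine ((htheta (3 / 10)).div (htheta (1 / 10)) hden).congr_deriv ?_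
  rw [thetaRatio]
  field_simp
  linear_combination (-eulerE (exp (-t) ^ 5)) * theta_tenths_wronskian ht
    + 2 * eulerE (exp (-t)) ^ 5 * theta_three_tenths_mul_theta_one_tenth ht

/-- Ramanujan's parameter `k = R(q) R(q²)²`, where `R` is the Rogers–Ramanujan continued fraction;
the factors `q^{1/5}` and `q^{4/5}` combine to `q`, so that `k` is defined at `q = 0`. -/
noncomputable def ramanujanK (q : ℝ) : ℝ :=
  q * (thetaProd 1 5 q / thetaProd 2 5 q) * (thetaProd 1 5 (q ^ 2) / thetaProd 2 5 (q ^ 2)) ^ 2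

lemma ramanujanK_exp_neg (ht : 0 < t) :
    ramanujanK (exp (-t)) = thetaRatio t * thetaRatio (2 * t) ^ 2 := by
  have hsq : exp (-t) ^ 2 = exp (-(2 * t)) := by rw [← exp_nat_mul]; push_cast; ring_nf
  have hexp : exp (-t) = exp (-(t / 5)) * exp (-(2 * t / 5)) ^ 2 := by
    rw [← exp_nat_mul, ← exp_add]; push_cast; ring_nf
  rw [ramanujanK, thetaRatio_eq ht, thetaRatio_eq (by positivity : 0 < 2 * t), hsq]
  linear_combination (thetaProd 1 5 (exp (-t)) / thetaProd 2 5 (exp (-t)))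
    * (thetaProd 1 5 (exp (-(2 * t))) / thetaProd 2 5 (exp (-(2 * t)))) ^ 2 * hexp

lemma ramanujanK_eq_thetaProd_ten (hq₀ : 0 < q) (hq₁ : q < 1) :
    ramanujanK q
      = q * (thetaProd 1 10 q * thetaProd 2 10 q) / (thetaProd 3 10 q * thetaProd 4 10 q) := by
  have hsplit (a : ℕ) := qPoch_eq_prod_range (q ^ a)
    (abs_pow_lt_one (q := q) (by rwa [abs_of_pos hq₀]) (n := 5) (by norm_num)) two_ne_zero
  simp only [Finset.prod_range_succ, Finset.prod_range_zero, ← pow_mul, ← pow_add] at hsplit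
  have h₁ := hsplit 1
  have h₂ := hsplit 2
  have h₃ := hsplit 3
  have h₄ := hsplit 4
  norm_num only [one_mul] at h₁ h₂ h₃ h₄
  have hpos {n : ℕ} (hn : n ≠ 0) : 0 < qPoch (q ^ n) (q ^ 10) :=
    qPoch_pos (pow_lt_one₀ hq₀.le hq₁ hn) (by positivity) (pow_lt_one₀ hq₀.le hq₁ (by norm_num))
  have h₂' := hpos two_ne_zero
  have h₃' := hpos three_ne_zero
  have h₄' := hpos four_ne_zero
  have h₆' := hpos (n := 6) (by norm_num)
  have h₇' := hpos (n := 7) (by norm_num)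
  have h₈' := hpos (n := 8) (by norm_num)
  have hE₅ := eulerE_pow_pos hq₀.le hq₁ (n := 5) (by norm_num)
  have hE₁₀ := eulerE_pow_pos hq₀.le hq₁ (n := 10) (by norm_num)
  simp only [ramanujanK, thetaProd, ← pow_mul]
  norm_num only
  rw [h₁, h₂, h₃, h₄]
  field_simp

lemma ramanujanK_pos (hq₀ : 0 < q) (hq₁ : q < 1) : 0 < ramanujanK q := by
  have hq₂ : q ^ 2 < 1 := pow_lt_one₀ hq₀.le hq₁ two_ne_zero
  have hratio {p : ℝ} (hp₀ : 0 < p) (hp₁ : p < 1) : 0 < thetaProd 1 5 p / thetaProd 2 5 p :=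
    div_pos (thetaProd_pos hp₀.le hp₁ (by norm_num) (by norm_num))
      (thetaProd_pos hp₀.le hp₁ (by norm_num) (by norm_num))
  exact mul_pos (mul_pos hq₀ (hratio hq₀ hq₁)) (pow_pos (hratio (by positivity) hq₂) 2)

theorem one_sub_ramanujanK_sq (hq₀ : 0 < q) (hq₁ : q < 1) :
    1 - ramanujanK q ^ 2 = ramanujanK q * etaQuotient q := by
  have hq : |q| < 1 := by rwa [abs_of_pos hq₀]
  have hE₁ := eulerE_pos hq₀.le hq₁
  have hE₂ := eulerE_pow_pos hq₀.le hq₁ two_ne_zero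
  have hE₅ := eulerE_pow_pos hq₀.le hq₁ (n := 5) (by norm_num)
  have hE₁₀ := eulerE_pow_pos hq₀.le hq₁ (n := 10) (by norm_num)
  have hJ₃ := thetaProd_pos hq₀.le hq₁ (a := 3) (m := 10) (by norm_num) (by norm_num)
  have hJ₄ := thetaProd_pos hq₀.le hq₁ (a := 4) (m := 10) (by norm_num) (by norm_num)
  have hJ₁ := thetaProd_pos hq₀.le hq₁ (a := 1) (m := 10) (by norm_num) (by norm_num)
  have hJ₁₃ := thetaProd_one_ten_mul_thetaProd_three_ten hq
  have hJ₅ := thetaProd_two_mul hq (a := 5) (by norm_num)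
  norm_num only at hJ₅
  have hu : etaQuotient q = thetaProd 5 10 q ^ 2 / (q * (thetaProd 1 10 q * thetaProd 3 10 q)) := by
    rw [← eq_div_iff (by positivity)] at hJ₅ hJ₁₃
    rw [etaQuotient, hJ₅, hJ₁₃]
    field_simp
  have hid := thetaProd_ten_identity hq₀ hq₁
  rw [hu, ramanujanK_eq_thetaProd_ten hq₀ hq₁]
  field_simp
  linear_combination hid

lemma eulerE_pow_five_div_add_eulerE_pow_five_div (hq₀ : 0 < q) (hq₁ : q < 1) :
    eulerE q ^ 5 / (5 * eulerE (q ^ 5)) + 4 * (eulerE (q ^ 2) ^ 5 / (5 * eulerE (q ^ 10)))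
      = eulerE q * eulerE (q ^ 2) ^ 2 * eulerE (q ^ 5) ^ 3 / eulerE (q ^ 10) ^ 2 := by
  have hE₁ := eulerE_pos hq₀.le hq₁
  have hE₂ := eulerE_pow_pos hq₀.le hq₁ two_ne_zero
  have hE₅ := eulerE_pow_pos hq₀.le hq₁ (n := 5) (by norm_num)
  have hE₁₀ := eulerE_pow_pos hq₀.le hq₁ (n := 10) (by norm_num)
  set c := q * eulerE q ^ 2 * eulerE (q ^ 2) * eulerE (q ^ 10) ^ 3 / eulerE (q ^ 5) ^ 2 with hc
  have hone : eulerE q ^ 5 / (5 * eulerE (q ^ 5)) = c / 5 * (etaQuotient q - 4) := by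
    rw [etaQuotient_sub_four hq₀ hq₁, hc]
    field_simp
  have htwo : eulerE (q ^ 2) ^ 5 / (5 * eulerE (q ^ 10)) = c / 5 * (etaQuotient q + 1) := by
    rw [etaQuotient_add_one hq₀ hq₁, hc]
    field_simp
  calc eulerE q ^ 5 / (5 * eulerE (q ^ 5)) + 4 * (eulerE (q ^ 2) ^ 5 / (5 * eulerE (q ^ 10)))
      = c * etaQuotient q := by rw [hone, htwo]; ring
    _ = eulerE q * eulerE (q ^ 2) ^ 2 * eulerE (q ^ 5) ^ 3 / eulerE (q ^ 10) ^ 2 := by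
      rw [hc, etaQuotient]
      field_simp

theorem hasDerivAt_ramanujanK (hq₀ : 0 < q) (hq₁ : q < 1) :
    HasDerivAt ramanujanK (ramanujanK q
      * (eulerE q * eulerE (q ^ 2) ^ 2 * eulerE (q ^ 5) ^ 3 / eulerE (q ^ 10) ^ 2) / q) q := by
  obtain ⟨t, ht, rfl⟩ := exists_exp_neg_eq hq₀ hq₁
  have h2t : 0 < 2 * t := by positivity
  have hdouble : HasDerivAt (fun s ↦ thetaRatio (2 * s)) _ t :=
    (hasDerivAt_thetaRatio h2t).comp t ((hasDerivAt_id t).const_mul 2)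
  have hprod := (hasDerivAt_thetaRatio ht).mul (hdouble.pow 2)
  have ht' : t = -log (exp (-t)) := by rw [log_exp, neg_neg]
  rw [ht'] at hprod
  have hcomp := hprod.comp (exp (-t)) (hasDerivAt_log hq₀.ne').neg
  have heq : ramanujanK =ᶠ[𝓝 (exp (-t))]
      (fun s ↦ thetaRatio s * thetaRatio (2 * s) ^ 2) ∘ fun y ↦ -log y := by
    filter_upwards [Ioo_mem_nhds hq₀ hq₁] with y hy
    have := ramanujanK_exp_neg (neg_pos.2 (log_neg hy.1 hy.2))
    rwa [neg_neg, exp_log hy.1] at this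
  refine (hcomp.congr_of_eventuallyEq heq).congr_deriv ?_
  rw [← eulerE_pow_five_div_add_eulerE_pow_five_div hq₀ hq₁, ramanujanK_exp_neg ht]
  have hsq : exp (-(2 * t)) = exp (-t) ^ 2 := by rw [← exp_nat_mul]; push_cast; ring_nf
  simp only [← ht', hsq, ← pow_mul]
  norm_num
  field_simp
  ring

end RogersRamanujan

/-! ### The integral and its value -/

section Integral

variable {q : ℝ}

lemma continuousAt_eulerE (hq : |q| < 1) : ContinuousAt eulerE q := by
  simpa only [ContinuousAt, ← eulerE_eq_qPoch, id] using tendsto_qPoch hq tendsto_id tendsto_id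

lemma continuousAt_eulerE_pow (hq : |q| < 1) {n : ℕ} (hn : n ≠ 0) :
    ContinuousAt (fun x ↦ eulerE (x ^ n)) q :=
  (continuousAt_eulerE (abs_pow_lt_one hq hn)).comp (f := (· ^ n)) (continuousAt_pow q n)

lemma continuousAt_thetaProd (hq : |q| < 1) (a : ℕ) {m : ℕ} (hm : m ≠ 0) :
    ContinuousAt (thetaProd a m) q := by
  have hpow (n : ℕ) : Tendsto (fun x : ℝ ↦ x ^ n) (𝓝 q) (𝓝 (q ^ n)) := continuousAt_pow q n
  have hqm := abs_pow_lt_one hq hm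
  exact ((tendsto_qPoch hqm (hpow a) (hpow m)).mul (tendsto_qPoch hqm (hpow (m - a)) (hpow m))).mul
    (continuousAt_eulerE_pow hq hm)

lemma continuousAt_ramanujanK (hq₀ : 0 ≤ q) (hq₁ : q < 1) : ContinuousAt ramanujanK q := by
  have hratio {p : ℝ} (hp₀ : 0 ≤ p) (hp₁ : p < 1) :
      ContinuousAt (fun x ↦ thetaProd 1 5 x / thetaProd 2 5 x) p := by
    have hp : |p| < 1 := by rwa [abs_of_nonneg hp₀]
    exact (continuousAt_thetaProd hp 1 (by norm_num)).div
      (continuousAt_thetaProd hp 2 (by norm_num))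
      (thetaProd_pos hp₀ hp₁ (by norm_num) (by norm_num)).ne'
  have hsquare : ContinuousAt
      (fun x ↦ thetaProd 1 5 (x ^ 2) / thetaProd 2 5 (x ^ 2)) q :=
    (hratio (by positivity) (pow_lt_one₀ hq₀ hq₁ two_ne_zero)).comp (f := (· ^ 2))
      (continuousAt_pow q 2)
  exact (continuousAt_id.mul (hratio hq₀ hq₁)).mul (hsquare.pow 2)

lemma one_add_ramanujanK_sub_sq_eq (hq₀ : 0 < q) (hq₁ : q < 1) :
    1 + ramanujanK q - ramanujanK q ^ 2 = ramanujanK q * (etaQuotient q + 1) := by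
  linear_combination one_sub_ramanujanK_sq hq₀ hq₁

lemma one_add_ramanujanK_sub_sq_pos (hq₀ : 0 ≤ q) (hq₁ : q < 1) :
    0 < 1 + ramanujanK q - ramanujanK q ^ 2 := by
  rcases hq₀.eq_or_lt with rfl | hq₀
  · simp [ramanujanK]
  · rw [one_add_ramanujanK_sub_sq_eq hq₀ hq₁]
    exact mul_pos (ramanujanK_pos hq₀ hq₁) (by linarith [etaQuotient_pos hq₀ hq₁])

/-- The antiderivative `(k - 2k²) / (1 + k - k²) = 1 - (1 + k²) / (1 + k - k²)` of the integrand,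
as a rational function of `k = R(q) R(q²)²`. -/
noncomputable def eulerPrimitive (q : ℝ) : ℝ :=
  1 - (1 + ramanujanK q ^ 2) / (1 + ramanujanK q - ramanujanK q ^ 2)

lemma continuousAt_eulerPrimitive (hq₀ : 0 ≤ q) (hq₁ : q < 1) : ContinuousAt eulerPrimitive q := by
  have hk := continuousAt_ramanujanK hq₀ hq₁
  exact continuousAt_const.sub ((continuousAt_const.add (hk.pow 2)).div
    ((continuousAt_const.add hk).sub (hk.pow 2)) (one_add_ramanujanK_sub_sq_pos hq₀ hq₁).ne')

theorem hasDerivAt_eulerPrimitive (hq₀ : 0 < q) (hq₁ : q < 1) :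
    HasDerivAt eulerPrimitive (eulerE q ^ 8 * eulerE (q ^ 10) ^ 3 / eulerE (q ^ 2) ^ 7) q := by
  have hE₁ := eulerE_pos hq₀.le hq₁
  have hE₂ := eulerE_pow_pos hq₀.le hq₁ two_ne_zero
  have hE₅ := eulerE_pow_pos hq₀.le hq₁ (n := 5) (by norm_num)
  have hE₁₀ := eulerE_pow_pos hq₀.le hq₁ (n := 10) (by norm_num)
  have hk₀ := ramanujanK_pos hq₀ hq₁
  have hk := hasDerivAt_ramanujanK hq₀ hq₁
  have hden := one_add_ramanujanK_sub_sq_eq hq₀ hq₁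
  have hnum : 1 - 4 * ramanujanK q - ramanujanK q ^ 2 = ramanujanK q * (etaQuotient q - 4) := by
    linear_combination one_sub_ramanujanK_sq hq₀ hq₁
  have hquot := (((hk.pow 2).const_add 1).div ((hk.const_add 1).sub (hk.pow 2))
    (one_add_ramanujanK_sub_sq_pos hq₀.le hq₁).ne').const_sub 1
  refine hquot.congr_deriv ?_
  set k := ramanujanK q
  set c := eulerE q * eulerE (q ^ 2) ^ 2 * eulerE (q ^ 5) ^ 3 / eulerE (q ^ 10) ^ 2 with hc
  trans (1 - 4 * k - k ^ 2) / (1 + k - k ^ 2) ^ 2 * (k * c / q)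
  · simp only [Pi.pow_apply, Pi.sub_apply, Nat.cast_ofNat]; ring
  · rw [hnum, hden, etaQuotient_sub_four hq₀ hq₁, etaQuotient_add_one hq₀ hq₁, hc]
    field_simp

theorem integral_eulerE_quotient {b : ℝ} (hb₀ : 0 ≤ b) (hb₁ : b < 1) :
    ∫ q in (0 : ℝ)..b, eulerE q ^ 8 * eulerE (q ^ 10) ^ 3 / eulerE (q ^ 2) ^ 7
      = eulerPrimitive b := by
  have hzero : eulerPrimitive 0 = 0 := by simp [eulerPrimitive, ramanujanK]
  have hcont : ContinuousOn
      (fun q ↦ eulerE q ^ 8 * eulerE (q ^ 10) ^ 3 / eulerE (q ^ 2) ^ 7) (Set.uIcc 0 b) := by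
    rw [Set.uIcc_of_le hb₀]
    refine continuousOn_of_forall_continuousAt fun q hq ↦ ?_
    have hq₁ : q < 1 := hq.2.trans_lt hb₁
    have hq_abs : |q| < 1 := by rwa [abs_of_nonneg hq.1]
    exact (((continuousAt_eulerE hq_abs).pow 8).mul
      ((continuousAt_eulerE_pow hq_abs (by norm_num)).pow 3)).div
      ((continuousAt_eulerE_pow hq_abs two_ne_zero).pow 7)
      (pow_pos (eulerE_pow_pos hq.1 hq₁ two_ne_zero) 7).ne'
  rw [intervalIntegral.integral_eq_sub_of_hasDerivAt_of_le hb₀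
    (continuousOn_of_forall_continuousAt fun q hq ↦
      continuousAt_eulerPrimitive hq.1 (hq.2.trans_lt hb₁))
    (fun q hq ↦ hasDerivAt_eulerPrimitive hq.1 (hq.2.trans hb₁)) hcont.intervalIntegrable,
    hzero, sub_zero]

lemma eulerPrimitive_eq (hq₀ : 0 < q) (hq₁ : q < 1) :
    eulerPrimitive q = 1 - √(etaQuotient q ^ 2 + 4) / (etaQuotient q + 1) := by
  have hk := ramanujanK_pos hq₀ hq₁
  have hu := etaQuotient_pos hq₀ hq₁
  have hroot : 1 + ramanujanK q ^ 2 = ramanujanK q * √(etaQuotient q ^ 2 + 4) := by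
    rw [← sq_eq_sq₀ (by positivity) (by positivity), mul_pow, sq_sqrt (by positivity)]
    linear_combination (1 - ramanujanK q ^ 2 + ramanujanK q * etaQuotient q)
      * one_sub_ramanujanK_sq hq₀ hq₁
  rw [eulerPrimitive, one_add_ramanujanK_sub_sq_eq hq₀ hq₁, hroot, mul_div_mul_left _ _ hk.ne']

end Integral

section Eta

/-- The Dedekind eta function on the imaginary axis, `η(iy)`, as a real number. -/
noncomputable def etaIm (y : ℝ) : ℝ := exp (-(π * y / 12)) * eulerE (exp (-(2 * π * y)))

variable {y : ℝ}

lemma etaIm_pos (hy : 0 < y) : 0 < etaIm y :=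
  mul_pos (exp_pos _)
    (eulerE_pos (exp_pos _).le (exp_lt_one_iff.2 (by rw [neg_lt_zero]; positivity)))

lemma ofReal_eulerE {q : ℝ} (hq : |q| < 1) :
    (eulerE q : ℂ) = ∏' j : ℕ, (1 - (q : ℂ) ^ (j + 1)) := by
  have h : Multipliable fun j : ℕ ↦ 1 - q ^ (j + 1) := by
    simpa only [pow_succ'] using multipliable_qPoch q hq
  simpa [eulerE] using h.map_tprod Complex.ofRealHom Complex.continuous_ofReal

lemma eta_I_mul_ofReal (hy : 0 < y) : ModularForm.eta (Complex.I * y) = etaIm y := by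
  have hq : |exp (-(2 * π * y))| < 1 := by
    rw [abs_exp, exp_lt_one_iff, neg_lt_zero]; positivity
  have hexp (c : ℂ) : c * Complex.I * (Complex.I * y) = -(c * y) := by
    linear_combination c * y * Complex.I_mul_I
  simp only [ModularForm.eta, ModularForm.eta_q_eq_pow, Function.Periodic.qParam, etaIm,
    Complex.ofReal_mul, ofReal_eulerE hq, Complex.ofReal_exp, hexp]
  push_cast
  congr 2
  ring

lemma complex_sqrt_mul_ofReal {z : ℂ} (hz : z ≠ 0) (hy : 0 < y) :
    Complex.sqrt (z * y) = Complex.sqrt z * √y := by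
  have hy' : (y : ℂ) ≠ 0 := Complex.ofReal_ne_zero.2 hy.ne'
  have hroot : (√y : ℂ) = Complex.sqrt y := by
    rw [Complex.sqrt_of_nonneg (Complex.zero_le_real.2 hy.le), Complex.ofReal_re]
  rw [hroot, sqrt_eq_exp (mul_ne_zero hz hy'), sqrt_eq_exp hz, sqrt_eq_exp hy', ← Complex.exp_add,
    Complex.log_mul_ofReal y hy z hz, Complex.ofReal_log hy.le]
  ring_nf

theorem etaIm_inv (hy : 0 < y) : etaIm y⁻¹ = √y * etaIm y := by
  have hmem : Complex.I * y ∈ UpperHalfPlane.upperHalfPlaneSet := by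
    simpa [UpperHalfPlane.upperHalfPlaneSet] using hy
  have hinv : -1 / (Complex.I * y) = Complex.I * (y⁻¹ : ℝ) := by
    have := Complex.ofReal_ne_zero.2 hy.ne'
    push_cast
    field_simp
    simp
  have h := ModularForm.eta_comp_eq_csqrt_I_inv hmem
  simp only [Function.comp_apply, hinv, Pi.smul_apply, Pi.mul_apply, smul_eq_mul,
    complex_sqrt_mul_ofReal Complex.I_ne_zero hy,
    eta_I_mul_ofReal hy, eta_I_mul_ofReal (inv_pos.2 hy)] at h
  have hI : Complex.sqrt Complex.I ≠ 0 := by simp [Complex.sqrt]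
  rw [mul_assoc, inv_mul_cancel_left₀ hI] at h
  exact_mod_cast h

lemma etaIm_natCast_mul (n : ℕ) (y : ℝ) :
    etaIm (n * y) = exp (-(π * y / 12)) ^ n * eulerE (exp (-(2 * π * y)) ^ n) := by
  rw [etaIm, ← exp_nat_mul, ← exp_nat_mul]
  ring_nf

lemma etaQuotient_sub_four_mul_add_one (hy : 0 < y) :
    (etaQuotient (exp (-(2 * π * y))) - 4) * (etaQuotient (exp (-(2 * π * y))) + 1)
        * (etaIm (5 * y) * etaIm (10 * y)) ^ 2
      = etaQuotient (exp (-(2 * π * y))) * (etaIm y * etaIm (2 * y)) ^ 2 := by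
  have hq₀ := exp_pos (-(2 * π * y))
  have hq₁ : exp (-(2 * π * y)) < 1 := by rw [exp_lt_one_iff, neg_lt_zero]; positivity
  have hE₁ := eulerE_pos hq₀.le hq₁
  have hE₂ := eulerE_pow_pos hq₀.le hq₁ two_ne_zero
  have hE₁₀ := eulerE_pow_pos hq₀.le hq₁ (n := 10) (by norm_num)
  have hη (n : ℕ) := etaIm_natCast_mul n y
  have hη₂ := hη 2
  have hη₅ := hη 5
  have hη₁₀ := hη 10
  have hroot : exp (-(2 * π * y)) = exp (-(π * y / 12)) ^ 24 := by
    rw [← exp_nat_mul]; push_cast; ring_nf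
  push_cast at hη₂ hη₅ hη₁₀
  rw [etaQuotient_sub_four hq₀ hq₁, etaQuotient_add_one hq₀ hq₁, etaQuotient, hη₂, hη₅, hη₁₀, etaIm]
  set q := exp (-(2 * π * y))
  field_simp
  rw [hroot]
  ring

theorem etaQuotient_inv_sqrt_ten : etaQuotient (exp (-(2 * π * (√10)⁻¹))) = 4 + 2 * √5 := by
  set y := (√10)⁻¹ with hy
  have hy₀ : 0 < y := by positivity
  have hq₁ : exp (-(2 * π * y)) < 1 := by rw [exp_lt_one_iff, neg_lt_zero]; positivity
  have hy₁₀ : 10 * y ^ 2 = 1 := by norm_num [hy]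
  have hη₁₀ : etaIm (10 * y) = √y * etaIm y := by
    rw [← etaIm_inv hy₀, ← eq_inv_of_mul_eq_one_left (a := 10 * y) (by linear_combination hy₁₀)]
  have hη₅ : etaIm (5 * y) = √(2 * y) * etaIm (2 * y) := by
    rw [← etaIm_inv (by positivity),
      ← eq_inv_of_mul_eq_one_left (a := 5 * y) (by linear_combination hy₁₀)]
  have hmod := etaQuotient_sub_four_mul_add_one hy₀
  have hu := etaQuotient_pos (exp_pos _) hq₁
  set u := etaQuotient (exp (-(2 * π * y)))
  have hquad : (u - 4) * (u + 1) = 5 * u := by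
    have hηη := mul_pos (etaIm_pos hy₀) (etaIm_pos (mul_pos two_pos hy₀))
    refine mul_right_cancel₀ (pow_pos hηη 2).ne' ?_
    rw [hη₁₀, hη₅] at hmod
    simp only [mul_pow, sq_sqrt hy₀.le, sq_sqrt (mul_pos two_pos hy₀).le] at hmod
    linear_combination 5 * hmod - (u - 4) * (u + 1) * (etaIm y * etaIm (2 * y)) ^ 2 * hy₁₀
  have hsq : (u - 4) ^ 2 = (2 * √5) ^ 2 := by
    rw [mul_pow, sq_sqrt (by norm_num)]
    linear_combination hquad
  rcases sq_eq_sq_iff_eq_or_eq_neg.1 hsq with h | h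
  · linarith
  · have : (2 : ℝ) < √5 := by rw [lt_sqrt] <;> norm_num
    linarith

end Eta

lemma sqrt_etaQuotient_value :
    √((4 + 2 * √5) ^ 2 + 4) / (4 + 2 * √5 + 1) = 2 * √((10 - 4 * √5) / 5) := by
  have h₅ : √5 ^ 2 = 5 := sq_sqrt (by norm_num)
  have hlt : √5 < 5 / 2 := by rw [sqrt_lt'] <;> norm_num
  rw [div_eq_iff (by positivity), ← sq_eq_sq₀ (by positivity) (by positivity), mul_pow, mul_pow,
    sq_sqrt (by positivity), sq_sqrt (by linarith)]
  linear_combination (64 / 5 * √5 + 36) * h₅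

theorem stmt_6 :
    (∫ q in (0:ℝ)..Real.exp (-2 * Real.pi / Real.sqrt 10),
        eulerE q ^ 8 * eulerE (q ^ 10) ^ 3 / eulerE (q ^ 2) ^ 7)
      = 1 - 2 * Real.sqrt ((10 - 4 * Real.sqrt 5) / 5) := by
  have hb : -2 * π / √10 = -(2 * π * (√10)⁻¹) := by ring
  have hb₁ : exp (-(2 * π * (√10)⁻¹)) < 1 := by rw [exp_lt_one_iff, neg_lt_zero]; positivity
  rw [hb, integral_eulerE_quotient (exp_pos _).le hb₁, eulerPrimitive_eq (exp_pos _) hb₁,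
    etaQuotient_inv_sqrt_ten, sqrt_etaQuotient_value]
end

section
/- The integral from 0 to e^{−2π/√10} of q · E(q)^3 E(q^{10})^8 / E(q^5)^7 dq equals (√(10 − 4√5) − 1)/4. -/
open Real

/-!
With `q = exp (2πiτ)`, let `t = η(τ) η(10τ)⁵ / (η(2τ) η(5τ)⁵)` be the Hauptmodul of `Γ₀(10)`. Both
`1 - 4 t` and `1 + t` are eta quotients: these are five-dissections of `φ(-q)²` and `ψ(q)²`, and
they show that the Hauptmodul `q ψ(q)⁸ / φ(-q)⁸` of `Γ₀(2)` is `t (1 + t)⁵ / (1 - 4 t)⁵`. Its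
logarithmic derivative is a weight-two Eisenstein series whose square is a sum of two eta quotients.
As `(1 - 4 t)⁵ + 64 t (1 + t)⁵ = (1 + 4 t²) (1 + 22 t - 4 t²)²`, `√(1 + 4 t²) / 4` is an
antiderivative of the integrand. The upper limit is the fixed point `τ = i / √10` of the Fricke
involution `w`, for which `(1 + t) (1 + t ∘ w) = 5 / 4`, so there `1 + t = √5 / 2`.
-/

open Filter Topology

/-- The infinite `q`-Pochhammer symbol `(x; q)_∞`. -/
noncomputable def qPochhammer {𝕜 : Type*} [NormedField 𝕜] (x q : 𝕜) : 𝕜 :=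
  ∏' k : ℕ, (1 - x * q ^ k)

/-- Euler's product `(q; q)_∞` in a normed field; over `ℝ` this is `eulerE`. -/
noncomputable def eulerFunction {𝕜 : Type*} [NormedField 𝕜] (q : 𝕜) : 𝕜 := qPochhammer q q

/-- The finite `q`-Pochhammer symbol `(q; q)_n`. -/
noncomputable def qFactorial {𝕜 : Type*} [NormedField 𝕜] (q : 𝕜) (n : ℕ) : 𝕜 :=
  ∏ k ∈ Finset.range n, (1 - q ^ (k + 1))

theorem eulerE_eq_eulerFunction (q : ℝ) : eulerE q = eulerFunction q := by
  simp only [eulerE, eulerFunction, qPochhammer, pow_succ']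

section NormedField

variable {𝕜 : Type*} [NormedField 𝕜] {q : 𝕜}

theorem norm_pow_lt_one (hq : ‖q‖ < 1) {n : ℕ} (hn : n ≠ 0) : ‖q ^ n‖ < 1 := by
  rw [norm_pow]
  exact pow_lt_one₀ (norm_nonneg q) hq hn

theorem one_sub_ne_zero_of_norm_lt_one (hq : ‖q‖ < 1) : 1 - q ≠ 0 := by
  refine sub_ne_zero.2 fun h => ?_
  rw [← h, norm_one] at hq
  exact hq.false

theorem qFactorial_succ (q : 𝕜) (n : ℕ) :
    qFactorial q (n + 1) = qFactorial q n * (1 - q ^ (n + 1)) :=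
  Finset.prod_range_succ _ _

theorem summable_norm_neg_mul_pow (x : 𝕜) (hq : ‖q‖ < 1) :
    Summable fun k : ℕ => ‖-(x * q ^ k)‖ := by
  simpa only [norm_neg, norm_mul, norm_pow] using
    (summable_geometric_of_lt_one (norm_nonneg q) hq).mul_left ‖x‖

variable [CompleteSpace 𝕜]

theorem tendsto_prod_qPochhammer (x : 𝕜) (hq : ‖q‖ < 1) :
    Tendsto (fun N => ∏ k ∈ Finset.range N, (1 - x * q ^ k)) atTop (𝓝 (qPochhammer x q)) := by
  simpa only [qPochhammer, ← sub_eq_add_neg] using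
    (multipliable_one_add_of_summable (summable_norm_neg_mul_pow x hq)).hasProd.tendsto_prod_nat

theorem tendsto_qFactorial (hq : ‖q‖ < 1) :
    Tendsto (qFactorial q) atTop (𝓝 (eulerFunction q)) :=
  (tendsto_prod_qPochhammer q hq).congr fun n => by simp only [qFactorial, pow_succ']

theorem eulerFunction_ne_zero (hq : ‖q‖ < 1) : eulerFunction q ≠ 0 := by
  have := tprod_one_add_ne_zero_of_summable (f := fun k : ℕ => -(q * q ^ k)) (fun k => ?_)
    (summable_norm_neg_mul_pow q hq)
  · simpa only [eulerFunction, qPochhammer, ← sub_eq_add_neg] using this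
  · simpa only [← sub_eq_add_neg, ← pow_succ'] using
      one_sub_ne_zero_of_norm_lt_one (norm_pow_lt_one hq k.succ_ne_zero)

theorem eulerFunction_pow_ne_zero (hq : ‖q‖ < 1) (n : ℕ) [NeZero n] :
    eulerFunction (q ^ n) ≠ 0 :=
  eulerFunction_ne_zero (norm_pow_lt_one hq (NeZero.ne n))

theorem qPochhammer_mul_qPochhammer_neg (x : 𝕜) (hq : ‖q‖ < 1) :
    qPochhammer x q * qPochhammer (-x) q = qPochhammer (x ^ 2) (q ^ 2) := by
  refine tendsto_nhds_unique
    ((tendsto_prod_qPochhammer x hq).mul (tendsto_prod_qPochhammer (-x) hq)) ?_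
  refine (tendsto_prod_qPochhammer (x ^ 2) (norm_pow_lt_one hq two_ne_zero)).congr fun N => ?_
  rw [← Finset.prod_mul_distrib]
  exact Finset.prod_congr rfl fun k _ => by ring

theorem qPochhammer_eq_one_sub_mul (x : 𝕜) (hq : ‖q‖ < 1) :
    qPochhammer x q = (1 - x) * qPochhammer (x * q) q := by
  refine tendsto_nhds_unique ((tendsto_prod_qPochhammer x hq).comp (tendsto_add_atTop_nat 1)) ?_
  refine ((tendsto_prod_qPochhammer (x * q) hq).const_mul (1 - x)).congr fun N => ?_
  rw [Function.comp_apply, Finset.prod_range_succ', pow_zero, mul_one, mul_comm]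
  exact congrArg (· * (1 - x)) (Finset.prod_congr rfl fun k _ => by ring)

theorem qPochhammer_eq_prod_residues (x : 𝕜) (hq : ‖q‖ < 1) {m : ℕ} (hm : m ≠ 0) :
    qPochhammer x q = ∏ i ∈ Finset.range m, qPochhammer (x * q ^ i) (q ^ m) := by
  have hmul : Tendsto (fun N : ℕ => m * N) atTop atTop :=
    tendsto_id.const_mul_atTop' (Nat.pos_of_ne_zero hm)
  refine tendsto_nhds_unique ((tendsto_prod_qPochhammer x hq).comp hmul) ?_
  refine (tendsto_finsetProd (Finset.range m) fun i _ => tendsto_prod_qPochhammer (x * q ^ i)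
    (norm_pow_lt_one hq hm)).congr fun N => ?_
  rw [Finset.prod_comm, Function.comp_apply]
  induction N with
  | zero => simp
  | succ N ih =>
    rw [Finset.prod_range_succ, ih, mul_add_one, Finset.prod_range_add]
    exact congrArg _ (Finset.prod_congr rfl fun i _ => by ring)

end NormedField

theorem eulerFunction_pos {q : ℝ} (h0 : 0 ≤ q) (h1 : q < 1) : 0 < eulerFunction q := by
  have hq : ‖q‖ < 1 := by rwa [Real.norm_of_nonneg h0]
  refine lt_of_le_of_ne (ge_of_tendsto' (tendsto_qFactorial hq) fun N => ?_)
    (eulerFunction_ne_zero hq).symm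
  exact Finset.prod_nonneg fun k _ => sub_nonneg.2 (pow_le_one₀ h0 h1.le)

theorem eulerFunction_pow_pos {q : ℝ} (h0 : 0 ≤ q) (h1 : q < 1) (n : ℕ) [NeZero n] :
    0 < eulerFunction (q ^ n) :=
  eulerFunction_pos (pow_nonneg h0 n) (pow_lt_one₀ h0 h1 (NeZero.ne n))

/-- The triangular number `j (j + 1) / 2`, for any integer `j`. -/
def triangular (j : ℤ) : ℕ := (j * (j + 1) / 2).toNat

theorem two_mul_triangular (j : ℤ) : 2 * (triangular j : ℤ) = j * (j + 1) := by
  have hnonneg : 0 ≤ j * (j + 1) := by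
    rcases le_or_gt 0 j with h | h
    · positivity
    · exact mul_nonneg_of_nonpos_of_nonpos h.le (by lia)
  rw [triangular, Int.toNat_of_nonneg (by positivity)]
  exact Int.mul_ediv_cancel' (Int.even_mul_succ_self j).two_dvd

theorem triangular_add_one (j : ℤ) : (triangular (j + 1) : ℤ) = triangular j + (j + 1) := by
  linarith [two_mul_triangular j, two_mul_triangular (j + 1)]

theorem triangular_neg (j : ℤ) : triangular (-j) = triangular (j - 1) := by
  zify
  linarith [two_mul_triangular (-j), two_mul_triangular (j - 1)]

theorem pow_triangular_add_one {K : Type*} [Field K] {q : K} (hq : q ≠ 0) (j : ℤ) :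
    q ^ triangular (j + 1) = q ^ triangular j * q ^ (j + 1) := by
  rw [← zpow_natCast, ← zpow_natCast, triangular_add_one, zpow_add₀ hq]

theorem summable_pow_triangular_mul_pow {r w : ℝ} (hr0 : 0 < r) (hr : r < 1) (hw : 0 < w) :
    Summable fun n : ℕ => r ^ triangular n * w ^ n := by
  refine summable_of_ratio_test_tendsto_lt_one (l := 0) one_pos
    (.of_forall fun n => by positivity) ?_
  have hlim : Tendsto (fun n : ℕ => r ^ (n + 1) * w) atTop (𝓝 0) := by
    simpa using ((tendsto_pow_atTop_nhds_zero_of_lt_one hr0.le hr).comp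
      (tendsto_add_atTop_nat 1)).mul_const w
  refine hlim.congr fun n => ?_
  have hsucc : r ^ triangular ((n + 1 : ℕ) : ℤ) = r ^ triangular n * r ^ (n + 1) := by
    exact_mod_cast pow_triangular_add_one hr0.ne' n
  rw [hsucc, Real.norm_of_nonneg (by positivity), Real.norm_of_nonneg (by positivity)]
  field_simp
  ring

theorem summable_pow_triangular_mul_zpow {r w : ℝ} (hr0 : 0 < r) (hr : r < 1) (hw : 0 < w) :
    Summable fun j : ℤ => r ^ triangular j * w ^ j := by
  refine .of_nat_of_neg_add_one ?_ ?_
  · simpa only [zpow_natCast] using summable_pow_triangular_mul_pow hr0 hr hw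
  · refine ((summable_pow_triangular_mul_pow hr0 hr (inv_pos.2 hw)).mul_right w⁻¹).congr
      fun n => ?_
    rw [triangular_neg, add_sub_cancel_right, zpow_neg, zpow_add_one₀ hw.ne', zpow_natCast,
      inv_pow]
    field_simp

theorem abs_intCast_le_two_zpow_add (j : ℤ) : |(j : ℝ)| ≤ 2 ^ j + 2⁻¹ ^ j := by
  have hnat : ∀ n : ℕ, (n : ℝ) ≤ 2 ^ n := fun n => by exact_mod_cast n.lt_two_pow_self.le
  obtain ⟨n, rfl | rfl⟩ := j.eq_nat_or_neg
  · simpa using (hnat n).trans (le_add_of_nonneg_right (by positivity))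
  · simpa using (hnat n).trans (le_add_of_nonneg_left (by positivity))

theorem summable_pow_triangular_mul_abs {r : ℝ} (hr0 : 0 < r) (hr : r < 1) :
    Summable fun j : ℤ => r ^ triangular j * |(j : ℝ)| := by
  refine .of_nonneg_of_le (fun j => by positivity) (fun j => ?_)
    ((summable_pow_triangular_mul_zpow hr0 hr (w := 2) (by norm_num)).add
      (summable_pow_triangular_mul_zpow hr0 hr (w := 2⁻¹) (by norm_num)))
  rw [← mul_add]
  gcongr
  exact abs_intCast_le_two_zpow_add j

/-- The coefficient `(-1)^j q^(j (j + 1) / 2)` of `z^j` in Jacobi's theta series. -/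
noncomputable def thetaCoeff {K : Type*} [Field K] (q : K) (j : ℤ) : K :=
  (-1) ^ j * q ^ triangular j

theorem thetaCoeff_add_one {K : Type*} [Field K] {q : K} (hq : q ≠ 0) (j : ℤ) :
    thetaCoeff q (j + 1) = -thetaCoeff q j * q ^ (j + 1) := by
  rw [thetaCoeff, thetaCoeff, pow_triangular_add_one hq,
    zpow_add_one₀ (neg_ne_zero.2 one_ne_zero)]
  ring

/-- The reciprocal `1 / (q; q)_k`, extended by zero to negative `k`. -/
noncomputable def qFactorialInv {𝕜 : Type*} [NormedField 𝕜] (q : 𝕜) (k : ℤ) : 𝕜 :=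
  if 0 ≤ k then (qFactorial q k.toNat)⁻¹ else 0

/-- The central Gaussian binomial coefficient `[2n choose n + j]` in base `q`, which vanishes
for `n < |j|`. -/
noncomputable def centralQBinom {𝕜 : Type*} [NormedField 𝕜] (q : 𝕜) (n : ℕ) (j : ℤ) : 𝕜 :=
  qFactorial q (2 * n) * qFactorialInv q (n + j) * qFactorialInv q (n - j)

/-- The coefficient of `z^j` in `∏_{k < n} (1 - z q^(k + 1)) (1 - z⁻¹ q^k)`. -/
noncomputable def finiteThetaCoeff {𝕜 : Type*} [NormedField 𝕜] (q : 𝕜) (n : ℕ) (j : ℤ) : 𝕜 :=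
  centralQBinom q n j * thetaCoeff q j

section FiniteTripleProduct

variable {𝕜 : Type*} [NormedField 𝕜] {q : 𝕜}

theorem qFactorialInv_sub_one (hq : ‖q‖ < 1) (k : ℤ) :
    qFactorialInv q (k - 1) = (1 - q ^ k) * qFactorialInv q k := by
  rcases lt_trichotomy k 0 with hk | rfl | hk
  · simp [qFactorialInv, hk.not_ge, show ¬1 ≤ k by lia]
  · simp [qFactorialInv]
  · obtain ⟨n, rfl⟩ : ∃ n : ℕ, k = n + 1 := ⟨(k - 1).toNat, by lia⟩
    have hfactor := one_sub_ne_zero_of_norm_lt_one (norm_pow_lt_one hq n.succ_ne_zero)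
    have htoNat : ((n : ℤ) + 1).toNat = n + 1 := rfl
    rw [add_sub_cancel_right, qFactorialInv, qFactorialInv, if_pos n.cast_nonneg, if_pos hk.le,
      htoNat, Int.toNat_natCast, qFactorial_succ, mul_inv_rev, ← Nat.cast_add_one, zpow_natCast,
      mul_inv_cancel_left₀ hfactor]

theorem centralQBinom_succ (h0 : q ≠ 0) (hq : ‖q‖ < 1) (n : ℕ) (j : ℤ) :
    centralQBinom q (n + 1) j = (1 + q ^ (2 * n + 1)) * centralQBinom q n j
      + q ^ ((n : ℤ) + 1 - j) * centralQBinom q n (j - 1)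
      + q ^ ((n : ℤ) + 1 + j) * centralQBinom q n (j + 1) := by
  have hplus := qFactorialInv_sub_one hq ((n : ℤ) + j + 1)
  have hminus := qFactorialInv_sub_one hq ((n : ℤ) - j + 1)
  have hpow : q ^ (2 * n) = q ^ ((n : ℤ) + j) * q ^ ((n : ℤ) - j) := by
    rw [← zpow_add₀ h0, ← zpow_natCast]
    congr 1
    push_cast
    ring
  rw [add_sub_cancel_right, zpow_add_one₀ h0] at hplus hminus
  simp only [centralQBinom, mul_add_one, qFactorial_succ, Nat.cast_add_one, pow_succ, hpow]
  rw [show (n : ℤ) + (j - 1) = n + j - 1 by ring, show (n : ℤ) - (j - 1) = n - j + 1 by ring,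
    show (n : ℤ) + (j + 1) = n + j + 1 by ring, show (n : ℤ) - (j + 1) = n - j - 1 by ring,
    show (n : ℤ) + 1 + j = n + j + 1 by ring, show (n : ℤ) + 1 - j = n - j + 1 by ring,
    qFactorialInv_sub_one hq (n + j), qFactorialInv_sub_one hq (n - j), hplus, hminus,
    zpow_add_one₀ h0, zpow_add_one₀ h0]
  ring

theorem finiteThetaCoeff_zero (q : 𝕜) (j : ℤ) :
    finiteThetaCoeff q 0 j = if j = 0 then 1 else 0 := by
  rcases lt_trichotomy j 0 with hj | rfl | hj
  · simp [finiteThetaCoeff, centralQBinom, qFactorialInv, hj.not_ge, hj.ne]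
  · simp [finiteThetaCoeff, centralQBinom, qFactorialInv, qFactorial, thetaCoeff, triangular]
  · simp [finiteThetaCoeff, centralQBinom, qFactorialInv, hj.not_ge, hj.ne']

theorem finiteThetaCoeff_succ (h0 : q ≠ 0) (hq : ‖q‖ < 1) (n : ℕ) (j : ℤ) :
    finiteThetaCoeff q (n + 1) j = (1 + q ^ (2 * n + 1)) * finiteThetaCoeff q n j
      - q ^ n * finiteThetaCoeff q n (j + 1) - q ^ (n + 1) * finiteThetaCoeff q n (j - 1) := by
  have hpred : q ^ ((n : ℤ) + 1 - j) * thetaCoeff q j = -q ^ (n + 1) * thetaCoeff q (j - 1) := by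
    have hj := thetaCoeff_add_one h0 (j - 1)
    have hqj := zpow_ne_zero j h0
    rw [sub_add_cancel] at hj
    rw [hj, zpow_sub₀ h0, ← Nat.cast_add_one, zpow_natCast]
    field_simp
  have hsucc : q ^ ((n : ℤ) + 1 + j) * thetaCoeff q j = -q ^ n * thetaCoeff q (j + 1) := by
    rw [thetaCoeff_add_one h0, show (n : ℤ) + 1 + j = n + (j + 1) by ring, zpow_add₀ h0,
      zpow_natCast]
    ring
  rw [finiteThetaCoeff, centralQBinom_succ h0 hq]
  simp only [finiteThetaCoeff]
  linear_combination centralQBinom q n (j - 1) * hpred + centralQBinom q n (j + 1) * hsucc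

theorem hasSum_finiteThetaCoeff_mul_zpow {z : 𝕜} (h0 : q ≠ 0) (hq : ‖q‖ < 1) (hz : z ≠ 0)
    (n : ℕ) : HasSum (fun j : ℤ => finiteThetaCoeff q n j * z ^ j)
      (∏ k ∈ Finset.range n, ((1 - z * q * q ^ k) * (1 - z⁻¹ * q ^ k))) := by
  induction n with
  | zero =>
    simp only [finiteThetaCoeff_zero, Finset.range_zero, Finset.prod_empty]
    simpa using hasSum_single (f := fun j : ℤ => (if j = 0 then 1 else 0) * z ^ j) 0
      fun j hj => by simp [hj]
  | succ n ih =>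
    have hright := (Equiv.addRight (1 : ℤ)).hasSum_iff.2 ih
    have hleft := (Equiv.subRight (1 : ℤ)).hasSum_iff.2 ih
    have hfactor (P : 𝕜) : P * ((1 - z * q * q ^ n) * (1 - z⁻¹ * q ^ n)) =
        (1 + q ^ (2 * n + 1)) * P - z⁻¹ * q ^ n * P - z * q * q ^ n * P := by
      field_simp
      ring
    rw [Finset.prod_range_succ, hfactor]
    refine (((ih.mul_left _).sub (hright.mul_left _)).sub (hleft.mul_left _)).congr_fun
      fun j => ?_
    simp only [Function.comp_apply, Equiv.coe_addRight, Equiv.subRight_apply]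
    rw [finiteThetaCoeff_succ h0 hq, zpow_add_one₀ hz, zpow_sub_one₀ hz]
    field_simp
    ring

theorem hasSum_finiteThetaCoeff_succ_mul_intCast (h0 : q ≠ 0) (hq : ‖q‖ < 1) {n : ℕ} {a b : 𝕜}
    (ha : HasSum (finiteThetaCoeff q n) a)
    (hb : HasSum (fun j : ℤ => finiteThetaCoeff q n j * j) b) :
    HasSum (fun j : ℤ => finiteThetaCoeff q (n + 1) j * j)
      ((1 + q ^ (2 * n + 1)) * b - q ^ n * (b - a) - q ^ (n + 1) * (b + a)) := by
  have haddRight {f : ℤ → 𝕜} {s : 𝕜} := (Equiv.addRight (1 : ℤ)).hasSum_iff (f := f) (a := s)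
  have hsubRight {f : ℤ → 𝕜} {s : 𝕜} := (Equiv.subRight (1 : ℤ)).hasSum_iff (f := f) (a := s)
  refine (((hb.mul_left (1 + q ^ (2 * n + 1))).sub
    ((haddRight.2 (hb.sub ha)).mul_left (q ^ n))).sub
    ((hsubRight.2 (hb.add ha)).mul_left (q ^ (n + 1)))).congr_fun fun j => ?_
  simp only [Function.comp_apply, Equiv.coe_addRight, Equiv.subRight_apply]
  rw [finiteThetaCoeff_succ h0 hq]
  push_cast
  ring

theorem hasSum_finiteThetaCoeff_mul_intCast (h0 : q ≠ 0) (hq : ‖q‖ < 1) (n : ℕ) :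
    HasSum (fun j : ℤ => finiteThetaCoeff q (n + 1) j * j)
      (qFactorial q (n + 1) * qFactorial q n) := by
  have hzeroth (m : ℕ) := hasSum_finiteThetaCoeff_mul_zpow h0 hq one_ne_zero m
  simp only [one_zpow, mul_one, inv_one] at hzeroth
  induction n with
  | zero =>
    have hfirst : HasSum (fun j : ℤ => finiteThetaCoeff q 0 j * j) 0 := by
      simp only [finiteThetaCoeff_zero]
      convert hasSum_zero using 2 with j
      split_ifs with hj <;> simp [hj]
    convert hasSum_finiteThetaCoeff_succ_mul_intCast h0 hq (hzeroth 0) hfirst using 1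
    simp [qFactorial]
  | succ n ih =>
    have hvanish := hzeroth (n + 1)
    rw [Finset.prod_eq_zero (Finset.mem_range.2 n.succ_pos) (by simp)] at hvanish
    convert hasSum_finiteThetaCoeff_succ_mul_intCast h0 hq hvanish ih using 1
    rw [qFactorial_succ q (n + 1), qFactorial_succ q n]
    ring

end FiniteTripleProduct

section TripleProduct

variable {𝕜 : Type*} [NormedField 𝕜] {q : 𝕜}

theorem norm_thetaCoeff_mul (q : 𝕜) (j : ℤ) (x : 𝕜) :
    ‖thetaCoeff q j * x‖ = ‖q‖ ^ triangular j * ‖x‖ := by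
  simp [thetaCoeff]

theorem norm_intCast_le_abs (j : ℤ) : ‖(j : 𝕜)‖ ≤ |(j : ℝ)| := by
  simpa [Int.norm_eq_abs] using norm_zsmul_le j (1 : 𝕜)

variable [CompleteSpace 𝕜]

theorem tendsto_qFactorialInv (hq : ‖q‖ < 1) (j : ℤ) :
    Tendsto (fun n : ℕ => qFactorialInv q (n + j)) atTop (𝓝 (eulerFunction q)⁻¹) := by
  have hindex : Tendsto (fun n : ℕ => ((n : ℤ) + j).toNat) atTop atTop := by
    refine tendsto_atTop.2 fun b => ?_
    filter_upwards [eventually_ge_atTop (b + j.natAbs)] with n hn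
    lia
  refine (((tendsto_qFactorial hq).comp hindex).inv₀ (eulerFunction_ne_zero hq)).congr' ?_
  filter_upwards [eventually_ge_atTop j.natAbs] with n hn
  rw [qFactorialInv, if_pos (by lia), Function.comp_apply]

theorem tendsto_centralQBinom (hq : ‖q‖ < 1) (j : ℤ) :
    Tendsto (fun n : ℕ => centralQBinom q n j) atTop (𝓝 (eulerFunction q)⁻¹) := by
  have hdouble : Tendsto (fun n : ℕ => 2 * n) atTop atTop :=
    tendsto_id.const_mul_atTop' two_pos
  have h := (((tendsto_qFactorial hq).comp hdouble).mul (tendsto_qFactorialInv hq j)).mul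
    (tendsto_qFactorialInv hq (-j))
  rwa [mul_inv_cancel₀ (eulerFunction_ne_zero hq), one_mul] at h

theorem exists_norm_centralQBinom_le (hq : ‖q‖ < 1) : ∃ C, ∀ n j, ‖centralQBinom q n j‖ ≤ C := by
  obtain ⟨A, hA⟩ := (tendsto_qFactorial hq).norm.bddAbove_range
  obtain ⟨B, hB⟩ := ((tendsto_qFactorial hq).inv₀ (eulerFunction_ne_zero hq)).norm.bddAbove_range
  replace hA n : ‖qFactorial q n‖ ≤ A := hA ⟨n, rfl⟩
  replace hB n : ‖(qFactorial q n)⁻¹‖ ≤ B := hB ⟨n, rfl⟩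
  have hA0 : 0 ≤ A := (norm_nonneg _).trans (hA 0)
  have hB0 : 0 ≤ B := (norm_nonneg _).trans (hB 0)
  have hinv k : ‖qFactorialInv q k‖ ≤ B := by
    rw [qFactorialInv]
    split_ifs
    exacts [hB _, norm_zero.trans_le hB0]
  refine ⟨A * B * B, fun n j => ?_⟩
  rw [centralQBinom, norm_mul, norm_mul]
  gcongr
  exacts [hA _, hinv _, hinv _]

/-- Passage to the limit in a weighted finite triple product, by dominated convergence. -/
theorem hasSum_thetaCoeff_mul_of_tendsto (hq : ‖q‖ < 1) {w : ℤ → 𝕜} {s : ℕ → 𝕜} {S : 𝕜}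
    (hw : Summable fun j => ‖q‖ ^ triangular j * ‖w j‖)
    (hs : ∀ᶠ n in atTop, HasSum (fun j => finiteThetaCoeff q n j * w j) (s n))
    (hS : Tendsto s atTop (𝓝 S)) :
    HasSum (fun j => thetaCoeff q j * w j) (eulerFunction q * S) := by
  obtain ⟨C, hC⟩ := exists_norm_centralQBinom_le hq
  have hlim : Tendsto (fun n => ∑' j, centralQBinom q n j * (thetaCoeff q j * w j)) atTop
      (𝓝 (∑' j, (eulerFunction q)⁻¹ * (thetaCoeff q j * w j))) := by
    refine tendsto_tsum_of_dominated_convergence (hw.mul_left C)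
      (fun j => (tendsto_centralQBinom hq j).mul_const _) (.of_forall fun n j => ?_)
    rw [norm_mul, norm_thetaCoeff_mul]
    gcongr
    exact hC n j
  have hSlim : Tendsto s atTop (𝓝 (∑' j, (eulerFunction q)⁻¹ * (thetaCoeff q j * w j))) := by
    refine hlim.congr' ?_
    filter_upwards [hs] with n hn
    simpa only [finiteThetaCoeff, mul_assoc] using hn.tsum_eq
  have hsum : Summable fun j => thetaCoeff q j * w j :=
    .of_norm (hw.congr fun j => (norm_thetaCoeff_mul q j _).symm)
  rw [tendsto_nhds_unique hS hSlim, tsum_mul_left,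
    mul_inv_cancel_left₀ (eulerFunction_ne_zero hq)]
  exact hsum.hasSum

theorem jacobi_triple_product_s7 {z : 𝕜} (h0 : q ≠ 0) (hq : ‖q‖ < 1) (hz : z ≠ 0) :
    HasSum (fun j : ℤ => thetaCoeff q j * z ^ j)
      (eulerFunction q * (qPochhammer (z * q) q * qPochhammer z⁻¹ q)) := by
  refine hasSum_thetaCoeff_mul_of_tendsto hq ?_
    (.of_forall (hasSum_finiteThetaCoeff_mul_zpow h0 hq hz)) ?_
  · simpa only [norm_zpow] using
      summable_pow_triangular_mul_zpow (norm_pos_iff.2 h0) hq (norm_pos_iff.2 hz)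
  · simpa only [Finset.prod_mul_distrib] using
      (tendsto_prod_qPochhammer (z * q) hq).mul (tendsto_prod_qPochhammer z⁻¹ hq)

theorem jacobi_eulerFunction_cube (h0 : q ≠ 0) (hq : ‖q‖ < 1) :
    HasSum (fun j : ℤ => thetaCoeff q j * j) (eulerFunction q ^ 3) := by
  rw [pow_succ', sq]
  refine hasSum_thetaCoeff_mul_of_tendsto hq ?_
    (s := fun n => qFactorial q n * qFactorial q (n - 1)) ?_ ?_
  · refine (summable_pow_triangular_mul_abs (norm_pos_iff.2 h0) hq).of_nonneg_of_le
      (fun j => by positivity) fun j => ?_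
    gcongr
    exact norm_intCast_le_abs j
  · filter_upwards [eventually_ge_atTop 1] with n hn
    obtain ⟨m, rfl⟩ := Nat.exists_eq_add_of_le' hn
    exact hasSum_finiteThetaCoeff_mul_intCast h0 hq m
  · exact (tendsto_qFactorial hq).mul ((tendsto_qFactorial hq).comp (tendsto_sub_atTop_nat 1))

end TripleProduct

/-- The exponents `e` grow fast enough for `∑ q^(e n)` to converge absolutely for all `|q| < 1`. -/
def SummableOnUnitDisc {ι : Type*} (e : ι → ℕ) : Prop :=
  ∀ r : ℝ, 0 < r → r < 1 → Summable fun n => r ^ e n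

/-- The series `∑ q^(e n)`, the common form of the theta functions `φ` and `ψ`. -/
noncomputable def lacunarySeries {ι 𝕜 : Type*} [NormedField 𝕜] (e : ι → ℕ) (q : 𝕜) : 𝕜 :=
  ∑' n, q ^ e n

/-- The image `∑ e(n) q^(e n)` of `lacunarySeries e` under the Euler operator `q d/dq`. -/
noncomputable def lacunarySeriesEulerDeriv {ι 𝕜 : Type*} [NormedField 𝕜] (e : ι → ℕ) (q : 𝕜) :
    𝕜 :=
  ∑' n, (e n : 𝕜) * q ^ e n

/-- Squares of integers, as natural numbers. -/
def intSq (n : ℤ) : ℕ := n.natAbs ^ 2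

/-- Ramanujan's theta function `φ(q) = ∑_{n ∈ ℤ} q^(n²)`. -/
noncomputable abbrev thetaPhi {𝕜 : Type*} [NormedField 𝕜] (q : 𝕜) : 𝕜 := lacunarySeries intSq q

/-- `∑_{n ∈ ℤ} q^(n (n + 1) / 2)`. Each triangular number occurs twice, so this is twice
Ramanujan's theta function `ψ(q)`. -/
noncomputable abbrev thetaTwoPsi {𝕜 : Type*} [NormedField 𝕜] (q : 𝕜) : 𝕜 :=
  lacunarySeries triangular q

section LacunarySeries

variable {ι 𝕜 : Type*} [NormedField 𝕜] {e : ι → ℕ} {q : 𝕜}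

theorem SummableOnUnitDisc.summable_norm_pow (he : SummableOnUnitDisc e) (hq : ‖q‖ < 1) :
    Summable fun n => ‖q ^ e n‖ := by
  obtain ⟨s, hqs, hs1⟩ := exists_between hq
  refine (he s ((norm_nonneg q).trans_lt hqs) hs1).of_nonneg_of_le (fun n => norm_nonneg _)
    fun n => ?_
  rw [norm_pow]
  gcongr

theorem SummableOnUnitDisc.summable_natCast_mul_pow (he : SummableOnUnitDisc e) {r : ℝ}
    (h0 : 0 ≤ r) (h1 : r < 1) : Summable fun n => (e n : ℝ) * r ^ e n := by
  obtain ⟨s, hrs, hs1⟩ := exists_between h1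
  have hs0 : 0 < s := h0.trans_lt hrs
  obtain ⟨C, hC⟩ := (tendsto_self_mul_const_pow_of_lt_one (div_nonneg h0 hs0.le)
    ((div_lt_one hs0).2 hrs)).bddAbove_range
  refine ((he s hs0 hs1).mul_left C).of_nonneg_of_le (fun n => by positivity) fun n => ?_
  calc (e n : ℝ) * r ^ e n = e n * (r / s) ^ e n * s ^ e n := by
        rw [div_pow, mul_assoc, div_mul_cancel₀ _ (by positivity)]
    _ ≤ C * s ^ e n := by
        gcongr
        exact hC ⟨e n, rfl⟩

theorem SummableOnUnitDisc.summable_norm_natCast_mul_pow (he : SummableOnUnitDisc e)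
    (hq : ‖q‖ < 1) : Summable fun n => ‖(e n : 𝕜) * q ^ e n‖ := by
  refine (he.summable_natCast_mul_pow (norm_nonneg q) hq).of_nonneg_of_le
    (fun n => norm_nonneg _) fun n => ?_
  rw [norm_mul, norm_pow]
  gcongr
  simpa using Nat.norm_cast_le (α := 𝕜) (e n)

theorem summableOnUnitDisc_triangular : SummableOnUnitDisc triangular := fun r h0 h1 => by
  simpa only [one_zpow, mul_one] using summable_pow_triangular_mul_zpow h0 h1 one_pos

theorem intCast_intSq (n : ℤ) : (intSq n : ℤ) = n ^ 2 := by
  rw [intSq, Nat.cast_pow, Int.natCast_natAbs, sq_abs]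

theorem summableOnUnitDisc_intSq : SummableOnUnitDisc intSq := fun r h0 h1 => by
  refine (summable_pow_triangular_mul_zpow (r := r ^ 2) (w := r⁻¹) (by positivity)
    (pow_lt_one₀ h0.le h1 two_ne_zero) (by positivity)).congr fun n => ?_
  rw [← pow_mul, ← zpow_natCast, ← zpow_natCast, inv_zpow', ← zpow_add₀ h0.ne', Nat.cast_mul,
    Nat.cast_two, two_mul_triangular, intCast_intSq]
  ring_nf

theorem neg_pow_intSq (q : 𝕜) (n : ℤ) : (-q) ^ intSq n = (-1) ^ n * q ^ intSq n := by
  rw [neg_pow]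
  congr 1
  rcases Int.even_or_odd n with hn | hn
  · rw [hn.neg_one_zpow, intSq, ((Int.natAbs_even.2 hn).pow_of_ne_zero two_ne_zero).neg_one_pow]
  · rw [hn.neg_one_zpow, intSq, (Int.natAbs_odd.2 hn).pow.neg_one_pow]

end LacunarySeries

/-- Ramanujan's general theta function
`f(a, b) = ∑_{n ∈ ℤ} a^(n (n + 1) / 2) b^(n (n - 1) / 2)`. -/
noncomputable def ramanujanTheta {𝕜 : Type*} [NormedField 𝕜] (a b : 𝕜) : 𝕜 :=
  ∑' n : ℤ, a ^ triangular n * b ^ triangular (n - 1)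

section RamanujanTheta

variable {𝕜 : Type*} [NormedField 𝕜] {a b q : 𝕜}

theorem ramanujanTheta_comm (a b : 𝕜) : ramanujanTheta a b = ramanujanTheta b a := by
  rw [ramanujanTheta, ← (Equiv.neg ℤ).tsum_eq]
  refine tsum_congr fun n => ?_
  rw [Equiv.neg_apply, triangular_neg, ← neg_add', triangular_neg, add_sub_cancel_right, mul_comm]

theorem ramanujanTheta_self (q : 𝕜) : ramanujanTheta q q = thetaPhi q := by
  refine tsum_congr fun n => ?_
  rw [← pow_add]
  congr 1
  zify
  linarith [two_mul_triangular n, two_mul_triangular (n - 1), intCast_intSq n]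

theorem ramanujanTheta_one_right (q : 𝕜) : ramanujanTheta q 1 = thetaTwoPsi q :=
  tsum_congr fun n => by rw [one_pow, mul_one]

theorem ramanujanTheta_term_eq (ha : a ≠ 0) (hb : b ≠ 0) (n : ℤ) :
    a ^ triangular n * b ^ triangular (n - 1) = thetaCoeff (a * b) n * (-b⁻¹) ^ n := by
  have hsucc := pow_triangular_add_one hb (n - 1)
  rw [sub_add_cancel] at hsucc
  have hbn := zpow_ne_zero n hb
  rw [thetaCoeff, mul_pow, hsucc, ← neg_one_mul b⁻¹, mul_zpow, inv_zpow]
  have hsign : (-1 : 𝕜) ^ n * (-1) ^ n = 1 := by rw [← mul_zpow, neg_mul_neg, one_mul, one_zpow]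
  field_simp
  linear_combination -hsign

theorem summable_norm_ramanujanTheta (ha : a ≠ 0) (hb : b ≠ 0) (hab : ‖a * b‖ < 1) :
    Summable fun n : ℤ => ‖a ^ triangular n * b ^ triangular (n - 1)‖ := by
  refine (summable_pow_triangular_mul_zpow (norm_pos_iff.2 (mul_ne_zero ha hb)) hab
    (norm_pos_iff.2 (inv_ne_zero hb))).congr fun n => ?_
  rw [ramanujanTheta_term_eq ha hb, norm_thetaCoeff_mul, norm_zpow, norm_neg]

variable [CompleteSpace 𝕜]

theorem ramanujanTheta_eq_prod (ha : a ≠ 0) (hb : b ≠ 0) (hab : ‖a * b‖ < 1) :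
    ramanujanTheta a b =
      eulerFunction (a * b) * (qPochhammer (-a) (a * b) * qPochhammer (-b) (a * b)) := by
  have hprod := (jacobi_triple_product_s7 (mul_ne_zero ha hb) hab
    (neg_ne_zero.2 (inv_ne_zero hb))).tsum_eq
  rwa [inv_neg, inv_inv, neg_mul, mul_comm a b, inv_mul_cancel_left₀ hb, mul_comm b a,
    ← tsum_congr (ramanujanTheta_term_eq ha hb)] at hprod

theorem qPochhammer_self_sq (hq : ‖q‖ < 1) :
    qPochhammer q (q ^ 2) = eulerFunction q / eulerFunction (q ^ 2) := by
  have hsplit := qPochhammer_eq_prod_residues q hq two_ne_zero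
  rw [Finset.prod_range_succ, Finset.prod_range_one, pow_zero, mul_one, pow_one, ← sq] at hsplit
  exact (eq_div_iff (eulerFunction_ne_zero (norm_pow_lt_one hq two_ne_zero))).2 hsplit.symm

theorem qPochhammer_neg_self (hq : ‖q‖ < 1) :
    qPochhammer (-q) q = eulerFunction (q ^ 2) / eulerFunction q :=
  (eq_div_iff (eulerFunction_ne_zero hq)).2
    ((mul_comm _ _).trans (qPochhammer_mul_qPochhammer_neg q hq))

theorem thetaPhi_neg_eq (h0 : q ≠ 0) (hq : ‖q‖ < 1) :
    thetaPhi (-q) = eulerFunction q ^ 2 / eulerFunction (q ^ 2) := by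
  have h2 := norm_pow_lt_one hq two_ne_zero
  have hE := eulerFunction_ne_zero h2
  have hneg : -q * -q = q ^ 2 := by ring
  rw [← ramanujanTheta_self, ramanujanTheta_eq_prod (neg_ne_zero.2 h0) (neg_ne_zero.2 h0)
    (by rwa [hneg]), hneg, neg_neg, qPochhammer_self_sq hq]
  field_simp

theorem thetaTwoPsi_eq (h0 : q ≠ 0) (hq : ‖q‖ < 1) :
    thetaTwoPsi q = 2 * eulerFunction (q ^ 2) ^ 2 / eulerFunction q := by
  have hE := eulerFunction_ne_zero hq
  rw [← ramanujanTheta_one_right, ramanujanTheta_eq_prod h0 one_ne_zero (by rwa [mul_one]),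
    mul_one, qPochhammer_eq_one_sub_mul (-1) hq, neg_one_mul, qPochhammer_neg_self hq]
  field_simp
  ring

end RamanujanTheta

section FiveDissection

-- The vectors `(2m + n, 2n - m)` form the sublattice of index five on which `2u ≡ v`, and the
-- points `(r i, s i)` represent its cosets.
theorem fiveDissection_bijective {r s : Fin 5 → ℤ} (hrs : ∀ i, (2 * r i - s i) % 5 = (i : ℕ)) :
    Function.Bijective fun x : Fin 5 × ℤ × ℤ =>
      (2 * x.2.1 + x.2.2 + r x.1, 2 * x.2.2 - x.2.1 + s x.1) := by
  constructor
  · rintro ⟨i, m, n⟩ ⟨i', m', n'⟩ heq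
    simp only [Prod.mk.injEq] at heq
    obtain rfl : i = i' := Fin.ext (by have := hrs i; have := hrs i'; omega)
    obtain rfl : m = m' := by omega
    obtain rfl : n = n' := by omega
    rfl
  · rintro ⟨u, v⟩
    let i : Fin 5 := ⟨((2 * u - v) % 5).toNat, by omega⟩
    have hi : (2 * r i - s i) % 5 = (2 * u - v) % 5 := (hrs i).trans (by simp only [i]; omega)
    refine ⟨⟨i, (2 * u - v - (2 * r i - s i)) / 5,
      u - r i - 2 * ((2 * u - v - (2 * r i - s i)) / 5)⟩, ?_⟩
    ext <;> dsimp only <;> omega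

theorem tsum_eq_sum_fiveDissection {E : Type*} [NormedAddCommGroup E] [CompleteSpace E]
    {r s : Fin 5 → ℤ} (hrs : ∀ i, (2 * r i - s i) % 5 = (i : ℕ)) {F : ℤ × ℤ → E}
    (hF : Summable F) :
    ∑' p, F p = ∑ i, ∑' p : ℤ × ℤ, F (2 * p.1 + p.2 + r i, 2 * p.2 - p.1 + s i) := by
  let e := Equiv.ofBijective _ (fiveDissection_bijective hrs)
  calc ∑' p, F p = ∑' x, (F ∘ e) x := (e.tsum_eq F).symm
    _ = ∑ i, ∑' p : ℤ × ℤ, (F ∘ e) (i, p) := by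
        rw [(e.summable_iff.2 hF).tsum_prod, tsum_fintype]

theorem triangular_add_triangular_dissection (r s m n : ℤ) :
    (triangular (2 * m + n + r) + triangular (2 * n - m + s) : ℤ) =
      triangular r + triangular s
        + ((3 + (2 * r - s)) * triangular m + (2 - (2 * r - s)) * triangular (m - 1))
        + ((4 + (r + 2 * s)) * triangular n + (1 - (r + 2 * s)) * triangular (n - 1)) := by
  refine mul_left_cancel₀ two_ne_zero ?_
  linear_combination two_mul_triangular (2 * m + n + r)
    + two_mul_triangular (2 * n - m + s) - two_mul_triangular r - two_mul_triangular s
    - (3 + (2 * r - s)) * two_mul_triangular m - (2 - (2 * r - s)) * two_mul_triangular (m - 1)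
    - (4 + (r + 2 * s)) * two_mul_triangular n - (1 - (r + 2 * s)) * two_mul_triangular (n - 1)

variable {𝕜 : Type*} [NormedField 𝕜] {a b q : 𝕜}

theorem pow_triangular_mul_pow_triangular_dissection (ha : a ≠ 0) (r s m n : ℤ) :
    a ^ triangular (2 * m + n + r) * a ^ triangular (2 * n - m + s) =
      a ^ (triangular r + triangular s)
        * ((a ^ (3 + (2 * r - s))) ^ triangular m * (a ^ (2 - (2 * r - s))) ^ triangular (m - 1))
        * ((a ^ (4 + (r + 2 * s))) ^ triangular n
          * (a ^ (1 - (r + 2 * s))) ^ triangular (n - 1)) := by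
  simp only [← zpow_natCast, ← zpow_mul, ← zpow_add₀ ha, Nat.cast_add]
  rw [triangular_add_triangular_dissection]

theorem ramanujanTheta_term_mul_term_dissection (ha : a ≠ 0) (hb : b ≠ 0) (r s m n : ℤ) :
    (a ^ triangular (2 * m + n + r) * b ^ triangular (2 * m + n + r - 1))
        * (a ^ triangular (2 * n - m + s) * b ^ triangular (2 * n - m + s - 1)) =
      a ^ (triangular r + triangular s) * b ^ (triangular (r - 1) + triangular (s - 1))
        * (((a ^ (3 + (2 * r - s)) * b ^ (2 + (2 * r - s))) ^ triangular m
            * (a ^ (2 - (2 * r - s)) * b ^ (3 - (2 * r - s))) ^ triangular (m - 1))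
          * ((a ^ (4 + (r + 2 * s)) * b ^ (1 + (r + 2 * s))) ^ triangular n
            * (a ^ (1 - (r + 2 * s)) * b ^ (4 - (r + 2 * s))) ^ triangular (n - 1))) := by
  have hA := pow_triangular_mul_pow_triangular_dissection ha r s m n
  have hB := pow_triangular_mul_pow_triangular_dissection hb (r - 1) (s - 1) m n
  rw [show 3 + (2 * (r - 1) - (s - 1)) = 2 + (2 * r - s) by ring,
    show 2 - (2 * (r - 1) - (s - 1)) = 3 - (2 * r - s) by ring,
    show 4 + (r - 1 + 2 * (s - 1)) = 1 + (r + 2 * s) by ring,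
    show 1 - (r - 1 + 2 * (s - 1)) = 4 - (r + 2 * s) by ring, ← add_sub_assoc,
    ← add_sub_assoc] at hB
  rw [mul_mul_mul_comm, hA, hB]
  simp only [mul_pow]
  ring

theorem summable_norm_ramanujanTheta_zpow (ha : a ≠ 0) (hb : b ≠ 0) (hab : ‖a * b‖ < 1)
    {i j k l : ℤ} (hik : i + k = 5) (hjl : j + l = 5) :
    Summable fun n : ℤ =>
      ‖(a ^ i * b ^ j) ^ triangular n * (a ^ k * b ^ l) ^ triangular (n - 1)‖ := by
  have hfive : a ^ i * b ^ j * (a ^ k * b ^ l) = (a * b) ^ 5 := by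
    rw [mul_mul_mul_comm, ← zpow_add₀ ha, ← zpow_add₀ hb, hik, hjl, ← mul_zpow]
    exact zpow_natCast _ 5
  refine summable_norm_ramanujanTheta (mul_ne_zero (zpow_ne_zero i ha) (zpow_ne_zero j hb))
    (mul_ne_zero (zpow_ne_zero k ha) (zpow_ne_zero l hb)) ?_
  rw [hfive]
  exact norm_pow_lt_one hab (by norm_num)

theorem ramanujanTheta_sq_dissection [CompleteSpace 𝕜] (ha : a ≠ 0) (hb : b ≠ 0)
    (hab : ‖a * b‖ < 1) {r s : Fin 5 → ℤ} (hrs : ∀ i, (2 * r i - s i) % 5 = (i : ℕ)) :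
    ramanujanTheta a b ^ 2 = ∑ i,
      a ^ (triangular (r i) + triangular (s i))
        * b ^ (triangular (r i - 1) + triangular (s i - 1))
        * (ramanujanTheta (a ^ (3 + (2 * r i - s i)) * b ^ (2 + (2 * r i - s i)))
            (a ^ (2 - (2 * r i - s i)) * b ^ (3 - (2 * r i - s i)))
          * ramanujanTheta (a ^ (4 + (r i + 2 * s i)) * b ^ (1 + (r i + 2 * s i)))
            (a ^ (1 - (r i + 2 * s i)) * b ^ (4 - (r i + 2 * s i)))) := by
  have hsum := summable_norm_ramanujanTheta ha hb hab
  have hsum_mul := summable_mul_of_summable_norm hsum hsum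
  rw [sq, ramanujanTheta, tsum_mul_tsum_of_summable_norm hsum hsum,
    tsum_eq_sum_fiveDissection hrs hsum_mul]
  refine Finset.sum_congr rfl fun i _ => ?_
  have hsum_fst := summable_norm_ramanujanTheta_zpow ha hb hab
    (i := 3 + (2 * r i - s i)) (j := 2 + (2 * r i - s i)) (k := 2 - (2 * r i - s i))
    (l := 3 - (2 * r i - s i)) (by ring) (by ring)
  have hsum_snd := summable_norm_ramanujanTheta_zpow ha hb hab
    (i := 4 + (r i + 2 * s i)) (j := 1 + (r i + 2 * s i)) (k := 1 - (r i + 2 * s i))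
    (l := 4 - (r i + 2 * s i)) (by ring) (by ring)
  rw [ramanujanTheta, ramanujanTheta, tsum_mul_tsum_of_summable_norm hsum_fst hsum_snd,
    ← tsum_mul_left]
  exact tsum_congr fun p => ramanujanTheta_term_mul_term_dissection ha hb (r i) (s i) p.1 p.2

variable [CompleteSpace 𝕜]

theorem thetaPhi_sq_dissection (h0 : q ≠ 0) (hq : ‖q‖ < 1) :
    thetaPhi q ^ 2 = thetaPhi (q ^ 5) ^ 2
      + 4 * q * (ramanujanTheta q (q ^ 9) * ramanujanTheta (q ^ 3) (q ^ 7)) := by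
  have hsq := ramanujanTheta_sq_dissection h0 h0
    (by simpa using mul_lt_one_of_nonneg_of_lt_one_left (norm_nonneg q) hq hq.le)
    (r := ![0, 0, 1, -1, 0]) (s := ![0, -1, 0, 0, 1]) (by decide)
  simp only [ramanujanTheta_self, Fin.sum_univ_five, ← zpow_add₀ h0] at hsq
  have hfive : thetaPhi q ^ 2 =
      ramanujanTheta (q ^ 5) (q ^ 5) * ramanujanTheta (q ^ 5) (q ^ 5)
        + q * (ramanujanTheta (q ^ 7) (q ^ 3) * ramanujanTheta q (q ^ 9))
        + q * (ramanujanTheta (q ^ 9) q * ramanujanTheta (q ^ 7) (q ^ 3))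
        + q * (ramanujanTheta q (q ^ 9) * ramanujanTheta (q ^ 3) (q ^ 7))
        + q * (ramanujanTheta (q ^ 3) (q ^ 7) * ramanujanTheta (q ^ 9) q) := by
    simpa [triangular] using hsq
  rw [hfive, ramanujanTheta_self, ramanujanTheta_comm (q ^ 9), ramanujanTheta_comm (q ^ 7)]
  ring

theorem thetaTwoPsi_sq_dissection (h0 : q ≠ 0) (hq : ‖q‖ < 1) :
    thetaTwoPsi q ^ 2 = 4 * (ramanujanTheta q (q ^ 4) * ramanujanTheta (q ^ 2) (q ^ 3))
      + q * thetaTwoPsi (q ^ 5) ^ 2 := by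
  have hsq := ramanujanTheta_sq_dissection h0 one_ne_zero (by rwa [mul_one])
    (r := ![0, 0, 1, -1, -1]) (s := ![0, -1, 0, 0, -1]) (by decide)
  rw [ramanujanTheta_one_right, Fin.sum_univ_five] at hsq
  have hfive : thetaTwoPsi q ^ 2 =
      ramanujanTheta (q ^ 3) (q ^ 2) * ramanujanTheta (q ^ 4) q
        + ramanujanTheta (q ^ 4) q * ramanujanTheta (q ^ 2) (q ^ 3)
        + q * (ramanujanTheta (q ^ 5) 1 * ramanujanTheta (q ^ 5) 1)
        + ramanujanTheta q (q ^ 4) * ramanujanTheta (q ^ 3) (q ^ 2)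
        + ramanujanTheta (q ^ 2) (q ^ 3) * ramanujanTheta q (q ^ 4) := by
    simpa [triangular] using hsq
  rw [hfive, ramanujanTheta_one_right, ramanujanTheta_comm (q ^ 4), ramanujanTheta_comm (q ^ 3)]
  ring

theorem ramanujanTheta_mul_ramanujanTheta_modulus_five (h0 : q ≠ 0) (hq : ‖q‖ < 1) :
    ramanujanTheta q (q ^ 4) * ramanujanTheta (q ^ 2) (q ^ 3) =
      eulerFunction (q ^ 2) * eulerFunction (q ^ 5) ^ 3
        / (eulerFunction q * eulerFunction (q ^ 10)) := by
  have h5 := norm_pow_lt_one hq (n := 5) (by norm_num)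
  have hE1 := eulerFunction_ne_zero hq
  have hE5 := eulerFunction_ne_zero h5
  have hE10 := eulerFunction_ne_zero (norm_pow_lt_one hq (n := 10) (by norm_num))
  have hsplit := qPochhammer_eq_prod_residues (-q) hq (m := 5) (by norm_num)
  have hneg5 := qPochhammer_neg_self h5
  rw [qPochhammer_neg_self hq] at hsplit
  simp only [Finset.prod_range_succ, Finset.prod_range_zero, one_mul, neg_mul, ← pow_succ',
    zero_add, pow_one, Nat.reduceAdd, hneg5, ← pow_mul, Nat.reduceMul] at hsplit
  rw [ramanujanTheta_eq_prod h0 (pow_ne_zero 4 h0) (by rwa [← pow_succ']),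
    ramanujanTheta_eq_prod (pow_ne_zero 2 h0) (pow_ne_zero 3 h0) (by rwa [← pow_add]),
    ← pow_succ', ← pow_add]
  simp only [Nat.reduceAdd]
  field_simp at hsplit ⊢
  linear_combination -hsplit

theorem ramanujanTheta_mul_ramanujanTheta_modulus_ten (h0 : q ≠ 0) (hq : ‖q‖ < 1) :
    ramanujanTheta (-q) (-q ^ 9) * ramanujanTheta (-q ^ 3) (-q ^ 7) =
      eulerFunction q * eulerFunction (q ^ 10) ^ 3
        / (eulerFunction (q ^ 2) * eulerFunction (q ^ 5)) := by
  have h2 := norm_pow_lt_one hq two_ne_zero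
  have h5 := norm_pow_lt_one hq (n := 5) (by norm_num)
  have h10 := norm_pow_lt_one hq (n := 10) (by norm_num)
  have hE2 := eulerFunction_ne_zero h2
  have hE5 := eulerFunction_ne_zero h5
  have hE10 := eulerFunction_ne_zero h10
  have hsplit := qPochhammer_eq_prod_residues q h2 (m := 5) (by norm_num)
  have hself5 := qPochhammer_self_sq h5
  rw [qPochhammer_self_sq hq] at hsplit
  simp only [← pow_mul, Nat.reduceMul] at hself5
  simp only [Finset.prod_range_succ, Finset.prod_range_zero, one_mul, ← pow_succ',
    mul_one, zero_add, pow_one, Nat.reduceAdd, ← pow_mul, Nat.reduceMul,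
    hself5] at hsplit
  rw [ramanujanTheta_eq_prod (neg_ne_zero.2 h0) (neg_ne_zero.2 (pow_ne_zero 9 h0))
      (by rwa [neg_mul_neg, ← pow_succ']),
    ramanujanTheta_eq_prod (neg_ne_zero.2 (pow_ne_zero 3 h0)) (neg_ne_zero.2 (pow_ne_zero 7 h0))
      (by rwa [neg_mul_neg, ← pow_add]), neg_mul_neg, neg_mul_neg, ← pow_succ', ← pow_add]
  simp only [Nat.reduceAdd, neg_neg]
  field_simp at hsplit ⊢
  linear_combination -hsplit

theorem psi_eulerFunction_level_ten [NeZero (2 : 𝕜)] (h0 : q ≠ 0) (hq : ‖q‖ < 1) :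
    eulerFunction (q ^ 2) ^ 4 / eulerFunction q ^ 2
        - q * eulerFunction (q ^ 10) ^ 4 / eulerFunction (q ^ 5) ^ 2 =
      eulerFunction (q ^ 2) * eulerFunction (q ^ 5) ^ 3
        / (eulerFunction q * eulerFunction (q ^ 10)) := by
  have h5 := norm_pow_lt_one hq (n := 5) (by norm_num)
  have hsq := thetaTwoPsi_sq_dissection h0 hq
  rw [ramanujanTheta_mul_ramanujanTheta_modulus_five h0 hq, thetaTwoPsi_eq h0 hq,
    thetaTwoPsi_eq (pow_ne_zero 5 h0) h5, ← pow_mul] at hsq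
  refine mul_left_cancel₀ (pow_ne_zero 2 (two_ne_zero (α := 𝕜))) ?_
  linear_combination hsq

theorem phi_eulerFunction_level_ten (h0 : q ≠ 0) (hq : ‖q‖ < 1) :
    eulerFunction (q ^ 5) ^ 4 / eulerFunction (q ^ 10) ^ 2
        - eulerFunction q ^ 4 / eulerFunction (q ^ 2) ^ 2 =
      4 * q * eulerFunction q * eulerFunction (q ^ 10) ^ 3
        / (eulerFunction (q ^ 2) * eulerFunction (q ^ 5)) := by
  have h5 := norm_pow_lt_one hq (n := 5) (by norm_num)
  have hsq := thetaPhi_sq_dissection (neg_ne_zero.2 h0) (by rwa [norm_neg])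
  have hodd (n : ℕ) (hn : Odd n) : (-q) ^ n = -q ^ n := hn.neg_pow q
  rw [hodd 5 (by decide), hodd 9 (by decide), hodd 3 (by decide), hodd 7 (by decide),
    ramanujanTheta_mul_ramanujanTheta_modulus_ten h0 hq, thetaPhi_neg_eq h0 hq,
    thetaPhi_neg_eq (pow_ne_zero 5 h0) h5, ← pow_mul] at hsq
  linear_combination -hsq

end FiveDissection

section ParityLattice

variable {𝕜 : Type*} [NormedField 𝕜] {q : 𝕜}

theorem summable_norm_neg_one_zpow_mul {a : ℤ → 𝕜} (ha : Summable fun i => ‖a i‖) :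
    Summable fun i => ‖(-1) ^ i * a i‖ :=
  ha.congr fun i => by rw [norm_mul, norm_zpow, norm_neg, norm_one, one_zpow, one_mul]

theorem tsum_eq_zero_of_reflection_eq_neg [NeZero (2 : 𝕜)] {a : ℤ → 𝕜}
    (ha : ∀ i, a (-1 - i) = -a i) : ∑' i, a i = 0 := by
  have hneg : ∑' i, a i = -∑' i, a i := by
    rw [← tsum_neg, ← (Equiv.subLeft (-1 : ℤ)).tsum_eq]
    exact tsum_congr ha
  exact (mul_eq_zero.1 (show 2 * ∑' i, a i = 0 by linear_combination hneg)).resolve_left two_ne_zero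

-- The image of `(x, y) ↦ (x + y, x - y)` consists of the pairs of equal parity, which are
-- singled out by averaging over the sign character.
theorem two_mul_tsum_add_mul_sub [CompleteSpace 𝕜] {a b : ℤ → 𝕜} (ha : Summable fun i => ‖a i‖)
    (hb : Summable fun i => ‖b i‖) :
    2 * ∑' p : ℤ × ℤ, a (p.1 + p.2) * b (p.1 - p.2) =
      (∑' i, a i) * (∑' i, b i) + (∑' i, (-1) ^ i * a i) * ∑' i, (-1) ^ i * b i := by
  have ha' := summable_norm_neg_one_zpow_mul ha
  have hb' := summable_norm_neg_one_zpow_mul hb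
  have hsum := summable_mul_of_summable_norm ha hb
  have hsum' := summable_mul_of_summable_norm ha' hb'
  have hsign (i j : ℤ) : (-1 : 𝕜) ^ i * (-1) ^ j = (-1) ^ (i + j) :=
    (zpow_add₀ (neg_ne_zero.2 one_ne_zero) i j).symm
  have hinj : Function.Injective fun p : ℤ × ℤ => (p.1 + p.2, p.1 - p.2) := by
    rintro ⟨x, y⟩ ⟨x', y'⟩ heq
    simp only [Prod.mk.injEq] at heq ⊢
    omega
  rw [tsum_mul_tsum_of_summable_norm ha hb, tsum_mul_tsum_of_summable_norm ha' hb',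
    ← hsum.tsum_add hsum', ← tsum_mul_left, ← hinj.tsum_eq (f := fun z : ℤ × ℤ =>
      a z.1 * b z.2 + (-1) ^ z.1 * a z.1 * ((-1) ^ z.2 * b z.2))]
  · refine tsum_congr fun ⟨x, y⟩ => ?_
    dsimp only
    have heven : (-1 : 𝕜) ^ (x + y) * (-1) ^ (x - y) = 1 := by
      rw [hsign, add_add_sub_cancel, (Even.add_self x).neg_one_zpow]
    linear_combination (-a (x + y) * b (x - y)) * heven
  · rintro ⟨i, j⟩ hsupp
    by_contra hrange
    refine hsupp ?_
    have hodd : Odd (i + j) := by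
      refine Int.not_even_iff_odd.1 fun ⟨x, hx⟩ => hrange ⟨(x, i - x), ?_⟩
      simp only [Prod.mk.injEq]
      omega
    linear_combination a i * b j * ((hsign i j).trans hodd.neg_one_zpow)

theorem triangular_reflection (i : ℤ) : triangular (-1 - i) = triangular i := by
  rw [← neg_add', add_comm, triangular_neg, add_sub_cancel_right]

theorem neg_one_zpow_reflection (i : ℤ) : (-1 : 𝕜) ^ (-1 - i) = -(-1) ^ i := by
  rcases Int.even_or_odd i with hi | hi
  · rw [hi.neg_one_zpow, (odd_neg_one.sub_even hi).neg_one_zpow]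
  · rw [hi.neg_one_zpow, (odd_neg_one.sub_odd hi).neg_one_zpow, neg_neg]

theorem tsum_neg_one_zpow_mul_pow_triangular [NeZero (2 : 𝕜)] (q : 𝕜) :
    ∑' i : ℤ, (-1) ^ i * q ^ triangular i = 0 :=
  tsum_eq_zero_of_reflection_eq_neg fun i => by
    rw [triangular_reflection, neg_one_zpow_reflection, neg_mul]

theorem pow_triangular_add_mul_pow_triangular_sub (q : 𝕜) (x y : ℤ) :
    q ^ triangular (x + y) * q ^ triangular (x - y) = (q ^ 2) ^ triangular x * q ^ intSq y := by
  rw [← pow_mul, ← pow_add, ← pow_add]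
  congr 1
  zify
  linarith [two_mul_triangular (x + y), two_mul_triangular (x - y), two_mul_triangular x,
    intCast_intSq y]

theorem pow_intSq_add_mul_pow_intSq_sub (q : 𝕜) (x y : ℤ) :
    q ^ intSq (x + y) * q ^ intSq (x - y) = (q ^ 2) ^ intSq x * (q ^ 2) ^ intSq y := by
  rw [← pow_mul, ← pow_mul, ← pow_add, ← pow_add]
  congr 1
  zify
  simp only [intCast_intSq]
  ring

theorem pow_intSq_add_one_mul_pow_intSq_sub (q : 𝕜) (x y : ℤ) :
    q ^ intSq (x + y + 1) * q ^ intSq (x - y) =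
      q * ((q ^ 4) ^ triangular x * (q ^ 4) ^ triangular y) := by
  rw [← pow_mul, ← pow_mul, ← pow_add, ← pow_add, ← pow_succ']
  congr 1
  zify
  simp only [intCast_intSq]
  linear_combination (-2) * two_mul_triangular x - 2 * two_mul_triangular y

theorem tsum_neg_one_zpow_mul_pow_intSq (q : 𝕜) :
    ∑' i : ℤ, (-1) ^ i * q ^ intSq i = thetaPhi (-q) :=
  tsum_congr fun i => (neg_pow_intSq q i).symm

theorem tsum_pow_intSq_add_one (q : 𝕜) : ∑' i : ℤ, q ^ intSq (i + 1) = thetaPhi q :=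
  (Equiv.addRight (1 : ℤ)).tsum_eq fun i => q ^ intSq i

theorem tsum_neg_one_zpow_mul_pow_intSq_add_one (q : 𝕜) :
    ∑' i : ℤ, (-1) ^ i * q ^ intSq (i + 1) = -thetaPhi (-q) := by
  rw [← tsum_pow_intSq_add_one, ← tsum_neg]
  refine tsum_congr fun i => ?_
  rw [neg_pow_intSq, zpow_add_one₀ (neg_ne_zero.2 one_ne_zero), mul_neg_one, neg_mul, neg_neg]

variable [CompleteSpace 𝕜]

theorem thetaTwoPsi_sq [NeZero (2 : 𝕜)] (hq : ‖q‖ < 1) :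
    thetaTwoPsi q ^ 2 = 2 * (thetaTwoPsi (q ^ 2) * thetaPhi q) := by
  have hψ := summableOnUnitDisc_triangular.summable_norm_pow hq
  have hψ2 := summableOnUnitDisc_triangular.summable_norm_pow (norm_pow_lt_one hq two_ne_zero)
  have hparity := two_mul_tsum_add_mul_sub hψ hψ
  simp only [pow_triangular_add_mul_pow_triangular_sub, tsum_neg_one_zpow_mul_pow_triangular,
    mul_zero, add_zero] at hparity
  rw [← tsum_mul_tsum_of_summable_norm hψ2 (summableOnUnitDisc_intSq.summable_norm_pow hq)]
    at hparity
  exact (sq _).trans hparity.symm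

theorem thetaPhi_sq_add_thetaPhi_neg_sq (hq : ‖q‖ < 1) :
    thetaPhi q ^ 2 + thetaPhi (-q) ^ 2 = 2 * thetaPhi (q ^ 2) ^ 2 := by
  have hφ := summableOnUnitDisc_intSq.summable_norm_pow hq
  have hφ2 := summableOnUnitDisc_intSq.summable_norm_pow (norm_pow_lt_one hq two_ne_zero)
  have hparity := two_mul_tsum_add_mul_sub hφ hφ
  simp only [pow_intSq_add_mul_pow_intSq_sub, tsum_neg_one_zpow_mul_pow_intSq] at hparity
  rw [← tsum_mul_tsum_of_summable_norm hφ2 hφ2] at hparity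
  simp only [← sq] at hparity
  exact hparity.symm

theorem thetaPhi_sq_sub_thetaPhi_neg_sq (hq : ‖q‖ < 1) :
    thetaPhi q ^ 2 - thetaPhi (-q) ^ 2 = 2 * q * thetaTwoPsi (q ^ 4) ^ 2 := by
  have hφ := summableOnUnitDisc_intSq.summable_norm_pow hq
  have hφ' : Summable fun i : ℤ => ‖q ^ intSq (i + 1)‖ :=
    hφ.comp_injective (add_left_injective 1)
  have hψ4 := summableOnUnitDisc_triangular.summable_norm_pow
    (norm_pow_lt_one hq (n := 4) (by norm_num))
  have hparity := two_mul_tsum_add_mul_sub hφ' hφ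
  simp only [pow_intSq_add_one_mul_pow_intSq_sub, tsum_neg_one_zpow_mul_pow_intSq,
    tsum_pow_intSq_add_one, tsum_neg_one_zpow_mul_pow_intSq_add_one] at hparity
  rw [tsum_mul_left, ← tsum_mul_tsum_of_summable_norm hψ4 hψ4] at hparity
  simp only [lacunarySeries] at hparity ⊢
  linear_combination -hparity

theorem thetaPhi_pow_four_sub_thetaPhi_neg_pow_four [NeZero (2 : 𝕜)] (hq : ‖q‖ < 1) :
    thetaPhi q ^ 4 - thetaPhi (-q) ^ 4 = q * thetaTwoPsi (q ^ 2) ^ 4 := by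
  have hψ := thetaTwoPsi_sq (norm_pow_lt_one hq two_ne_zero)
  rw [← pow_mul] at hψ
  linear_combination
    (thetaPhi q ^ 2 + thetaPhi (-q) ^ 2) * thetaPhi_sq_sub_thetaPhi_neg_sq hq
      + 2 * q * thetaTwoPsi (q ^ 4) ^ 2 * thetaPhi_sq_add_thetaPhi_neg_sq hq
      - q * (thetaTwoPsi (q ^ 2) ^ 2 + 2 * thetaTwoPsi (q ^ 4) * thetaPhi (q ^ 2)) * hψ

end ParityLattice

section Wronskian

variable {𝕜 : Type*} [NormedField 𝕜] {q : 𝕜}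

theorem summable_norm_odd_mul_pow_triangular (hq : ‖q‖ < 1) :
    Summable fun i : ℤ => ‖(2 * (i : 𝕜) + 1) * q ^ triangular i‖ := by
  have hψ := summableOnUnitDisc_triangular.summable_norm_pow hq
  have hDψ := summableOnUnitDisc_triangular.summable_natCast_mul_pow (norm_nonneg q) hq
  refine ((hDψ.mul_left 8).add hψ).of_nonneg_of_le (fun i => norm_nonneg _) fun i => ?_
  have hodd : |2 * i + 1| ≤ 8 * (triangular i : ℤ) + 1 := by
    have hsq : |2 * i + 1| ^ 2 = 8 * (triangular i : ℤ) + 1 := by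
      rw [sq_abs]
      linear_combination (-4) * two_mul_triangular i
    exact hsq ▸ Int.le_self_sq _
  have hnorm : ‖2 * (i : 𝕜) + 1‖ ≤ 8 * triangular i + 1 := by
    have := norm_intCast_le_abs (𝕜 := 𝕜) (2 * i + 1)
    have hcast : (|2 * i + 1| : ℤ) ≤ ((8 * triangular i + 1 : ℤ) : ℝ) := Int.cast_le.2 hodd
    push_cast at this hcast
    exact this.trans hcast
  calc ‖(2 * (i : 𝕜) + 1) * q ^ triangular i‖ ≤ (8 * triangular i + 1) * ‖q‖ ^ triangular i := by
        rw [norm_mul, norm_pow]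
        gcongr
    _ = 8 * (triangular i * ‖q‖ ^ triangular i) + ‖q ^ triangular i‖ := by
        rw [norm_pow]
        ring

theorem odd_mul_pow_triangular_add_mul_sub (q : 𝕜) (x y : ℤ) :
    ((2 * ((x + y : ℤ) : 𝕜) + 1) * q ^ triangular (x + y))
        * ((2 * ((x - y : ℤ) : 𝕜) + 1) * q ^ triangular (x - y)) =
      ((q ^ 2) ^ triangular x + 8 * (triangular x * (q ^ 2) ^ triangular x)) * q ^ intSq y
        - (q ^ 2) ^ triangular x * (4 * (intSq y * q ^ intSq y)) := by
  have htri : 2 * (triangular x : 𝕜) = x * (x + 1) := by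
    simpa using congrArg (Int.cast (R := 𝕜)) (two_mul_triangular x)
  have hsq : (intSq y : 𝕜) = (y : 𝕜) ^ 2 := by
    simpa using congrArg (Int.cast (R := 𝕜)) (intCast_intSq y)
  rw [hsq]
  push_cast
  linear_combination ((2 * ((x : 𝕜) + y) + 1) * (2 * ((x : 𝕜) - y) + 1))
      * pow_triangular_add_mul_pow_triangular_sub q x y
    - 4 * (q ^ 2) ^ triangular x * q ^ intSq y * htri

theorem tsum_odd_mul_pow_triangular [NeZero (2 : 𝕜)] (q : 𝕜) :
    ∑' i : ℤ, (2 * (i : 𝕜) + 1) * q ^ triangular i = 0 :=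
  tsum_eq_zero_of_reflection_eq_neg fun i => by
    rw [triangular_reflection]
    push_cast
    ring

variable [CompleteSpace 𝕜] [NeZero (2 : 𝕜)]

theorem tsum_neg_one_zpow_mul_odd_mul_pow_triangular (h0 : q ≠ 0) (hq : ‖q‖ < 1) :
    ∑' i : ℤ, (-1) ^ i * ((2 * (i : 𝕜) + 1) * q ^ triangular i) = 2 * eulerFunction q ^ 3 := by
  have hzero : HasSum (fun i : ℤ => (-1) ^ i * q ^ triangular i) 0 := by
    rw [← tsum_neg_one_zpow_mul_pow_triangular q]
    exact (summable_norm_neg_one_zpow_mul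
      (summableOnUnitDisc_triangular.summable_norm_pow hq)).of_norm.hasSum
  rw [← add_zero (2 * eulerFunction q ^ 3),
    ← (((jacobi_eulerFunction_cube h0 hq).mul_left 2).add hzero).tsum_eq]
  refine tsum_congr fun i => ?_
  rw [thetaCoeff]
  ring

theorem thetaPhi_thetaTwoPsi_wronskian (h0 : q ≠ 0) (hq : ‖q‖ < 1) :
    thetaPhi q * (thetaTwoPsi (q ^ 2) + 8 * lacunarySeriesEulerDeriv triangular (q ^ 2))
      - 4 * thetaTwoPsi (q ^ 2) * lacunarySeriesEulerDeriv intSq q = 2 * eulerFunction q ^ 6 := by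
  have h2 := norm_pow_lt_one hq two_ne_zero
  have hodd := summable_norm_odd_mul_pow_triangular hq
  have hparity := two_mul_tsum_add_mul_sub hodd hodd
  simp only [odd_mul_pow_triangular_add_mul_sub, tsum_odd_mul_pow_triangular,
    tsum_neg_one_zpow_mul_odd_mul_pow_triangular h0 hq, zero_mul, zero_add] at hparity
  have hφ := summableOnUnitDisc_intSq.summable_norm_pow hq
  have hψ := summableOnUnitDisc_triangular.summable_norm_pow h2
  have hDφ : Summable fun i => ‖4 * ((intSq i : 𝕜) * q ^ intSq i)‖ := by
    simpa only [norm_mul (4 : 𝕜)] using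
      (summableOnUnitDisc_intSq.summable_norm_natCast_mul_pow hq).mul_left ‖(4 : 𝕜)‖
  have hDψ : Summable fun i => ‖8 * ((triangular i : 𝕜) * (q ^ 2) ^ triangular i)‖ := by
    simpa only [norm_mul (8 : 𝕜)] using
      (summableOnUnitDisc_triangular.summable_norm_natCast_mul_pow h2).mul_left ‖(8 : 𝕜)‖
  have hψDψ := (hψ.add hDψ).of_nonneg_of_le (fun i => norm_nonneg _) fun i => norm_add_le _ _
  rw [(summable_mul_of_summable_norm hψDψ hφ).tsum_sub (summable_mul_of_summable_norm hψ hDφ),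
    ← tsum_mul_tsum_of_summable_norm hψDψ hφ, ← tsum_mul_tsum_of_summable_norm hψ hDφ,
    hψ.of_norm.tsum_add hDψ.of_norm, tsum_mul_left, tsum_mul_left] at hparity
  refine mul_left_cancel₀ (two_ne_zero (α := 𝕜)) ?_
  simp only [lacunarySeries, lacunarySeriesEulerDeriv]
  linear_combination hparity

end Wronskian

theorem mul_natCast_mul_pow_sub_one {R : Type*} [CommSemiring R] (x : R) (n : ℕ) :
    x * (n * x ^ (n - 1)) = n * x ^ n := by
  rcases eq_or_ne n 0 with rfl | hn
  · rw [Nat.cast_zero, zero_mul, mul_zero]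
  · rw [mul_left_comm, mul_pow_sub_one hn]

section EulerDerivative

variable {ι 𝕜 : Type*} [RCLike 𝕜] {e : ι → ℕ} {q : 𝕜}

theorem SummableOnUnitDisc.hasDerivAt (he : SummableOnUnitDisc e) (hq : ‖q‖ < 1) :
    HasDerivAt (lacunarySeries e) (∑' n, (e n : 𝕜) * q ^ (e n - 1)) q := by
  obtain ⟨s, hqs, hs1⟩ := exists_between hq
  have hs0 : 0 < s := (norm_nonneg q).trans_lt hqs
  have hq_mem : q ∈ Metric.ball (0 : 𝕜) s := mem_ball_zero_iff.2 hqs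
  have hbound : Summable fun n => (e n : ℝ) * s ^ (e n - 1) :=
    ((he.summable_natCast_mul_pow hs0.le hs1).mul_left s⁻¹).congr fun n => by
      rw [← mul_natCast_mul_pow_sub_one, inv_mul_cancel_left₀ hs0.ne']
  refine hasDerivAt_tsum_of_isPreconnected hbound Metric.isOpen_ball
    (convex_ball _ _).isPreconnected (fun n y _ => hasDerivAt_pow (e n) y) (fun n y hy => ?_)
    hq_mem (he.summable_norm_pow hq).of_norm hq_mem
  rw [norm_mul, norm_pow, RCLike.norm_natCast]
  gcongr
  exact (mem_ball_zero_iff.1 hy).le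

theorem SummableOnUnitDisc.mul_deriv (he : SummableOnUnitDisc e) (hq : ‖q‖ < 1) :
    q * deriv (lacunarySeries e) q = lacunarySeriesEulerDeriv e q := by
  rw [(he.hasDerivAt hq).deriv, ← tsum_mul_left]
  exact tsum_congr fun n => mul_natCast_mul_pow_sub_one q (e n)

theorem differentiableAt_thetaPhi (hq : ‖q‖ < 1) : DifferentiableAt 𝕜 thetaPhi q :=
  (summableOnUnitDisc_intSq.hasDerivAt hq).differentiableAt

theorem differentiableAt_thetaTwoPsi (hq : ‖q‖ < 1) : DifferentiableAt 𝕜 thetaTwoPsi q :=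
  (summableOnUnitDisc_triangular.hasDerivAt hq).differentiableAt

theorem thetaTwoPsi_mul_eulerDeriv (hq : ‖q‖ < 1) :
    thetaTwoPsi q * lacunarySeriesEulerDeriv triangular q =
      2 * lacunarySeriesEulerDeriv triangular (q ^ 2) * thetaPhi q
        + thetaTwoPsi (q ^ 2) * lacunarySeriesEulerDeriv intSq q := by
  have hq2 := norm_pow_lt_one hq two_ne_zero
  have hψ := (differentiableAt_thetaTwoPsi hq).hasDerivAt
  have hψ2 := (differentiableAt_thetaTwoPsi hq2).hasDerivAt.comp (h := fun x => x ^ 2) q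
    (hasDerivAt_pow 2 q)
  have hφ := (differentiableAt_thetaPhi hq).hasDerivAt
  have hsq : (fun x : 𝕜 => thetaTwoPsi x ^ 2) =ᶠ[𝓝 q]
      fun x => 2 * (thetaTwoPsi (x ^ 2) * thetaPhi x) := by
    filter_upwards [continuous_norm.continuousAt.eventually_lt_const hq] with x hx
      using thetaTwoPsi_sq hx
  have hderiv := ((hψ.pow 2).congr_of_eventuallyEq hsq.symm).unique ((hψ2.mul hφ).const_mul 2)
  simp only [Function.comp_apply, Nat.cast_ofNat, Nat.add_one_sub_one, pow_one] at hderiv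
  rw [← summableOnUnitDisc_triangular.mul_deriv hq, ← summableOnUnitDisc_triangular.mul_deriv hq2,
    ← summableOnUnitDisc_intSq.mul_deriv hq]
  linear_combination q / 2 * hderiv

end EulerDerivative

/-- The weight-two Eisenstein series `2 P(q²) - P(q) = 1 + 24 ∑ (∑_{d ∣ n, d odd} d) q^n` of level
two, where `P` is Ramanujan's quasimodular Eisenstein series, in its theta function form. -/
noncomputable def levelTwoEisenstein {𝕜 : Type*} [NormedField 𝕜] (q : 𝕜) : 𝕜 :=
  thetaPhi (-q) ^ 4 + 2 * q * thetaTwoPsi (q ^ 2) ^ 4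

section LevelTwoEisenstein

variable {𝕜 : Type*} [RCLike 𝕜] {q : 𝕜}

theorem thetaPhi_zero : thetaPhi (0 : 𝕜) = 1 := by
  refine (tsum_eq_single 0 fun n hn => zero_pow ?_).trans (pow_zero 0)
  exact pow_ne_zero 2 (Int.natAbs_ne_zero.2 hn)

theorem thetaPhi_neg_ne_zero (hq : ‖q‖ < 1) : thetaPhi (-q) ≠ 0 := by
  rcases eq_or_ne q 0 with rfl | h0
  · rw [neg_zero, thetaPhi_zero]
    exact one_ne_zero
  · rw [thetaPhi_neg_eq h0 hq]
    exact div_ne_zero (pow_ne_zero 2 (eulerFunction_ne_zero hq))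
      (eulerFunction_ne_zero (norm_pow_lt_one hq two_ne_zero))

theorem thetaPhi_ne_zero (hq : ‖q‖ < 1) : thetaPhi q ≠ 0 :=
  neg_neg q ▸ thetaPhi_neg_ne_zero ((norm_neg q).trans_lt hq)

theorem thetaTwoPsi_ne_zero (h0 : q ≠ 0) (hq : ‖q‖ < 1) : thetaTwoPsi q ≠ 0 := by
  rw [thetaTwoPsi_eq h0 hq]
  exact div_ne_zero (mul_ne_zero two_ne_zero
    (pow_ne_zero 2 (eulerFunction_ne_zero (norm_pow_lt_one hq two_ne_zero))))
    (eulerFunction_ne_zero hq)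

theorem thetaPhi_neg_pow_four_eq_eulerLogDeriv (h0 : q ≠ 0) (hq : ‖q‖ < 1) :
    thetaPhi (-q) ^ 4 =
      1 + 8 * (lacunarySeriesEulerDeriv triangular (q ^ 2) / thetaTwoPsi (q ^ 2))
        - 4 * (lacunarySeriesEulerDeriv intSq q / thetaPhi q) := by
  have hq2 := norm_pow_lt_one hq two_ne_zero
  have hE := eulerFunction_ne_zero hq
  have hE2 := eulerFunction_ne_zero hq2
  have hφ := thetaPhi_ne_zero hq
  have hψ2 := thetaTwoPsi_ne_zero (pow_ne_zero 2 h0) hq2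
  have hwronskian := thetaPhi_thetaTwoPsi_wronskian h0 hq
  have hprod : thetaTwoPsi (q ^ 2) * thetaPhi q =
      2 * eulerFunction (q ^ 2) ^ 4 / eulerFunction q ^ 2 := by
    have hsq := thetaTwoPsi_sq hq
    rw [thetaTwoPsi_eq h0 hq] at hsq
    linear_combination -hsq / 2
  have hcube : thetaPhi (-q) ^ 4 * (thetaTwoPsi (q ^ 2) * thetaPhi q) =
      2 * eulerFunction q ^ 6 := by
    rw [hprod, thetaPhi_neg_eq h0 hq]
    field_simp
  refine mul_right_cancel₀ (mul_ne_zero hψ2 hφ) ?_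
  rw [hcube, ← hwronskian]
  field_simp

theorem levelTwoEisenstein_eq_eulerLogDeriv (h0 : q ≠ 0) (hq : ‖q‖ < 1) :
    levelTwoEisenstein q = 1 + 8 * (lacunarySeriesEulerDeriv triangular q / thetaTwoPsi q)
      - 8 * (lacunarySeriesEulerDeriv intSq (-q) / thetaPhi (-q)) := by
  have hlog := thetaPhi_neg_pow_four_eq_eulerLogDeriv h0 hq
  have hlog_neg := thetaPhi_neg_pow_four_eq_eulerLogDeriv (neg_ne_zero.2 h0)
    ((norm_neg q).trans_lt hq)
  rw [neg_sq, neg_neg] at hlog_neg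
  have hquartic := thetaPhi_pow_four_sub_thetaPhi_neg_pow_four hq
  have hφ := thetaPhi_ne_zero hq
  have hψ := thetaTwoPsi_ne_zero h0 hq
  have hψ2 := thetaTwoPsi_ne_zero (pow_ne_zero 2 h0) (norm_pow_lt_one hq two_ne_zero)
  have hψ_log : lacunarySeriesEulerDeriv triangular q / thetaTwoPsi q =
      lacunarySeriesEulerDeriv triangular (q ^ 2) / thetaTwoPsi (q ^ 2)
        + lacunarySeriesEulerDeriv intSq q / thetaPhi q / 2 := by
    rw [← mul_div_mul_left _ _ hψ, thetaTwoPsi_mul_eulerDeriv hq, ← sq, thetaTwoPsi_sq hq]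
    field_simp
  rw [levelTwoEisenstein, hψ_log]
  linear_combination 2 * hlog_neg - hlog - 2 * hquartic

theorem levelTwoEisenstein_sq (h0 : q ≠ 0) (hq : ‖q‖ < 1) :
    levelTwoEisenstein q ^ 2 = eulerFunction q ^ 16 / eulerFunction (q ^ 2) ^ 8
      + 64 * q * eulerFunction (q ^ 2) ^ 16 / eulerFunction q ^ 8 := by
  have hquartic := thetaPhi_pow_four_sub_thetaPhi_neg_pow_four hq
  have hφ8 : thetaPhi (-q) ^ 8 = eulerFunction q ^ 16 / eulerFunction (q ^ 2) ^ 8 := by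
    rw [thetaPhi_neg_eq h0 hq, div_pow, ← pow_mul]
  have hψ8 : 16 * thetaTwoPsi (q ^ 2) ^ 4 * thetaPhi q ^ 4 =
      256 * (eulerFunction (q ^ 2) ^ 16 / eulerFunction q ^ 8) := by
    calc 16 * thetaTwoPsi (q ^ 2) ^ 4 * thetaPhi q ^ 4 = (thetaTwoPsi q ^ 2) ^ 4 := by
          rw [thetaTwoPsi_sq hq]
          ring
      _ = 256 * (eulerFunction (q ^ 2) ^ 16 / eulerFunction q ^ 8) := by
          rw [thetaTwoPsi_eq h0 hq]
          ring
  rw [levelTwoEisenstein, ← hφ8]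
  linear_combination (-4 * q * thetaTwoPsi (q ^ 2) ^ 4) * hquartic + q / 4 * hψ8

end LevelTwoEisenstein

/-- The Hauptmodul `η(τ) η(10τ)⁵ / (η(2τ) η(5τ)⁵)` of `Γ₀(10)` as a function of the nome
`q = exp (2πiτ)`, see `levelTenHauptmodul_eq`. The theta quotient form makes it visibly
differentiable at `q = 0`. -/
noncomputable def levelTenHauptmodul {𝕜 : Type*} [NormedField 𝕜] (q : 𝕜) : 𝕜 :=
  (1 - thetaPhi (-q) ^ 2 / thetaPhi (-q ^ 5) ^ 2) / 4

theorem logDeriv_mul_pow {𝕜 : Type*} [NontriviallyNormedField 𝕜] {f g : 𝕜 → 𝕜} {x : 𝕜} {n : ℕ}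
    (hf : DifferentiableAt 𝕜 f x) (hg : DifferentiableAt 𝕜 g x) (hf0 : f x ≠ 0) (hg0 : g x ≠ 0) :
    logDeriv (fun z => f z * g z ^ n) x = logDeriv f x + n * logDeriv g x := by
  rw [logDeriv_mul (g := (g · ^ n)) x hf0 (pow_ne_zero n hg0) hf (hg.fun_pow n),
    logDeriv_fun_pow hg]

section LevelTenHauptmodul

variable {𝕜 : Type*} [RCLike 𝕜] {q : 𝕜}

theorem levelTenHauptmodul_zero : levelTenHauptmodul (0 : 𝕜) = 0 := by
  rw [levelTenHauptmodul, zero_pow (by norm_num), neg_zero, thetaPhi_zero, one_pow, div_one,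
    sub_self, zero_div]

theorem differentiableAt_levelTenHauptmodul (hq : ‖q‖ < 1) :
    DifferentiableAt 𝕜 levelTenHauptmodul q := by
  have hq5 := norm_pow_lt_one hq (n := 5) (by norm_num)
  have hφ : DifferentiableAt 𝕜 (fun x => thetaPhi (-x)) q :=
    (differentiableAt_thetaPhi ((norm_neg q).trans_lt hq)).comp q differentiableAt_id.neg
  have hφ5 : DifferentiableAt 𝕜 (fun x => thetaPhi (-x ^ 5)) q :=
    (differentiableAt_thetaPhi ((norm_neg _).trans_lt hq5)).comp q (differentiableAt_pow 5).neg
  have hquot := (hφ.pow 2).div (hφ5.pow 2) (pow_ne_zero 2 (thetaPhi_neg_ne_zero hq5))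
  exact (hquot.const_sub 1).div_const 4

theorem one_sub_four_mul_levelTenHauptmodul_eq (h0 : q ≠ 0) (hq : ‖q‖ < 1) :
    1 - 4 * levelTenHauptmodul q = eulerFunction q ^ 4 * eulerFunction (q ^ 10) ^ 2
      / (eulerFunction (q ^ 2) ^ 2 * eulerFunction (q ^ 5) ^ 4) := by
  rw [levelTenHauptmodul, thetaPhi_neg_eq h0 hq, thetaPhi_neg_eq (pow_ne_zero 5 h0)
    (norm_pow_lt_one hq (by norm_num)), ← pow_mul]
  field_simp
  ring

theorem levelTenHauptmodul_eq (h0 : q ≠ 0) (hq : ‖q‖ < 1) :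
    levelTenHauptmodul q = q * eulerFunction q * eulerFunction (q ^ 10) ^ 5
      / (eulerFunction (q ^ 2) * eulerFunction (q ^ 5) ^ 5) := by
  have hE2 := eulerFunction_pow_ne_zero hq 2
  have hE5 := eulerFunction_pow_ne_zero hq 5
  have hE10 := eulerFunction_pow_ne_zero hq 10
  have hφ := phi_eulerFunction_level_ten h0 hq
  have hsub := one_sub_four_mul_levelTenHauptmodul_eq h0 hq
  have hfour : 4 * levelTenHauptmodul q = 4 * (q * eulerFunction q * eulerFunction (q ^ 10) ^ 5
      / (eulerFunction (q ^ 2) * eulerFunction (q ^ 5) ^ 5)) := by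
    rw [← sub_right_inj (a := 1), hsub]
    field_simp at hφ ⊢
    linear_combination -hφ
  exact mul_left_cancel₀ (by norm_num) hfour

theorem one_add_levelTenHauptmodul_eq (h0 : q ≠ 0) (hq : ‖q‖ < 1) :
    1 + levelTenHauptmodul q = eulerFunction (q ^ 2) ^ 3 * eulerFunction (q ^ 10)
      / (eulerFunction q * eulerFunction (q ^ 5) ^ 3) := by
  have hE := eulerFunction_ne_zero hq
  have hE2 := eulerFunction_pow_ne_zero hq 2
  have hE5 := eulerFunction_pow_ne_zero hq 5
  have hE10 := eulerFunction_pow_ne_zero hq 10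
  have hψ := psi_eulerFunction_level_ten h0 hq
  rw [levelTenHauptmodul_eq h0 hq]
  field_simp at hψ ⊢
  linear_combination -hψ

theorem levelTwo_levelTen_hauptmodul_relation (h0 : q ≠ 0) (hq : ‖q‖ < 1) :
    q * thetaTwoPsi q ^ 8 * (1 - 4 * levelTenHauptmodul q) ^ 5 =
      256 * (levelTenHauptmodul q * thetaPhi (-q) ^ 8 * (1 + levelTenHauptmodul q) ^ 5) := by
  have hE := eulerFunction_ne_zero hq
  have hE2 := eulerFunction_pow_ne_zero hq 2
  have hE5 := eulerFunction_pow_ne_zero hq 5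
  rw [one_sub_four_mul_levelTenHauptmodul_eq h0 hq, one_add_levelTenHauptmodul_eq h0 hq,
    levelTenHauptmodul_eq h0 hq, thetaTwoPsi_eq h0 hq, thetaPhi_neg_eq h0 hq]
  field_simp
  ring

theorem levelTenHauptmodul_ne_zero (h0 : q ≠ 0) (hq : ‖q‖ < 1) : levelTenHauptmodul q ≠ 0 := by
  have hE := eulerFunction_ne_zero hq
  have hE2 := eulerFunction_pow_ne_zero hq 2
  have hE5 := eulerFunction_pow_ne_zero hq 5
  have hE10 := eulerFunction_pow_ne_zero hq 10
  rw [levelTenHauptmodul_eq h0 hq]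
  positivity

theorem one_sub_four_mul_levelTenHauptmodul_ne_zero (h0 : q ≠ 0) (hq : ‖q‖ < 1) :
    1 - 4 * levelTenHauptmodul q ≠ 0 := by
  have hE := eulerFunction_ne_zero hq
  have hE2 := eulerFunction_pow_ne_zero hq 2
  have hE5 := eulerFunction_pow_ne_zero hq 5
  have hE10 := eulerFunction_pow_ne_zero hq 10
  rw [one_sub_four_mul_levelTenHauptmodul_eq h0 hq]
  positivity

theorem one_add_levelTenHauptmodul_ne_zero (h0 : q ≠ 0) (hq : ‖q‖ < 1) :
    1 + levelTenHauptmodul q ≠ 0 := by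
  have hE := eulerFunction_ne_zero hq
  have hE2 := eulerFunction_pow_ne_zero hq 2
  have hE5 := eulerFunction_pow_ne_zero hq 5
  have hE10 := eulerFunction_pow_ne_zero hq 10
  rw [one_add_levelTenHauptmodul_eq h0 hq]
  positivity

theorem logDeriv_self_mul_thetaTwoPsi_pow_mul (h0 : q ≠ 0) (hq : ‖q‖ < 1) :
    logDeriv (fun x => x * thetaTwoPsi x ^ 8 * (1 - 4 * levelTenHauptmodul x) ^ 5) q =
      1 / q + 8 * (deriv thetaTwoPsi q / thetaTwoPsi q)
        - 20 * (deriv levelTenHauptmodul q / (1 - 4 * levelTenHauptmodul q)) := by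
  have hψ := differentiableAt_thetaTwoPsi hq
  have hxψ : DifferentiableAt 𝕜 (fun x => x * thetaTwoPsi x ^ 8) q :=
    differentiableAt_id.mul (hψ.pow 8)
  have ht := ((differentiableAt_levelTenHauptmodul hq).const_mul 4).const_sub 1
  have hψ0 := thetaTwoPsi_ne_zero h0 hq
  rw [logDeriv_mul_pow hxψ ht (mul_ne_zero h0 (pow_ne_zero 8 hψ0))
      (one_sub_four_mul_levelTenHauptmodul_ne_zero h0 hq),
    logDeriv_mul_pow differentiableAt_fun_id hψ h0 hψ0, logDeriv_id', logDeriv_apply,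
    logDeriv_apply, deriv_const_sub, deriv_const_mul_field]
  push_cast
  ring

theorem logDeriv_levelTenHauptmodul_mul_thetaPhi_neg_pow_mul (h0 : q ≠ 0) (hq : ‖q‖ < 1) :
    logDeriv (fun x => 256 * (levelTenHauptmodul x * thetaPhi (-x) ^ 8
      * (1 + levelTenHauptmodul x) ^ 5)) q =
      deriv levelTenHauptmodul q / levelTenHauptmodul q
        - 8 * (deriv thetaPhi (-q) / thetaPhi (-q))
        + 5 * (deriv levelTenHauptmodul q / (1 + levelTenHauptmodul q)) := by
  have hφ : DifferentiableAt 𝕜 (fun x => thetaPhi (-x)) q :=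
    (differentiableAt_thetaPhi ((norm_neg q).trans_lt hq)).comp q differentiableAt_id.neg
  have ht := differentiableAt_levelTenHauptmodul hq
  have htφ : DifferentiableAt 𝕜 (fun x => levelTenHauptmodul x * thetaPhi (-x) ^ 8) q :=
    ht.mul (hφ.pow 8)
  have hφ0 := thetaPhi_neg_ne_zero hq
  have ht0 := levelTenHauptmodul_ne_zero h0 hq
  rw [logDeriv_const_mul q 256 (by norm_num),
    logDeriv_mul_pow htφ (ht.const_add 1) (mul_ne_zero ht0 (pow_ne_zero 8 hφ0))
      (one_add_levelTenHauptmodul_ne_zero h0 hq),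
    logDeriv_mul_pow ht hφ ht0 hφ0, logDeriv_apply, logDeriv_apply, logDeriv_apply,
    deriv_const_add, deriv_comp_neg]
  push_cast
  ring

theorem mul_deriv_levelTenHauptmodul (h0 : q ≠ 0) (hq : ‖q‖ < 1) :
    q * deriv levelTenHauptmodul q
        * (1 + 22 * levelTenHauptmodul q - 4 * levelTenHauptmodul q ^ 2) =
      levelTenHauptmodul q * (levelTwoEisenstein q
        * ((1 + levelTenHauptmodul q) * (1 - 4 * levelTenHauptmodul q))) := by
  have ht0 := levelTenHauptmodul_ne_zero h0 hq
  have hy0 := one_sub_four_mul_levelTenHauptmodul_ne_zero h0 hq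
  have hz0 := one_add_levelTenHauptmodul_ne_zero h0 hq
  have hrel : (fun x => x * thetaTwoPsi x ^ 8 * (1 - 4 * levelTenHauptmodul x) ^ 5) =ᶠ[𝓝 q]
      fun x : 𝕜 => 256 * (levelTenHauptmodul x * thetaPhi (-x) ^ 8
        * (1 + levelTenHauptmodul x) ^ 5) := by
    filter_upwards [isOpen_ne.eventually_mem h0,
      continuous_norm.continuousAt.eventually_lt_const hq] with x hx0 hx
      using levelTwo_levelTen_hauptmodul_relation hx0 hx
  have hlog := (logDeriv_congr_nhds hrel).eq_of_nhds
  rw [logDeriv_self_mul_thetaTwoPsi_pow_mul h0 hq,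
    logDeriv_levelTenHauptmodul_mul_thetaPhi_neg_pow_mul h0 hq] at hlog
  have hP : levelTwoEisenstein q = q * (deriv levelTenHauptmodul q / levelTenHauptmodul q
      + 5 * (deriv levelTenHauptmodul q / (1 + levelTenHauptmodul q))
      + 20 * (deriv levelTenHauptmodul q / (1 - 4 * levelTenHauptmodul q))) := by
    rw [levelTwoEisenstein_eq_eulerLogDeriv h0 hq, ← summableOnUnitDisc_triangular.mul_deriv hq,
      ← summableOnUnitDisc_intSq.mul_deriv ((norm_neg q).trans_lt hq)]
    linear_combination q * hlog - one_div_mul_cancel h0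
  have ht1 := mul_div_cancel₀ (deriv levelTenHauptmodul q) ht0
  have hy1 := mul_div_cancel₀ (deriv levelTenHauptmodul q) hy0
  have hz1 := mul_div_cancel₀ (deriv levelTenHauptmodul q) hz0
  rw [hP]
  linear_combination (-(1 + levelTenHauptmodul q) * (1 - 4 * levelTenHauptmodul q) * q) * ht1
    - 5 * levelTenHauptmodul q * (1 - 4 * levelTenHauptmodul q) * q * hz1
    - 20 * levelTenHauptmodul q * (1 + levelTenHauptmodul q) * q * hy1

theorem levelTwoEisenstein_mul_sq (h0 : q ≠ 0) (hq : ‖q‖ < 1) :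
    (levelTwoEisenstein q * ((1 + levelTenHauptmodul q) * (1 - 4 * levelTenHauptmodul q))) ^ 2 =
      (eulerFunction q * eulerFunction (q ^ 2) ^ 2 * eulerFunction (q ^ 5) ^ 3
          / eulerFunction (q ^ 10) ^ 2) ^ 2
        * ((1 + 4 * levelTenHauptmodul q ^ 2)
          * (1 + 22 * levelTenHauptmodul q - 4 * levelTenHauptmodul q ^ 2) ^ 2) := by
  have hE := eulerFunction_ne_zero hq
  have hE2 := eulerFunction_pow_ne_zero hq 2
  have hE5 := eulerFunction_pow_ne_zero hq 5
  have hE10 := eulerFunction_pow_ne_zero hq 10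
  have hfactor : (1 - 4 * levelTenHauptmodul q) ^ 5
      + 64 * (levelTenHauptmodul q * (1 + levelTenHauptmodul q) ^ 5) =
      (1 + 4 * levelTenHauptmodul q ^ 2)
        * (1 + 22 * levelTenHauptmodul q - 4 * levelTenHauptmodul q ^ 2) ^ 2 := by
    ring
  rw [← hfactor, mul_pow, levelTwoEisenstein_sq h0 hq,
    one_sub_four_mul_levelTenHauptmodul_eq h0 hq, one_add_levelTenHauptmodul_eq h0 hq,
    levelTenHauptmodul_eq h0 hq]
  field_simp

end LevelTenHauptmodul

section Real

variable {q : ℝ}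

theorem levelTenHauptmodul_pos (h0 : 0 < q) (h1 : q < 1) : 0 < levelTenHauptmodul q := by
  have hE1 := eulerFunction_pos h0.le h1
  have hE2 := eulerFunction_pow_pos h0.le h1 2
  have hE5 := eulerFunction_pow_pos h0.le h1 5
  have hE10 := eulerFunction_pow_pos h0.le h1 10
  rw [levelTenHauptmodul_eq h0.ne' (abs_lt.2 ⟨by linarith, h1⟩)]
  positivity

theorem four_mul_levelTenHauptmodul_lt_one (h0 : 0 < q) (h1 : q < 1) :
    4 * levelTenHauptmodul q < 1 := by
  have hE1 := eulerFunction_pos h0.le h1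
  have hE2 := eulerFunction_pow_pos h0.le h1 2
  have hE5 := eulerFunction_pow_pos h0.le h1 5
  have hE10 := eulerFunction_pow_pos h0.le h1 10
  rw [← sub_pos, one_sub_four_mul_levelTenHauptmodul_eq h0.ne' (abs_lt.2 ⟨by linarith, h1⟩)]
  positivity

theorem mul_deriv_levelTenHauptmodul_eq_sqrt (h0 : 0 < q) (h1 : q < 1) :
    q * deriv levelTenHauptmodul q = levelTenHauptmodul q
      * (eulerFunction q * eulerFunction (q ^ 2) ^ 2 * eulerFunction (q ^ 5) ^ 3
        / eulerFunction (q ^ 10) ^ 2 * √(1 + 4 * levelTenHauptmodul q ^ 2)) := by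
  have hq : ‖q‖ < 1 := abs_lt.2 ⟨by linarith, h1⟩
  have ht := levelTenHauptmodul_pos h0 h1
  have hy := four_mul_levelTenHauptmodul_lt_one h0 h1
  have hfactor : 0 < 1 + 22 * levelTenHauptmodul q - 4 * levelTenHauptmodul q ^ 2 := by nlinarith
  have hP : 0 ≤ levelTwoEisenstein q := by
    rw [levelTwoEisenstein]
    positivity
  have hE1 := eulerFunction_pos h0.le h1
  have hE2 := eulerFunction_pow_pos h0.le h1 2
  have hE5 := eulerFunction_pow_pos h0.le h1 5
  have hE10 := eulerFunction_pow_pos h0.le h1 10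
  have hsq := levelTwoEisenstein_mul_sq h0.ne' hq
  have hroot : levelTwoEisenstein q
      * ((1 + levelTenHauptmodul q) * (1 - 4 * levelTenHauptmodul q)) =
      eulerFunction q * eulerFunction (q ^ 2) ^ 2 * eulerFunction (q ^ 5) ^ 3
        / eulerFunction (q ^ 10) ^ 2 * √(1 + 4 * levelTenHauptmodul q ^ 2)
        * (1 + 22 * levelTenHauptmodul q - 4 * levelTenHauptmodul q ^ 2) := by
    rw [← sq_eq_sq₀ (mul_nonneg hP (mul_nonneg (by positivity) (sub_nonneg.2 hy.le)))
        (by positivity), hsq, mul_pow, mul_pow,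
      Real.sq_sqrt (by positivity)]
    ring
  refine mul_right_cancel₀ hfactor.ne' ?_
  rw [mul_deriv_levelTenHauptmodul h0.ne' hq, hroot]
  ring

end Real

/-- The Dedekind eta function on the positive imaginary axis, `η(iy)`. -/
noncomputable def realEta (y : ℝ) : ℝ := exp (-π * y / 12) * eulerFunction (exp (-2 * π * y))

theorem exp_neg_two_pi_mul_lt_one {y : ℝ} (hy : 0 < y) : exp (-2 * π * y) < 1 :=
  exp_lt_one_iff.2 <| mul_neg_of_neg_of_pos (by linarith [pi_pos]) hy

theorem ofReal_eulerFunction {q : ℝ} (hq : ‖q‖ < 1) :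
    ((eulerFunction q : ℝ) : ℂ) = eulerFunction (q : ℂ) := by
  have hmul : Multipliable fun n : ℕ => 1 - q * q ^ n := by
    simpa only [sub_eq_add_neg] using
      multipliable_one_add_of_summable (summable_norm_neg_mul_pow q hq)
  refine (hmul.map_tprod Complex.ofRealHom Complex.continuous_ofReal).trans
    (tprod_congr fun n => ?_)
  simp only [map_sub, map_one, map_mul, map_pow, Complex.ofRealHom_eq_coe]

theorem eta_I_mul {y : ℝ} (hy : 0 < y) : ModularForm.eta (Complex.I * y) = realEta y := by
  have hnorm : ‖exp (-2 * π * y)‖ < 1 := by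
    rw [norm_of_nonneg (exp_pos _).le]
    exact exp_neg_two_pi_mul_lt_one hy
  rw [realEta, Complex.ofReal_mul, ofReal_eulerFunction hnorm]
  refine congrArg₂ (· * ·) ?_ (tprod_congr fun n => ?_)
  · rw [Function.Periodic.qParam, Complex.ofReal_exp]
    push_cast
    congr 1
    linear_combination (2 * π * y / 24 : ℂ) * Complex.I_mul_I
  · have hnome : 2 * π * Complex.I * (Complex.I * y) = ((-2 * π * y : ℝ) : ℂ) := by
      push_cast
      linear_combination (2 * π * y : ℂ) * Complex.I_mul_I
    rw [ModularForm.eta_q_eq_pow, pow_succ', hnome, Complex.ofReal_exp]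

theorem realEta_pos {y : ℝ} (hy : 0 < y) : 0 < realEta y :=
  mul_pos (exp_pos _) (eulerFunction_pos (exp_pos _).le (exp_neg_two_pi_mul_lt_one hy))

theorem realEta_inv {y : ℝ} (hy : 0 < y) : realEta y⁻¹ = √y * realEta y := by
  have hI : 0 < (Complex.I * y).im := by simpa using hy
  have hy0 : (y : ℂ) ≠ 0 := Complex.ofReal_ne_zero.2 hy.ne'
  have hinv : -1 / (Complex.I * y) = Complex.I * (y⁻¹ : ℝ) := by
    rw [Complex.ofReal_inv, ← div_div, neg_div, one_div, Complex.inv_I, neg_neg, div_eq_mul_inv]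
  have hsqrt (z : ℂ) : Complex.sqrt z ^ 2 = z := by
    rw [Complex.sqrt, ← Complex.cpow_nat_mul]
    norm_num
  have hfunctional := ModularForm.eta_comp_eq_csqrt_I_inv hI
  simp only [Function.comp_apply, Pi.smul_apply, Pi.mul_apply, smul_eq_mul] at hfunctional
  rw [hinv, eta_I_mul (inv_pos.2 hy), eta_I_mul hy] at hfunctional
  have hsq : (realEta y⁻¹ : ℂ) ^ 2 = y * realEta y ^ 2 := by
    rw [hfunctional, mul_pow, mul_pow, inv_pow, hsqrt, hsqrt]
    field_simp
  rw [← sq_eq_sq₀ (realEta_pos (inv_pos.2 hy)).le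
    (mul_nonneg (sqrt_nonneg y) (realEta_pos hy).le), mul_pow, sq_sqrt hy.le]
  exact_mod_cast hsq

theorem realEta_mul (n : ℕ) (y : ℝ) :
    realEta (n * y) = exp (-π * y / 12) ^ n * eulerFunction (exp (-2 * π * y) ^ n) := by
  rw [realEta, ← exp_nat_mul, ← exp_nat_mul]
  ring_nf

theorem one_add_levelTenHauptmodul_eq_realEta {y : ℝ} (hy : 0 < y) :
    1 + levelTenHauptmodul (exp (-2 * π * y)) =
      realEta (2 * y) ^ 3 * realEta (10 * y) / (realEta y * realEta (5 * y) ^ 3) := by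
  have hnorm : ‖exp (-2 * π * y)‖ < 1 := by
    rw [norm_of_nonneg (exp_pos _).le]
    exact exp_neg_two_pi_mul_lt_one hy
  have h2 := realEta_mul 2 y
  have h5 := realEta_mul 5 y
  have h10 := realEta_mul 10 y
  push_cast at h2 h5 h10
  rw [one_add_levelTenHauptmodul_eq (exp_pos _).ne' hnorm, h2, h5, h10, realEta]
  field_simp

theorem one_add_levelTenHauptmodul_mul_fricke {y : ℝ} (hy : 0 < y) :
    (1 + levelTenHauptmodul (exp (-2 * π * y)))
      * (1 + levelTenHauptmodul (exp (-2 * π * (10 * y)⁻¹))) = 5 / 4 := by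
  have hscale2 : 2 * (10 * y)⁻¹ = (5 * y)⁻¹ := by field_simp; norm_num
  have hscale5 : 5 * (10 * y)⁻¹ = (2 * y)⁻¹ := by field_simp; norm_num
  have hscale10 : 10 * (10 * y)⁻¹ = y⁻¹ := by field_simp
  have hη {c : ℝ} (hc : 0 < c) : realEta (c * y)⁻¹ = √c * √y * realEta (c * y) := by
    rw [realEta_inv (mul_pos hc hy), sqrt_mul hc.le]
  have hη0 {c : ℝ} (hc : 0 < c) := (realEta_pos (mul_pos hc hy)).ne'
  have hη1 := (realEta_pos hy).ne'
  have hη2 := hη0 two_pos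
  have hη5 := hη0 (c := 5) (by norm_num)
  have hη10 := hη0 (c := 10) (by norm_num)
  have hsqrt10 : √10 = √5 * √2 := by rw [← sqrt_mul (by norm_num)]; norm_num
  rw [one_add_levelTenHauptmodul_eq_realEta hy,
    one_add_levelTenHauptmodul_eq_realEta (by positivity), hscale2, hscale5, hscale10,
    hη two_pos, hη (c := 5) (by norm_num), hη (c := 10) (by norm_num), realEta_inv hy, hsqrt10]
  generalize realEta y = η₁, realEta (2 * y) = η₂, realEta (5 * y) = η₅,
    realEta (10 * y) = η₁₀ at hη1 hη2 hη5 hη10 ⊢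
  field_simp
  rw [sq_sqrt (by norm_num), show √2 ^ 4 = (√2 ^ 2) ^ 2 by ring, sq_sqrt (by norm_num)]
  norm_num

theorem levelTenHauptmodul_fricke_fixedPoint :
    levelTenHauptmodul (exp (-2 * π / √10)) = (√5 - 2) / 2 := by
  have hfixed : (10 * (√10)⁻¹)⁻¹ = (√10)⁻¹ := by
    rw [← div_eq_mul_inv, div_sqrt]
  have hfricke := one_add_levelTenHauptmodul_mul_fricke (y := (√10)⁻¹) (by positivity)
  rw [hfixed, ← div_eq_mul_inv] at hfricke
  have hpos := levelTenHauptmodul_pos (exp_pos _)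
    (exp_neg_two_pi_mul_lt_one (y := (√10)⁻¹) (by positivity))
  rw [← div_eq_mul_inv] at hpos
  have hsqrt5 : √5 = 2 * (1 + levelTenHauptmodul (exp (-2 * π / √10))) := by
    rw [sqrt_eq_iff_mul_self_eq (by norm_num) (by positivity)]
    linear_combination -4 * hfricke
  rw [hsqrt5]
  ring

theorem hasDerivAt_sqrt_levelTenHauptmodul {q : ℝ} (h0 : 0 < q) (h1 : q < 1) :
    HasDerivAt (fun x => √(1 + 4 * levelTenHauptmodul x ^ 2) / 4)
      (q * eulerFunction q ^ 3 * eulerFunction (q ^ 10) ^ 8 / eulerFunction (q ^ 5) ^ 7) q := by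
  have hq : ‖q‖ < 1 := abs_lt.2 ⟨by linarith, h1⟩
  have hE1 := eulerFunction_pos h0.le h1
  have hE2 := eulerFunction_pow_pos h0.le h1 2
  have hE5 := eulerFunction_pow_pos h0.le h1 5
  have hE10 := eulerFunction_pow_pos h0.le h1 10
  have hroot : 0 < 1 + 4 * levelTenHauptmodul q ^ 2 := by positivity
  have hroot' : √(1 + 4 * levelTenHauptmodul q ^ 2) ≠ 0 := (sqrt_pos.2 hroot).ne'
  have ht := (differentiableAt_levelTenHauptmodul hq).hasDerivAt
  have hode := mul_deriv_levelTenHauptmodul_eq_sqrt h0 h1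
  refine ((((ht.fun_pow 2).const_mul 4).const_add 1).sqrt hroot.ne' |>.div_const 4).congr_deriv ?_
  have hchain : q * deriv levelTenHauptmodul q * levelTenHauptmodul q
      / √(1 + 4 * levelTenHauptmodul q ^ 2) = q * (q * eulerFunction q ^ 3
        * eulerFunction (q ^ 10) ^ 8 / eulerFunction (q ^ 5) ^ 7) := by
    rw [hode, mul_div_right_comm, ← mul_assoc, mul_div_cancel_right₀ _ hroot',
      levelTenHauptmodul_eq h0.ne' hq]
    field_simp
  refine mul_left_cancel₀ h0.ne' (Eq.trans ?_ hchain)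
  push_cast
  ring

theorem integral_eulerFunction_quotient {b : ℝ} (h0 : 0 ≤ b) (h1 : b < 1) :
    ∫ q in (0 : ℝ)..b,
        q * eulerFunction q ^ 3 * eulerFunction (q ^ 10) ^ 8 / eulerFunction (q ^ 5) ^ 7 =
      (√(1 + 4 * levelTenHauptmodul b ^ 2) - 1) / 4 := by
  have hderiv (x : ℝ) (hx : x ∈ Set.Ioo 0 b) :=
    hasDerivAt_sqrt_levelTenHauptmodul hx.1 (hx.2.trans h1)
  have hcont : ContinuousOn (fun x => √(1 + 4 * levelTenHauptmodul x ^ 2) / 4)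
      (Set.Icc 0 b) := fun x hx => by
    have ht : ContinuousAt levelTenHauptmodul x :=
      (differentiableAt_levelTenHauptmodul
        (abs_lt.2 ⟨by linarith [hx.1], hx.2.trans_lt h1⟩)).continuousAt
    exact ContinuousAt.continuousWithinAt (by fun_prop)
  have hnonneg (x : ℝ) (hx : x ∈ Set.Ioo 0 b) :
      0 ≤ x * eulerFunction x ^ 3 * eulerFunction (x ^ 10) ^ 8 / eulerFunction (x ^ 5) ^ 7 := by
    have hx0 := hx.1
    have hE1 := eulerFunction_pos hx0.le (hx.2.trans h1)
    have hE5 := eulerFunction_pow_pos hx0.le (hx.2.trans h1) 5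
    positivity
  have hint := intervalIntegral.integrableOn_deriv_of_nonneg hcont hderiv hnonneg
  rw [intervalIntegral.integral_eq_sub_of_hasDerivAt_of_le h0 hcont hderiv
    ((intervalIntegrable_iff_integrableOn_Ioc_of_le h0).2 hint), levelTenHauptmodul_zero, sub_div]
  norm_num

theorem stmt_7 :
    (∫ q in (0:ℝ)..Real.exp (-2 * Real.pi / Real.sqrt 10),
        q * eulerE q ^ 3 * eulerE (q ^ 10) ^ 8 / eulerE (q ^ 5) ^ 7)
      = (Real.sqrt (10 - 4 * Real.sqrt 5) - 1) / 4 := by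
  have hlt : exp (-2 * π / √10) < 1 := exp_neg_two_pi_mul_lt_one (by positivity)
  have hvalue : 1 + 4 * ((√5 - 2) / 2) ^ 2 = 10 - 4 * √5 := by
    linear_combination sq_sqrt (show (0 : ℝ) ≤ 5 by norm_num)
  simp only [eulerE_eq_eulerFunction]
  rw [integral_eulerFunction_quotient (exp_pos _).le hlt, levelTenHauptmodul_fricke_fixedPoint,
    hvalue]
end
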